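/- Fix s ∈ ℂ with Re s > 0 such that s ≠ 1 and s is not an even positive integer. Let α, β > 0 be real with αβ = 4π³. Then ∑_{n=1}^∞ ψ_s(n) n^{−1/2} e^{−√(nβ)} sin(π/4 − √(nβ)) = (√β/√2)·ζ(−s) + Γ(s)·cos(π/4 + πs/4)·ζ((1+s)/2)·(2β)^{−s/2} + (1/√2)·ζ(1/2)·ζ(1−s) + 2^{−s−1/2} π^{−s−2} √β ∑_{n=1}^∞ (ψ_{1−s}(n)/n)·{ −π³√n/(√β·Γ(1−s)·sin(πs/2)) + 2^{2s} π^{3s/2+2} (n/β)^{(s+1)/2} Γ(s/2)·₁F₁(s/2; 1/2; −nα) }. -/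

import Mathlib

/-!
Put `q = √β`. Writing `n = j² k` turns the left-hand side into `∑ j ^ (s - 1) * S (q j)`, where
`S a = ∑ m ^ (-1/2) * exp (-a √m) * sin (π/4 - a √m)` is Wigert's series. The `a`-derivatives of
its terms are multiples of `exp (-a √m) * cos (a √m)`, whose cosine transform in `m` is `a` times
a Gaussian in `a`, so Poisson summation and integration in `a` give
`√2 S a = K + a + ∑ k ^ (-1/2) * (exp (-a² / (4πk)) - 1)`. Comparing residues of Mellin transforms
at `0` identifies the constant `K` as `ζ(1/2)`. In particular `S` extends to an entire function.

For `1 < re s`, Poisson summation applies to `|x| ^ (s - 1) * S (q |x|)`. The zero frequency is the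
Mellin transform of `S`, which is a product of `ζ((1 + s)/2)` and Gamma factors. At the other
frequencies the affine part `ζ(1/2) + a` contributes `ζ(1 - s)` and `ζ(-s)` by the functional
equation, while rotating the contour of the remaining part through `±π/4` makes the sum over the
frequencies converge absolutely, even for `0 < re s`, so that the identity continues analytically.
There each `k` gives the Mellin transform of a Gaussian times a cosine, which is a value of `₁F₁`,
minus that of the cosine alone, which is the term with `Γ(1 - s) * sin (πs/2)`. Collecting the pairs
`(j, k)` with the same `n = j² k` produces `ψ_{1-s}(n)`.
-/

open Complex Finset
open scoped Real BigOperators Classical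

/-- `ψ_s(n) = ∑_{j² ∣ n, j ≥ 1} j^s` with complex exponent. -/
noncomputable def cpsi (s : ℂ) (n : ℕ) : ℂ :=
  ∑ j ∈ (Finset.Icc 1 n).filter (fun j => j ^ 2 ∣ n), (j : ℂ) ^ s

/-- Rising factorial `(a)_k`. -/
noncomputable def poch (a : ℂ) (k : ℕ) : ℂ := ∏ i ∈ Finset.range k, (a + i)

/-- Kummer's confluent hypergeometric function `₁F₁(a;b;z)`. -/
noncomputable def F11 (a b z : ℂ) : ℂ :=
  ∑' k : ℕ, poch a k / (poch b k * (k.factorial : ℂ)) * z ^ k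

namespace RamanujanWigert

open MeasureTheory Set Filter Topology

/-! ### Mellin transforms and rotation of contours -/

section MellinRotation

variable {E : Type*} [NormedAddCommGroup E]

lemma nonneg_of_norm_le_mul_exp {f : ℝ → E} {C c : ℝ}
    (hb : ∀ v > 0, ‖f v‖ ≤ C * Real.exp (-c * v)) : 0 ≤ C :=
  nonneg_of_mul_nonneg_left ((norm_nonneg _).trans (hb 1 one_pos)) (Real.exp_pos _)

lemma isBigO_exp_atTop_of_norm_le {f : ℝ → E} {C c : ℝ}
    (hb : ∀ v > 0, ‖f v‖ ≤ C * Real.exp (-c * v)) :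
    f =O[atTop] fun v => Real.exp (-c * v) := by
  refine Asymptotics.IsBigO.of_bound C ?_
  filter_upwards [eventually_gt_atTop 0] with v hv
  rw [Real.norm_of_nonneg (Real.exp_pos _).le]
  exact hb v hv

lemma isBigO_rpow_zero_of_norm_le_exp {f : ℝ → E} {C c : ℝ} (hc : 0 < c)
    (hb : ∀ v > 0, ‖f v‖ ≤ C * Real.exp (-c * v)) :
    f =O[𝓝[>] 0] fun v : ℝ => v ^ (-0 : ℝ) := by
  refine Asymptotics.IsBigO.of_bound C ?_
  filter_upwards [self_mem_nhdsWithin] with v (hv : 0 < v)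
  simp only [neg_zero, Real.rpow_zero, norm_one]
  refine (hb v hv).trans ?_
  have hexp : Real.exp (-c * v) ≤ 1 := Real.exp_le_one_iff.mpr (by nlinarith)
  exact mul_le_mul_of_nonneg_left hexp (nonneg_of_norm_le_mul_exp hb)

variable [NormedSpace ℂ E]

lemma mellinConvergent_of_norm_le_exp {f : ℝ → E} (hf : ContinuousOn f (Ioi 0)) {C c : ℝ}
    (hc : 0 < c) (hb : ∀ v > 0, ‖f v‖ ≤ C * Real.exp (-c * v)) {s : ℂ} (hs : 0 < s.re) :
    MellinConvergent f s :=
  mellinConvergent_of_isBigO_rpow_exp hc (hf.locallyIntegrableOn measurableSet_Ioi)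
    (isBigO_exp_atTop_of_norm_le hb) (isBigO_rpow_zero_of_norm_le_exp hc hb) hs

lemma differentiableAt_mellin_of_norm_le_exp {f : ℝ → E} (hf : ContinuousOn f (Ioi 0)) {C c : ℝ}
    (hc : 0 < c) (hb : ∀ v > 0, ‖f v‖ ≤ C * Real.exp (-c * v)) {s : ℂ} (hs : 0 < s.re) :
    DifferentiableAt ℂ (mellin f) s :=
  mellin_differentiableAt_of_isBigO_rpow_exp hc (hf.locallyIntegrableOn measurableSet_Ioi)
    (isBigO_exp_atTop_of_norm_le hb) (isBigO_rpow_zero_of_norm_le_exp hc hb) hs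

lemma exp_smul_cpow_sub_one_smul (u : ℝ) (s : ℂ) (x : E) :
    Real.exp u • ((Real.exp u : ℂ) ^ (s - 1) • x) = cexp (s * u) • x := by
  rw [← Complex.coe_smul, smul_smul, cpow_sub _ _ (ofReal_ne_zero.mpr (Real.exp_pos u).ne'),
    cpow_one, mul_div_cancel₀ _ (ofReal_ne_zero.mpr (Real.exp_pos u).ne'),
    cpow_def_of_ne_zero (ofReal_ne_zero.mpr (Real.exp_pos u).ne'), ← ofReal_log (Real.exp_pos u).le,
    Real.log_exp, mul_comm]

lemma mellin_eq_integral_comp_exp (f : ℝ → E) (s : ℂ) :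
    mellin f s = ∫ u : ℝ, cexp (s * u) • f (Real.exp u) := by
  have hsubst := integral_image_eq_integral_abs_deriv_smul MeasurableSet.univ
    (fun u _ => (Real.hasDerivAt_exp u).hasDerivWithinAt) Real.exp_injective.injOn
    (fun v : ℝ => (v : ℂ) ^ (s - 1) • f v)
  rw [image_univ, Real.range_exp] at hsubst
  simp [mellin, hsubst, exp_smul_cpow_sub_one_smul, -ofReal_exp]

lemma mellinConvergent_iff_integrable_comp_exp {f : ℝ → E} {s : ℂ} :
    MellinConvergent f s ↔ Integrable fun u : ℝ => cexp (s * u) • f (Real.exp u) := by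
  have hsubst := integrableOn_image_iff_integrableOn_abs_deriv_smul MeasurableSet.univ
    (fun u _ => (Real.hasDerivAt_exp u).hasDerivWithinAt) Real.exp_injective.injOn
    (fun v : ℝ => (v : ℂ) ^ (s - 1) • f v)
  rw [image_univ, Real.range_exp] at hsubst
  simp [MellinConvergent, hsubst, exp_smul_cpow_sub_one_smul, -ofReal_exp]

lemma tendsto_intervalIntegral_vertical_zero {G : ℂ → E} {y₁ y₂ : ℝ} {B : ℝ → ℝ}
    (hB : ∀ u : ℝ, ∀ y ∈ uIcc y₁ y₂, ‖G (u + y * I)‖ ≤ B u) {r : ℝ → ℝ}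
    (hr : Tendsto (B ∘ r) atTop (𝓝 0)) :
    Tendsto (fun R : ℝ => ∫ y in y₁..y₂, G ((r R : ℝ) + y * I)) atTop (𝓝 0) := by
  have hbound : ∀ R, ‖∫ y in y₁..y₂, G ((r R : ℝ) + y * I)‖ ≤ B (r R) * |y₂ - y₁| := fun R =>
    intervalIntegral.norm_integral_le_of_norm_le_const fun y hy =>
      hB (r R) y (uIoc_subset_uIcc hy)
  exact squeeze_zero_norm hbound (by simpa using hr.mul_const |y₂ - y₁|)

lemma integral_horizontal_line_eq {G : ℂ → E} (hG : Differentiable ℂ G)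
    {y₁ y₂ : ℝ} {B : ℝ → ℝ} (hB : ∀ u : ℝ, ∀ y ∈ uIcc y₁ y₂, ‖G (u + y * I)‖ ≤ B u)
    (hTop : Tendsto B atTop (𝓝 0)) (hBot : Tendsto B atBot (𝓝 0))
    (h₁ : Integrable fun u : ℝ => G (u + y₁ * I)) (h₂ : Integrable fun u : ℝ => G (u + y₂ * I)) :
    ∫ u : ℝ, G (u + y₁ * I) = ∫ u : ℝ, G (u + y₂ * I) := by
  have hlim := (((intervalIntegral_tendsto_integral h₁ tendsto_neg_atTop_atBot tendsto_id).sub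
      (intervalIntegral_tendsto_integral h₂ tendsto_neg_atTop_atBot tendsto_id)).add
      ((tendsto_intervalIntegral_vertical_zero hB (r := id) hTop).const_smul I)).sub
      ((tendsto_intervalIntegral_vertical_zero hB (r := Neg.neg)
        (hBot.comp tendsto_neg_atTop_atBot)).const_smul I)
  have hrect : ∀ R : ℝ, (∫ u in (-R)..R, G (u + y₁ * I)) - (∫ u in (-R)..R, G (u + y₂ * I))
      + I • (∫ y in y₁..y₂, G ((R : ℝ) + y * I))
      - I • (∫ y in y₁..y₂, G ((-R : ℝ) + y * I)) = 0 := fun R => by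
    simpa using Complex.integral_boundary_rect_eq_zero_of_differentiableOn G ⟨-R, y₁⟩ ⟨R, y₂⟩
      hG.differentiableOn
  have hzero := tendsto_nhds_unique hlim (tendsto_const_nhds.congr fun R => (hrect R).symm)
  simpa [sub_eq_zero] using hzero

lemma tendsto_exp_mul_mul_exp_neg_mul_exp_atTop (σ : ℝ) {c : ℝ} (hc : 0 < c) :
    Tendsto (fun u : ℝ => Real.exp (σ * u) * Real.exp (-c * Real.exp u)) atTop (𝓝 0) := by
  refine ((tendsto_rpow_mul_exp_neg_mul_atTop_nhds_zero σ c hc).comp Real.tendsto_exp_atTop).congr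
    fun u => ?_
  simp only [Function.comp]
  rw [← Real.exp_mul, mul_comm u]

lemma tendsto_exp_mul_mul_exp_neg_mul_exp_atBot {σ c : ℝ} (hσ : 0 < σ) (hc : 0 < c) :
    Tendsto (fun u : ℝ => Real.exp (σ * u) * Real.exp (-c * Real.exp u)) atBot (𝓝 0) := by
  have hlim : Tendsto (fun u : ℝ => Real.exp (σ * u)) atBot (𝓝 0) :=
    Real.tendsto_exp_atBot.comp (tendsto_id.const_mul_atBot hσ)
  refine squeeze_zero (fun u => by positivity) (fun u => ?_) hlim
  refine mul_le_of_le_one_right (Real.exp_pos _).le (Real.exp_le_one_iff.mpr ?_)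
  nlinarith [Real.exp_pos u]

lemma abs_le_abs_of_mem_uIcc_zero {x y : ℝ} (hy : y ∈ uIcc 0 x) : |y| ≤ |x| := by
  simpa using abs_sub_left_of_mem_uIcc hy

lemma norm_cexp_mul_I_mul_le (s : ℂ) {x y : ℝ} (hy : y ∈ uIcc 0 x) :
    ‖cexp (y * I * s)‖ ≤ Real.exp (|x| * |s.im|) := by
  rw [Complex.norm_exp, Real.exp_le_exp]
  calc (y * I * s).re = -(y * s.im) := by simp
    _ ≤ |y| * |s.im| := (neg_le_abs _).trans_eq (abs_mul _ _)
    _ ≤ |x| * |s.im| :=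
      mul_le_mul_of_nonneg_right (abs_le_abs_of_mem_uIcc_zero hy) (abs_nonneg _)

lemma mellin_rotate {F : ℂ → E} (hF : Differentiable ℂ F) {φ C c : ℝ} (hc : 0 < c)
    (hb : ∀ v : ℝ, 0 < v → ∀ y ∈ uIcc 0 φ, ‖F (v * cexp (y * I))‖ ≤ C * Real.exp (-c * v))
    {s : ℂ} (hs : 0 < s.re) :
    mellin (fun v : ℝ => F v) s =
      cexp (φ * I * s) • mellin (fun v : ℝ => F (v * cexp (φ * I))) s := by
  have hline : ∀ u y : ℝ, cexp (s * (u + y * I)) • F (cexp (u + y * I)) =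
      cexp (y * I * s) • (cexp (s * u) • F (Real.exp u * cexp (y * I))) := fun u y => by
    rw [smul_smul, ← Complex.exp_add, ofReal_exp, ← Complex.exp_add]
    ring_nf
  have hintegrable : ∀ y ∈ uIcc 0 φ,
      Integrable fun u : ℝ => cexp (s * (u + y * I)) • F (cexp (u + y * I)) := fun y hy => by
    simp_rw [hline]
    have hcont : Continuous fun v : ℝ => F (v * cexp (y * I)) := hF.continuous.comp (by fun_prop)
    exact (mellinConvergent_iff_integrable_comp_exp.mp <| mellinConvergent_of_norm_le_exp
      hcont.continuousOn hc (fun v hv => hb v hv y hy) hs).smul _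
  have hbound : ∀ u : ℝ, ∀ y ∈ uIcc 0 φ, ‖cexp (s * (u + y * I)) • F (cexp (u + y * I))‖ ≤
      Real.exp (|φ| * |s.im|) * C * (Real.exp (s.re * u) * Real.exp (-c * Real.exp u)) := by
    intro u y hy
    rw [hline, norm_smul, norm_smul, Complex.norm_exp (s * u),
      show (s * (u : ℂ)).re = s.re * u by simp]
    calc ‖cexp (y * I * s)‖ * (Real.exp (s.re * u) * ‖F (Real.exp u * cexp (y * I))‖)
        ≤ Real.exp (|φ| * |s.im|) *
            (Real.exp (s.re * u) * (C * Real.exp (-c * Real.exp u))) := by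
          gcongr
          · exact norm_cexp_mul_I_mul_le s hy
          · exact hb _ (Real.exp_pos u) y hy
      _ = _ := by ring
  have hG : Differentiable ℂ fun z => cexp (s * z) • F (cexp z) :=
    (by fun_prop : Differentiable ℂ fun z => cexp (s * z)).smul (hF.comp Complex.differentiable_exp)
  have hshift := integral_horizontal_line_eq hG hbound
    (mul_zero (_ : ℝ) ▸ (tendsto_exp_mul_mul_exp_neg_mul_exp_atTop s.re hc).const_mul _)
    (mul_zero (_ : ℝ) ▸ (tendsto_exp_mul_mul_exp_neg_mul_exp_atBot hs hc).const_mul _)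
    (hintegrable 0 left_mem_uIcc) (hintegrable φ right_mem_uIcc)
  simp_rw [hline, integral_smul] at hshift
  simpa [mellin_eq_integral_comp_exp] using hshift

lemma mellin_cexp_neg_mul {x : ℝ} (hx : 0 < x) {s : ℂ} (hs : 0 < s.re) :
    mellin (fun v : ℝ => cexp (-x * v)) s = (x : ℂ) ^ (-s) * Complex.Gamma s := by
  have hΓ := Complex.integral_cpow_mul_exp_neg_mul_Ioi hs hx
  rw [one_div, inv_cpow _ _ (by simp [arg_ofReal_of_nonneg hx.le, Real.pi_ne_zero.symm]),
    ← cpow_neg] at hΓ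
  simpa [mellin] using hΓ

lemma mellin_exp_neg_ray {x φ : ℝ} (hx : 0 < x) (hφ : |φ| < π / 2) {s : ℂ} (hs : 0 < s.re) :
    mellin (fun v : ℝ => cexp (-(x * cexp (φ * I)) * v)) s =
      cexp (-(φ * I * s)) * (x : ℂ) ^ (-s) * Complex.Gamma s := by
  have hcos : 0 < Real.cos φ := Real.cos_pos_of_mem_Ioo (abs_lt.mp hφ)
  have hrot := mellin_rotate (F := fun u => cexp (-x * u)) (by fun_prop) (φ := φ) (C := 1)
    (c := x * Real.cos φ) (by positivity) (fun v hv y hy => ?_) hs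
  · rw [mellin_cexp_neg_mul hx hs, smul_eq_mul] at hrot
    rw [mul_assoc, hrot, ← mul_assoc, ← Complex.exp_add, neg_add_cancel, Complex.exp_zero, one_mul]
    congr 1 with v
    ring_nf
  · have hcosy : Real.cos φ ≤ Real.cos y := by
      rw [← Real.cos_abs φ, ← Real.cos_abs y]
      exact Real.cos_le_cos_of_nonneg_of_le_pi (abs_nonneg y) (by linarith [Real.pi_pos])
        (abs_le_abs_of_mem_uIcc_zero hy)
    have hre : (-(x : ℂ) * (v * cexp (y * I))).re = -(x * Real.cos y) * v := by
      rw [Complex.exp_mul_I]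
      simp [← ofReal_cos, ← ofReal_sin]
      ring
    rw [Complex.norm_exp, one_mul, hre]
    gcongr

end MellinRotation

section MellinDomination

variable {E E' ι : Type*} [NormedAddCommGroup E] [NormedSpace ℂ E] [NormedAddCommGroup E']
  [NormedSpace ℂ E'] {b : ℝ → E'} {s : ℂ}

lemma aestronglyMeasurable_cpow_smul {f : ℝ → E} (hf : ContinuousOn f (Ioi 0)) (s : ℂ) :
    AEStronglyMeasurable (fun v : ℝ => (v : ℂ) ^ (s - 1) • f v) (volume.restrict (Ioi 0)) := by
  have hpow : ContinuousOn (fun v : ℝ => (v : ℂ) ^ (s - 1)) (Ioi 0) := fun v hv =>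
    (continuousAt_ofReal_cpow_const _ _ (Or.inr (ne_of_gt hv))).continuousWithinAt
  exact (hpow.smul hf).aestronglyMeasurable measurableSet_Ioi

lemma mellinConvergent_of_norm_le {f : ℝ → E} (hb : MellinConvergent b s)
    (hf : ContinuousOn f (Ioi 0)) (hle : ∀ v > 0, ‖f v‖ ≤ ‖b v‖) : MellinConvergent f s := by
  refine hb.norm.mono' (aestronglyMeasurable_cpow_smul hf s)
    ((ae_restrict_iff' measurableSet_Ioi).mpr (ae_of_all _ fun v hv => ?_))
  rw [norm_smul, norm_smul]
  gcongr
  exact hle v hv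

lemma tendsto_mellin_of_dominated {l : Filter ι} [l.IsCountablyGenerated] {f : ι → ℝ → E}
    {g : ℝ → E} (hb : MellinConvergent b s) (hf : ∀ᶠ i in l, ContinuousOn (f i) (Ioi 0))
    (hle : ∀ᶠ i in l, ∀ v > 0, ‖f i v‖ ≤ ‖b v‖)
    (hlim : ∀ v > 0, Tendsto (fun i => f i v) l (𝓝 (g v))) :
    Tendsto (fun i => mellin (f i) s) l (𝓝 (mellin g s)) := by
  refine tendsto_integral_filter_of_dominated_convergence _
    (hf.mono fun i hi => aestronglyMeasurable_cpow_smul hi s)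
    (hle.mono fun i hi => (ae_restrict_iff' measurableSet_Ioi).mpr (ae_of_all _ fun v hv => ?_))
    hb.norm
    ((ae_restrict_iff' measurableSet_Ioi).mpr (ae_of_all _ fun v hv => (hlim v hv).const_smul _))
  rw [norm_smul, norm_smul]
  gcongr
  exact hi v hv

lemma hasSum_mellin_of_dominated [Countable ι] {f : ι → ℝ → E} {u : ι → ℝ}
    (hb : MellinConvergent b s) (hu : Summable u) (hf : ∀ i, ContinuousOn (f i) (Ioi 0))
    (hle : ∀ i, ∀ v > 0, ‖f i v‖ ≤ u i * ‖b v‖) :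
    HasSum (fun i => mellin (f i) s) (mellin (fun v => ∑' i, f i v) s) := by
  have hconv : ∀ i, MellinConvergent (f i) s := fun i =>
    mellinConvergent_of_norm_le (hb.const_smul (u i : ℂ)) (hf i) fun v hv => by
      rw [norm_smul, norm_real]
      exact (hle i v hv).trans (by gcongr; exact Real.le_norm_self _)
  have hsum : Summable fun i => ∫ v in Ioi (0 : ℝ), ‖(v : ℂ) ^ (s - 1) • f i v‖ := by
    refine Summable.of_nonneg_of_le (fun i => by positivity) (fun i => ?_)
      (hu.mul_right (∫ v in Ioi (0 : ℝ), ‖(v : ℂ) ^ (s - 1) • b v‖))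
    rw [← integral_const_mul]
    refine setIntegral_mono_on (hconv i).norm (hb.norm.const_mul _) measurableSet_Ioi
      fun v hv => ?_
    rw [norm_smul, norm_smul, mul_left_comm]
    gcongr
    exact hle i v hv
  simpa only [mellin, tsum_const_smul''] using hasSum_integral_of_summable_integral_norm hconv hsum

end MellinDomination

section OscillatoryRotation

lemma one_add_pow_le_mul_exp {c v : ℝ} (hc : 0 < c) (hv : 0 ≤ v) (n : ℕ) :
    1 + v ^ n ≤ (1 + n.factorial / c ^ n) * Real.exp (c * v) := by
  have hpow := Real.pow_div_factorial_le_exp (c * v) (by positivity) n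
  have hone : 1 ≤ Real.exp (c * v) := Real.one_le_exp (by positivity)
  have hvn : v ^ n = n.factorial / c ^ n * ((c * v) ^ n / n.factorial) := by
    rw [mul_pow]
    field_simp
  rw [hvn, add_mul, one_mul]
  gcongr

lemma norm_cexp_sub_mul_ray {ε : ℝ} (hε : ε = 1 ∨ ε = -1) (d x v y : ℝ) :
    ‖cexp ((I * ε * x - d) * (v * cexp ((ε * y : ℝ) * I)))‖ =
      Real.exp (-(x * v * Real.sin y) - d * v * Real.cos y) := by
  rw [Complex.norm_exp, Complex.exp_mul_I, ← ofReal_cos, ← ofReal_sin]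
  rcases hε with rfl | rfl <;> congr 1 <;> simp [-ofReal_cos, -ofReal_sin] <;> ring

variable {G : ℂ → ℂ} (hG : Differentiable ℂ G) {ε : ℝ} (hε : ε = 1 ∨ ε = -1) {θ : ℝ} (hθ : 0 < θ)
  {C x : ℝ} {n : ℕ}
  (hb : ∀ v : ℝ, 0 < v → ∀ y ∈ Icc 0 θ, ‖G (v * cexp ((ε * y : ℝ) * I))‖ ≤ C * (1 + v ^ n))

include hb in
lemma norm_ray_mul_cexp_sub_le {d c v y : ℝ} (hc : 0 < c) (hv : 0 < v) (hy : y ∈ Icc 0 θ)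
    (hε : ε = 1 ∨ ε = -1) (hle : 2 * c ≤ x * Real.sin y + d * Real.cos y) :
    ‖G (v * cexp ((ε * y : ℝ) * I)) * cexp ((I * ε * x - d) * (v * cexp ((ε * y : ℝ) * I)))‖ ≤
      C * (1 + n.factorial / c ^ n) * Real.exp (-c * v) := by
  have hC : 0 ≤ C :=
    nonneg_of_mul_nonneg_left ((norm_nonneg _).trans (hb v hv y hy)) (by positivity)
  have hexp : -(x * v * Real.sin y) - d * v * Real.cos y ≤ -(2 * c) * v := by nlinarith
  rw [norm_mul, norm_cexp_sub_mul_ray hε]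
  calc ‖G (v * cexp ((ε * y : ℝ) * I))‖ * Real.exp (-(x * v * Real.sin y) - d * v * Real.cos y)
      ≤ C * ((1 + n.factorial / c ^ n) * Real.exp (c * v)) * Real.exp (-(2 * c) * v) := by
        gcongr
        exact (hb v hv y hy).trans (by gcongr; exact one_add_pow_le_mul_exp hc hv.le n)
    _ = C * (1 + n.factorial / c ^ n) * (Real.exp (c * v) * Real.exp (-(2 * c) * v)) := by ring
    _ = C * (1 + n.factorial / c ^ n) * Real.exp (-c * v) := by
        rw [← Real.exp_add]
        ring_nf

include hG hε hθ hb in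
lemma mellin_mul_cexp_sub_rotate (hθ' : θ < π / 2) (hx : 0 < x) {d : ℝ} (hd : 0 < d) {s : ℂ}
    (hs : 0 < s.re) :
    mellin (fun v : ℝ => G v * cexp ((I * ε * x - d) * v)) s =
      cexp ((ε * θ : ℝ) * I * s) * mellin (fun v : ℝ => G (v * cexp ((ε * θ : ℝ) * I)) *
        cexp ((I * ε * x - d) * (v * cexp ((ε * θ : ℝ) * I)))) s := by
  have hcosθ : 0 < Real.cos θ := Real.cos_pos_of_mem_Ioo ⟨by linarith, hθ'⟩
  refine mellin_rotate (F := fun u => G u * cexp ((I * ε * x - d) * u)) (hG.mul (by fun_prop))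
    (C := C * (1 + n.factorial / (d * Real.cos θ / 2) ^ n)) (c := d * Real.cos θ / 2)
    (by positivity) (fun v hv y hy => ?_) hs
  obtain ⟨y', hy', rfl⟩ : ∃ y' ∈ Icc 0 θ, y = ε * y' := by
    rcases hε with rfl | rfl
    · exact ⟨y, by rwa [one_mul, uIcc_of_le hθ.le] at hy, by simp⟩
    · rw [Set.uIcc_of_ge (by linarith)] at hy
      exact ⟨-y, ⟨by linarith [hy.2], by linarith [hy.1]⟩, by simp⟩
  refine norm_ray_mul_cexp_sub_le hb (by positivity) hv hy' hε ?_
  have hcos : Real.cos θ ≤ Real.cos y' :=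
    Real.cos_le_cos_of_nonneg_of_le_pi hy'.1 (by linarith) hy'.2
  have hsin : 0 ≤ Real.sin y' := Real.sin_nonneg_of_nonneg_of_le_pi hy'.1 (by linarith [hy'.2])
  nlinarith [mul_nonneg hx.le hsin, mul_le_mul_of_nonneg_left hcos hd.le]

include hG hε in
lemma tendsto_mellin_mul_cexp_sub (x : ℝ) {s : ℂ} (hGs : MellinConvergent (fun v : ℝ => G v) s) :
    Tendsto (fun d : ℝ => mellin (fun v : ℝ => G v * cexp ((I * ε * x - d) * v)) s) (𝓝[>] 0)
      (𝓝 (mellin (fun v : ℝ => G v * cexp (I * ε * x * v)) s)) := by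
  have hcont := hG.continuous
  refine tendsto_mellin_of_dominated hGs
    (Eventually.of_forall fun d => by fun_prop) ?_ fun v _ => ?_
  · filter_upwards [self_mem_nhdsWithin] with d (hd : 0 < d) v hv
    have hnorm := norm_cexp_sub_mul_ray hε d x v 0
    simp only [mul_zero, ofReal_zero, zero_mul, Complex.exp_zero, mul_one, Real.sin_zero,
      Real.cos_zero, neg_zero, zero_sub] at hnorm
    rw [norm_mul, hnorm]
    exact mul_le_of_le_one_right (norm_nonneg _) (Real.exp_le_one_iff.mpr (by nlinarith))
  · have hlim : Continuous fun d : ℝ => G v * cexp ((I * ε * x - d) * v) := by fun_prop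
    simpa using (hlim.tendsto 0).mono_left nhdsWithin_le_nhds

include hG hε hθ hb in
lemma tendsto_mellin_ray_mul_cexp_sub (hθ' : θ < π / 2) (hx : 0 < x) {s : ℂ} (hs : 0 < s.re) :
    Tendsto (fun d : ℝ => mellin (fun v : ℝ => G (v * cexp ((ε * θ : ℝ) * I)) *
        cexp ((I * ε * x - d) * (v * cexp ((ε * θ : ℝ) * I)))) s) (𝓝[>] 0)
      (𝓝 (mellin (fun v : ℝ => G (v * cexp ((ε * θ : ℝ) * I)) *
        cexp (I * ε * x * (v * cexp ((ε * θ : ℝ) * I)))) s)) := by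
  have hcont := hG.continuous
  have hsin : 0 < Real.sin θ := Real.sin_pos_of_pos_of_lt_pi hθ (by linarith [Real.pi_pos])
  have hcos : 0 < Real.cos θ := Real.cos_pos_of_mem_Ioo ⟨by linarith, hθ'⟩
  set c := x * Real.sin θ / 2 with hc
  have hc0 : 0 < c := by positivity
  refine tendsto_mellin_of_dominated
    (b := fun v : ℝ => ((C * (1 + n.factorial / c ^ n) * Real.exp (-c * v) : ℝ) : ℂ))
    (mellinConvergent_of_norm_le_exp (C := |C * (1 + n.factorial / c ^ n)|) (by fun_prop) hc0
      (fun v _ => ?_) hs)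
    (Eventually.of_forall fun d => by fun_prop) ?_ fun v _ => ?_
  · rw [norm_real, norm_mul, Real.norm_of_nonneg (Real.exp_pos _).le, Real.norm_eq_abs]
  · filter_upwards [self_mem_nhdsWithin] with d (hd : 0 < d) v hv
    rw [norm_real]
    refine (norm_ray_mul_cexp_sub_le hb hc0 hv ⟨hθ.le, le_rfl⟩ hε ?_).trans (Real.le_norm_self _)
    nlinarith [mul_pos hd hcos]
  · have hlim : Continuous fun d : ℝ => G (v * cexp ((ε * θ : ℝ) * I)) *
        cexp ((I * ε * x - d) * (v * cexp ((ε * θ : ℝ) * I))) := by fun_prop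
    simpa using (hlim.tendsto 0).mono_left nhdsWithin_le_nhds

include hG hε hθ hb in
/-- The polynomially bounded `G` need not decay inside the sector, so the rotation is carried out
with an extra factor `exp (-d v)` and `d → 0⁺` at the end. -/
lemma mellin_mul_cexp_rotate (hθ' : θ < π / 2) (hx : 0 < x) {s : ℂ} (hs : 0 < s.re)
    (hGs : MellinConvergent (fun v : ℝ => G v) s) :
    mellin (fun v : ℝ => G v * cexp (I * ε * x * v)) s =
      cexp ((ε * θ : ℝ) * I * s) * mellin (fun v : ℝ => G (v * cexp ((ε * θ : ℝ) * I)) *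
        cexp (I * ε * x * (v * cexp ((ε * θ : ℝ) * I)))) s := by
  refine tendsto_nhds_unique (tendsto_mellin_mul_cexp_sub hG hε x hGs)
    (((tendsto_mellin_ray_mul_cexp_sub hG hε hθ hb hθ' hx hs).const_mul _).congr' ?_)
  filter_upwards [self_mem_nhdsWithin] with d hd
  exact (mellin_mul_cexp_sub_rotate hG hε hθ hb hθ' hx hd hs).symm

end OscillatoryRotation

/-! ### The Gaussian defect -/

section GaussDefect

lemma norm_cexp_sub_one_le_of_re_nonpos {w : ℂ} (hw : w.re ≤ 0) : ‖cexp w - 1‖ ≤ ‖w‖ := by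
  have hmv := Convex.norm_image_sub_le_of_norm_hasDerivWithin_le (f := cexp) (f' := cexp) (C := 1)
    (s := {z : ℂ | z.re ≤ 0}) (x := 0) (y := w)
    (fun x _ => (Complex.hasDerivAt_exp x).hasDerivWithinAt)
    (fun x hx => by rw [Complex.norm_exp]; exact Real.exp_le_one_iff.mpr hx)
    (convex_halfSpace_re_le 0) (by simp) hw
  simpa using hmv

/-- The weight `k ^ (-3/2)`, shifted so that `k = 0` stands for the first positive integer; it
dominates the terms of all the series over `k` below. -/
noncomputable def threeHalvesWeight (k : ℕ) : ℝ := (√((k : ℝ) + 1))⁻¹ * ((k : ℝ) + 1)⁻¹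

lemma threeHalvesWeight_nonneg (k : ℕ) : 0 ≤ threeHalvesWeight k := by
  unfold threeHalvesWeight
  positivity

lemma threeHalvesWeight_eq_rpow (k : ℕ) :
    threeHalvesWeight k = 1 / |(k : ℝ) + 1| ^ (3 / 2 : ℝ) := by
  have hk : (0 : ℝ) < (k : ℝ) + 1 := by positivity
  rw [threeHalvesWeight, abs_of_pos hk, Real.sqrt_eq_rpow, ← Real.rpow_neg_one ((k : ℝ) + 1),
    ← Real.rpow_neg hk.le, ← Real.rpow_add hk, one_div (_ ^ _), ← Real.rpow_neg hk.le]
  norm_num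

lemma summable_threeHalvesWeight : Summable threeHalvesWeight :=
  ((Real.summable_one_div_nat_add_rpow 1 (3 / 2)).mpr (by norm_num)).congr fun k =>
    (threeHalvesWeight_eq_rpow k).symm

/-- The `k`-th term of `gaussDefect`, with `k + 1` in the role of the summation index. -/
noncomputable def gaussDefectTerm (k : ℕ) (a : ℂ) : ℂ :=
  ((√((k : ℝ) + 1))⁻¹ : ℝ) * (cexp (-(a ^ 2 / (4 * π * (k + 1) : ℝ))) - 1)

/-- The entire function `a ↦ ∑ k^(-1/2) (exp (-a² / (4πk)) - 1)`, which measures how far the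
oscillating sum `wigertSum` is from an affine function of `a`. -/
noncomputable def gaussDefect (a : ℂ) : ℂ := ∑' k, gaussDefectTerm k a

lemma norm_gaussDefectTerm (k : ℕ) (a : ℂ) : ‖gaussDefectTerm k a‖ =
    (√((k : ℝ) + 1))⁻¹ * ‖cexp (-(a ^ 2 / (4 * π * (k + 1) : ℝ))) - 1‖ := by
  rw [gaussDefectTerm, norm_mul, norm_real, Real.norm_of_nonneg (by positivity)]

lemma norm_sq_div_four_pi_mul (k : ℕ) (a : ℂ) :
    ‖-(a ^ 2 / (4 * π * (k + 1) : ℝ))‖ = (4 * π)⁻¹ * ‖a‖ ^ 2 * ((k : ℝ) + 1)⁻¹ := by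
  rw [norm_neg, norm_div, norm_pow, norm_real, Real.norm_of_nonneg (by positivity)]
  field_simp

lemma norm_gaussDefectTerm_le (k : ℕ) {a : ℂ} (ha : 0 ≤ (a ^ 2).re) :
    ‖gaussDefectTerm k a‖ ≤ threeHalvesWeight k * ((4 * π)⁻¹ * ‖a‖ ^ 2) := by
  have hre : (-(a ^ 2 / (4 * π * (k + 1) : ℝ))).re ≤ 0 := by
    rw [neg_re, div_ofReal_re, neg_nonpos]
    positivity
  calc ‖gaussDefectTerm k a‖
      ≤ (√((k : ℝ) + 1))⁻¹ * ((4 * π)⁻¹ * ‖a‖ ^ 2 * ((k : ℝ) + 1)⁻¹) := by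
        rw [norm_gaussDefectTerm, ← norm_sq_div_four_pi_mul]
        gcongr
        exact norm_cexp_sub_one_le_of_re_nonpos hre
    _ = threeHalvesWeight k * ((4 * π)⁻¹ * ‖a‖ ^ 2) := by
        rw [threeHalvesWeight]
        ring

lemma norm_gaussDefectTerm_le_mul_exp (k : ℕ) (a : ℂ) : ‖gaussDefectTerm k a‖ ≤
    threeHalvesWeight k * ((4 * π)⁻¹ * ‖a‖ ^ 2 * Real.exp ((4 * π)⁻¹ * ‖a‖ ^ 2)) := by
  have hexp := Complex.norm_exp_sub_sum_le_norm_mul_exp (-(a ^ 2 / (4 * π * (k + 1) : ℝ))) 1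
  have hk : ((k : ℝ) + 1)⁻¹ ≤ 1 := inv_le_one_of_one_le₀ (by linarith [Nat.cast_nonneg (α := ℝ) k])
  simp only [range_one, sum_singleton, pow_zero, Nat.factorial_zero, Nat.cast_one, div_one,
    pow_one, norm_sq_div_four_pi_mul] at hexp
  calc ‖gaussDefectTerm k a‖
      ≤ (√((k : ℝ) + 1))⁻¹ * ((4 * π)⁻¹ * ‖a‖ ^ 2 * ((k : ℝ) + 1)⁻¹ *
          Real.exp ((4 * π)⁻¹ * ‖a‖ ^ 2)) := by
        rw [norm_gaussDefectTerm]
        gcongr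
        refine hexp.trans (mul_le_mul_of_nonneg_left (Real.exp_le_exp.mpr ?_) (by positivity))
        exact mul_le_of_le_one_right (by positivity) hk
    _ = threeHalvesWeight k * ((4 * π)⁻¹ * ‖a‖ ^ 2 * Real.exp ((4 * π)⁻¹ * ‖a‖ ^ 2)) := by
        rw [threeHalvesWeight]
        ring

lemma norm_gaussDefect_le {a : ℂ} (ha : 0 ≤ (a ^ 2).re) :
    ‖gaussDefect a‖ ≤ (∑' k, threeHalvesWeight k) * ((4 * π)⁻¹ * ‖a‖ ^ 2) := by
  rw [← tsum_mul_right]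
  exact tsum_of_norm_bounded (summable_threeHalvesWeight.mul_right _).hasSum
    fun k => norm_gaussDefectTerm_le k ha

lemma hasDerivAt_gaussDefectTerm (k : ℕ) (a : ℂ) :
    HasDerivAt (gaussDefectTerm k) (((√((k : ℝ) + 1))⁻¹ : ℝ) *
      (cexp (-(a ^ 2 / (4 * π * (k + 1) : ℝ))) * -(2 * a / (4 * π * (k + 1) : ℝ)))) a := by
  have harg := ((hasDerivAt_pow 2 a).div_const ((4 * π * (k + 1) : ℝ) : ℂ)).fun_neg
  exact (by simpa using harg.cexp.sub_const 1 : HasDerivAt _ _ a).const_mul _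

lemma hasDerivAt_gaussDefect (a : ℂ) :
    HasDerivAt gaussDefect (∑' k, deriv (gaussDefectTerm k) a) a := by
  have hball : Metric.ball (0 : ℂ) (‖a‖ + 1) ∈ 𝓝 a := Metric.isOpen_ball.mem_nhds (by simp)
  have hu := summable_threeHalvesWeight.mul_right
    ((4 * π)⁻¹ * (‖a‖ + 1) ^ 2 * Real.exp ((4 * π)⁻¹ * (‖a‖ + 1) ^ 2))
  have hdiff : ∀ k, DifferentiableOn ℂ (gaussDefectTerm k) (Metric.ball 0 (‖a‖ + 1)) :=
    fun k z _ => (hasDerivAt_gaussDefectTerm k z).differentiableAt.differentiableWithinAt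
  have hle : ∀ k, ∀ z ∈ Metric.ball (0 : ℂ) (‖a‖ + 1), ‖gaussDefectTerm k z‖ ≤
      threeHalvesWeight k *
        ((4 * π)⁻¹ * (‖a‖ + 1) ^ 2 * Real.exp ((4 * π)⁻¹ * (‖a‖ + 1) ^ 2)) := by
    intro k z hz
    have hz' : ‖z‖ ≤ ‖a‖ + 1 := (mem_ball_zero_iff.mp hz).le
    have hk := threeHalvesWeight_nonneg k
    exact (norm_gaussDefectTerm_le_mul_exp k z).trans (by gcongr)
  rw [(hasSum_deriv_of_summable_norm hu hdiff Metric.isOpen_ball hle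
    (mem_of_mem_nhds hball)).tsum_eq]
  exact ((differentiableOn_tsum_of_summable_norm hu hdiff Metric.isOpen_ball hle).differentiableAt
    hball).hasDerivAt

lemma differentiable_gaussDefect : Differentiable ℂ gaussDefect := fun a =>
  (hasDerivAt_gaussDefect a).differentiableAt

end GaussDefect

/-! ### Poisson summation for even functions -/

section EvenPoisson

open scoped FourierTransform

lemma integral_eq_integral_Ioi_neg_add_integral_Ioi {E : Type*} [NormedAddCommGroup E]
    [NormedSpace ℝ E] {g : ℝ → E} (hneg : IntegrableOn (fun x => g (-x)) (Ioi 0))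
    (hpos : IntegrableOn g (Ioi 0)) :
    ∫ x, g x = (∫ x in Ioi 0, g (-x)) + ∫ x in Ioi 0, g x := by
  have hIic : IntegrableOn g (Iic 0) := by
    rw [← (Measure.measurePreserving_neg (volume : Measure ℝ)).integrableOn_comp_preimage
      (Homeomorph.neg ℝ).measurableEmbedding]
    simpa [Function.comp_def] using (integrableOn_Ici_iff_integrableOn_Ioi).mpr hneg
  rw [← intervalIntegral.integral_Iic_add_Ioi hIic hpos, integral_comp_neg_Ioi, neg_zero]

lemma norm_cexp_I_mul_mul_mul (ε Y x : ℝ) : ‖cexp (I * ε * Y * x)‖ = 1 := by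
  simp [Complex.norm_exp]

lemma integrableOn_mul_cexp_I_mul {f : ℝ → ℂ} {S : Set ℝ} (hf : IntegrableOn f S) (ε Y : ℝ) :
    IntegrableOn (fun x : ℝ => f x * cexp (I * ε * Y * x)) S :=
  Integrable.mul_bdd (c := 1) hf (by fun_prop)
    (ae_of_all _ fun x => (norm_cexp_I_mul_mul_mul ε Y x).le)

lemma fourier_comp_abs {f : ℝ → ℂ} (hf : IntegrableOn f (Ioi 0)) (ξ : ℝ) :
    𝓕 (fun x : ℝ => f |x|) ξ =
      (∫ x in Ioi (0 : ℝ), f x * cexp (I * (1 : ℝ) * (2 * π * ξ : ℝ) * x)) +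
        ∫ x in Ioi (0 : ℝ), f x * cexp (I * (-1 : ℝ) * (2 * π * ξ : ℝ) * x) := by
  have hneg : EqOn (fun x : ℝ => f |-x| * cexp (I * (-1 : ℝ) * (2 * π * ξ : ℝ) * (-x : ℝ)))
      (fun x => f x * cexp (I * (1 : ℝ) * (2 * π * ξ : ℝ) * x)) (Ioi 0) := fun x (hx : 0 < x) => by
    simp [abs_of_pos hx]
  have hpos : EqOn (fun x : ℝ => f |x| * cexp (I * (-1 : ℝ) * (2 * π * ξ : ℝ) * x))
      (fun x => f x * cexp (I * (-1 : ℝ) * (2 * π * ξ : ℝ) * x)) (Ioi 0) := fun x (hx : 0 < x) => by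
    simp [abs_of_pos hx]
  have hfourier : 𝓕 (fun x : ℝ => f |x|) ξ =
      ∫ x : ℝ, f |x| * cexp (I * (-1 : ℝ) * (2 * π * ξ : ℝ) * x) := by
    rw [Real.fourier_eq']
    congr 1 with x
    rw [smul_eq_mul, mul_comm]
    congr 2
    simp
    ring
  rw [hfourier, integral_eq_integral_Ioi_neg_add_integral_Ioi
    ((integrableOn_mul_cexp_I_mul hf _ _).congr_fun hneg.symm measurableSet_Ioi)
    ((integrableOn_mul_cexp_I_mul hf _ _).congr_fun hpos.symm measurableSet_Ioi),
    setIntegral_congr_fun measurableSet_Ioi hneg, setIntegral_congr_fun measurableSet_Ioi hpos]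

lemma fourier_comp_abs_neg (f : ℝ → ℂ) (ξ : ℝ) :
    𝓕 (fun x : ℝ => f |x|) (-ξ) = 𝓕 (fun x : ℝ => f |x|) ξ := by
  rw [← Real.fourierInv_eq_fourier_neg, Real.fourierInv_eq_fourier_comp_neg]
  simp only [abs_neg]

lemma hasSum_int_of_even {f : ℤ → ℂ} (hf : ∀ n, f (-n) = f n)
    (h : Summable fun n : ℕ => f (n + 1)) :
    HasSum f (f 0 + 2 * ∑' n : ℕ, f (n + 1)) := by
  have hneg : HasSum (fun n : ℕ => f (-((n : ℤ) + 1))) (∑' n : ℕ, f (n + 1)) := by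
    simpa only [hf] using h.hasSum
  convert h.hasSum.of_add_one_of_neg_add_one hneg using 1
  ring

lemma isBigO_cocompact_comp_abs {f : ℝ → ℂ} {b C : ℝ} (hbd : ∀ x ≥ 1, ‖f x‖ ≤ C * x ^ (-b)) :
    (fun x : ℝ => f |x|) =O[cocompact ℝ] fun x => |x| ^ (-b) := by
  refine Asymptotics.IsBigO.of_bound C ?_
  filter_upwards [(tendsto_norm_cocompact_atTop (E := ℝ)).eventually_ge_atTop 1] with x hx
  rw [Real.norm_of_nonneg (by positivity)]
  exact hbd _ hx

lemma summable_nat_add_one_of_norm_le {f : ℝ → ℂ} {b C : ℝ} (hb : 1 < b)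
    (hbd : ∀ x ≥ 1, ‖f x‖ ≤ C * x ^ (-b)) : Summable fun n : ℕ => f (n + 1) := by
  refine Summable.of_norm_bounded (((Real.summable_one_div_nat_add_rpow 1 b).mpr hb).mul_left C)
    fun n => ?_
  have hn : (0 : ℝ) < n + 1 := by positivity
  rw [abs_of_pos hn, one_div, ← Real.rpow_neg hn.le]
  exact hbd _ (by linarith [Nat.cast_nonneg (α := ℝ) n])

lemma tsum_comp_abs_eq_tsum_fourier {f : ℝ → ℂ} (hf : Continuous fun x : ℝ => f |x|) {b C : ℝ}
    (hb : 1 < b) (hbd : ∀ x ≥ 1, ‖f x‖ ≤ C * x ^ (-b))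
    (hF : Summable fun n : ℕ => 𝓕 (fun x : ℝ => f |x|) (n + 1)) :
    f 0 + 2 * ∑' n : ℕ, f (n + 1) = 𝓕 (fun x : ℝ => f |x|) 0 +
      2 * ∑' n : ℕ, 𝓕 (fun x : ℝ => f |x|) (n + 1) := by
  have habs : ∀ n : ℕ, |(n : ℝ) + 1| = n + 1 := fun n => abs_of_nonneg (by positivity)
  have hfour := hasSum_int_of_even (f := fun n : ℤ => 𝓕 (fun x : ℝ => f |x|) n)
    (fun n => by rw [Int.cast_neg, fourier_comp_abs_neg]) (by simpa using hF)
  have hsum := hasSum_int_of_even (f := fun n : ℤ => f |(n : ℝ)|)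
    (fun n => by rw [Int.cast_neg, abs_neg])
    (by simpa [habs] using summable_nat_add_one_of_norm_le hb hbd)
  have hpoisson := Real.tsum_eq_tsum_fourier_of_rpow_decay_of_summable hf hb
    (isBigO_cocompact_comp_abs hbd) hfour.summable 0
  simp only [zero_add, fourier_eval_zero, mul_one, QuotientAddGroup.mk_zero] at hpoisson
  rw [hsum.tsum_eq, hfour.tsum_eq] at hpoisson
  simpa [habs] using hpoisson

end EvenPoisson

section EighthRoot

/-- The direction `exp (iεπ/4)`, where `ε = ±1`, of the rays to which contours are rotated. -/
noncomputable def ray (ε : ℝ) : ℂ := cexp ((ε * (π / 4) : ℝ) * I)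

variable {ε : ℝ}

lemma ray_eq (hε : ε = 1 ∨ ε = -1) : ray ε = (√2 / 2 : ℝ) * (1 + ε * I) := by
  rw [ray, Complex.exp_mul_I, ← ofReal_cos, ← ofReal_sin]
  rcases hε with rfl | rfl
  · rw [one_mul, Real.cos_pi_div_four, Real.sin_pi_div_four]
    push_cast
    ring
  · rw [neg_one_mul, Real.cos_neg, Real.sin_neg, Real.cos_pi_div_four, Real.sin_pi_div_four]
    push_cast
    ring

lemma ofReal_sqrt_two_sq : ((√2 : ℝ) : ℂ) ^ 2 = 2 := by
  exact_mod_cast Real.sq_sqrt zero_le_two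

lemma ofReal_sq_eq_one_of_eq_or (hε : ε = 1 ∨ ε = -1) : (ε : ℂ) ^ 2 = 1 := by
  rcases hε with rfl | rfl <;> simp

lemma ray_sq (hε : ε = 1 ∨ ε = -1) : ray ε ^ 2 = ε * I := by
  rw [ray_eq hε]
  push_cast
  linear_combination ((1 + ε * I) ^ 2 / 4 : ℂ) * ofReal_sqrt_two_sq +
    (1 / 2 : ℂ) * ε ^ 2 * I_sq - (1 / 2 : ℂ) * ofReal_sq_eq_one_of_eq_or hε

lemma norm_ray (ε : ℝ) : ‖ray ε‖ = 1 := Complex.norm_exp_ofReal_mul_I _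

lemma sqrt_two_mul_ray (hε : ε = 1 ∨ ε = -1) : (√2 : ℝ) * ray ε = 1 + ε * I := by
  rw [ray_eq hε]
  push_cast
  linear_combination ((1 + ε * I) / 2 : ℂ) * ofReal_sqrt_two_sq

lemma ray_mul_ray_neg (ε : ℝ) : ray ε * ray (-ε) = 1 := by
  rw [ray, ray, ← Complex.exp_add]
  simp

end EighthRoot

section GaussianIntegral

lemma integrable_cexp_neg_I_mul_sub_sq {Y : ℝ} (hY : 0 < Y) (b : ℝ) :
    Integrable fun v : ℝ => cexp (-(I * b * v) - Y * (v : ℂ) ^ 2) := by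
  convert integrable_cexp_quadratic (b := (Y : ℂ)) (by simpa using hY) (-(I * b)) 0 using 3
  ring

lemma integrable_mul_cexp_neg_I_mul_sub_sq {Y : ℝ} (hY : 0 < Y) (b : ℝ) :
    Integrable fun v : ℝ => v * cexp (-(I * b * v) - Y * (v : ℂ) ^ 2) := by
  refine (Integrable.mul_bdd (c := 1)
    (integrable_mul_cexp_neg_mul_sq (b := Y) (by simpa using hY))
    (g := fun v : ℝ => cexp (I * (-1 : ℝ) * b * v)) (by fun_prop)
    (ae_of_all _ fun v => (norm_cexp_I_mul_mul_mul (-1) b v).le)).congr (ae_of_all _ fun v => ?_)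
  simp only
  rw [mul_assoc, ← Complex.exp_add]
  congr 2
  push_cast
  ring

lemma integral_cexp_neg_I_mul_sub_sq {Y : ℝ} (hY : 0 < Y) (b : ℝ) :
    ∫ v : ℝ, cexp (-(I * b * v) - Y * (v : ℂ) ^ 2) =
      (√(π / Y) * Real.exp (-b ^ 2 / (4 * Y)) : ℝ) := by
  have hquad := integral_cexp_quadratic (b := -(Y : ℂ)) (by simpa using hY) (-(I * b)) 0
  rw [neg_neg] at hquad
  calc ∫ v : ℝ, cexp (-(I * b * v) - Y * (v : ℂ) ^ 2)
      = ∫ v : ℝ, cexp (-(Y : ℂ) * v ^ 2 + -(I * b) * v + 0) := by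
        congr 1 with v
        ring_nf
    _ = (π / Y : ℂ) ^ (1 / 2 : ℂ) * cexp (0 - (-(I * b)) ^ 2 / (4 * -Y)) := hquad
    _ = (√(π / Y) * Real.exp (-b ^ 2 / (4 * Y)) : ℝ) := by
        rw [Real.sqrt_eq_rpow]
        push_cast [Complex.ofReal_cpow (div_pos Real.pi_pos hY).le]
        congr 2
        rw [neg_sq, mul_pow, I_sq]
        ring

lemma integral_mul_cexp_neg_I_mul_sub_sq {Y : ℝ} (hY : 0 < Y) (b : ℝ) :
    ∫ v : ℝ, v * cexp (-(I * b * v) - Y * (v : ℂ) ^ 2) =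
      -(I * b / (2 * Y)) * (√(π / Y) * Real.exp (-b ^ 2 / (4 * Y)) : ℝ) := by
  have hderiv : ∀ v : ℝ, HasDerivAt (fun v : ℝ => cexp (-(I * b * v) - Y * (v : ℂ) ^ 2))
      (-(I * b) * cexp (-(I * b * v) - Y * (v : ℂ) ^ 2) -
        2 * Y * (v * cexp (-(I * b * v) - Y * (v : ℂ) ^ 2))) v := fun v => by
    have hquad : HasDerivAt (fun z : ℂ => -(I * b * z) - Y * z ^ 2)
        (-(I * b) - Y * (2 * v)) (v : ℂ) := by
      simpa using ((hasDerivAt_id (v : ℂ)).const_mul (I * b)).fun_neg.fun_sub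
        ((hasDerivAt_pow 2 (v : ℂ)).const_mul (Y : ℂ))
    convert hquad.cexp.comp_ofReal using 1
    ring
  have hintegrable := (integrable_cexp_neg_I_mul_sub_sq hY b).const_mul (-(I * b))
  have hintegrable' := (integrable_mul_cexp_neg_I_mul_sub_sq hY b).const_mul (2 * Y : ℂ)
  have hzero := integral_eq_zero_of_hasDerivAt_of_integrable hderiv (hintegrable.sub hintegrable')
    (integrable_cexp_neg_I_mul_sub_sq hY b)
  rw [integral_sub hintegrable hintegrable', integral_const_mul, integral_const_mul,
    integral_cexp_neg_I_mul_sub_sq hY] at hzero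
  have hY' : (Y : ℂ) ≠ 0 := by exact_mod_cast hY.ne'
  rw [neg_mul, div_mul_eq_mul_div, ← neg_div, eq_div_iff (by simpa using hY')]
  linear_combination -hzero

lemma mellin_two_eq_integral (f : ℝ → ℂ) : mellin f 2 = ∫ v in Ioi (0 : ℝ), v * f v := by
  simp only [mellin, smul_eq_mul, show (2 : ℂ) - 1 = 1 by norm_num, cpow_one]

lemma mellin_two_cexp_sub_mellin_two_cexp {Y : ℝ} (hY : 0 < Y) (b : ℝ) :
    mellin (fun v : ℝ => cexp (-(I * b * v) - Y * (v : ℂ) ^ 2)) 2 -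
      mellin (fun v : ℝ => cexp (I * b * v - Y * (v : ℂ) ^ 2)) 2 =
      -(I * b / (2 * Y)) * (√(π / Y) * Real.exp (-b ^ 2 / (4 * Y)) : ℝ) := by
  have hintegrable := integrable_mul_cexp_neg_I_mul_sub_sq hY b
  rw [← integral_mul_cexp_neg_I_mul_sub_sq hY, mellin_two_eq_integral, mellin_two_eq_integral,
    integral_eq_integral_Ioi_neg_add_integral_Ioi hintegrable.comp_neg.integrableOn
      hintegrable.integrableOn,
    sub_eq_neg_add, ← integral_neg]
  congr 2 with v
  push_cast
  ring_nf

end GaussianIntegral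

section DampedCosine

open scoped FourierTransform

variable {a Y ε η : ℝ}

lemma cos_sub_mul_sin_ge {y : ℝ} (hy : y ∈ Icc 0 (π / 4)) (hη : η ≤ 1) :
    1 - Real.sin (2 * y) ≤ Real.cos y - η * Real.sin y := by
  have hsin : 0 ≤ Real.sin y :=
    Real.sin_nonneg_of_nonneg_of_le_pi hy.1 (by linarith [hy.2, Real.pi_pos])
  have hsincos : Real.sin y ≤ Real.cos y := by
    rw [← Real.sin_pi_div_two_sub]
    exact Real.sin_le_sin_of_le_of_le_pi_div_two (by linarith [hy.1, Real.pi_pos])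
      (by linarith [hy.1]) (by linarith [hy.2])
  rw [Real.sin_two_mul]
  nlinarith [Real.cos_le_one y, Real.sin_sq_add_cos_sq y]

lemma neg_mul_cos_sub_sub_mul_sin_two_le {v y : ℝ} (ha : 0 < a) (hY : 0 < Y) (hv : 0 < v)
    (hy : y ∈ Icc 0 (π / 4)) (hη : η ≤ 1) :
    -(a * v * (Real.cos y - η * Real.sin y)) - Y * v ^ 2 * Real.sin (2 * y) ≤
      a ^ 2 / (4 * Y) - a * v := by
  have hsin : 0 ≤ Real.sin (2 * y) :=
    Real.sin_nonneg_of_nonneg_of_le_pi (by linarith [hy.1]) (by linarith [hy.2, Real.pi_pos])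
  have hquad : a * v - Y * v ^ 2 ≤ a ^ 2 / (4 * Y) := by
    rw [le_div_iff₀ (by positivity)]
    nlinarith [sq_nonneg (2 * Y * v - a)]
  calc -(a * v * (Real.cos y - η * Real.sin y)) - Y * v ^ 2 * Real.sin (2 * y)
      ≤ -(a * v * (1 - Real.sin (2 * y))) - Y * v ^ 2 * Real.sin (2 * y) :=
        sub_le_sub_right (neg_le_neg (mul_le_mul_of_nonneg_left (cos_sub_mul_sin_ge hy hη)
          (by positivity))) _
    _ = Real.sin (2 * y) * (a * v - Y * v ^ 2) - a * v := by ring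
    _ ≤ Real.sin (2 * y) * (a ^ 2 / (4 * Y)) - a * v := by gcongr
    _ ≤ a ^ 2 / (4 * Y) - a * v := by
        gcongr
        exact mul_le_of_le_one_left (by positivity) (Real.sin_le_one _)

lemma norm_cexp_quadratic_le {v y : ℝ} (ha : 0 < a) (hY : 0 < Y) (hε : ε = 1 ∨ ε = -1)
    (hεη : ε * η ≤ 1) (hv : 0 < v) (hy : y ∈ uIcc 0 (ε * (π / 4))) :
    ‖cexp (-(1 + η * I) * a * (v * cexp (y * I)) + I * ε * Y * (v * cexp (y * I)) ^ 2)‖ ≤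
      Real.exp (a ^ 2 / (4 * Y)) * Real.exp (-a * v) := by
  have hre : (-(1 + η * I) * a * (v * cexp (y * I)) + I * ε * Y * (v * cexp (y * I)) ^ 2).re =
      -(a * v * (Real.cos y - η * Real.sin y)) - Y * v ^ 2 * (ε * Real.sin (2 * y)) := by
    rw [Complex.exp_mul_I, ← ofReal_cos, ← ofReal_sin, Real.sin_two_mul]
    generalize Real.cos y = c
    generalize Real.sin y = d
    simp [pow_two]
    ring
  rw [Complex.norm_exp, ← Real.exp_add, Real.exp_le_exp, hre, neg_mul, ← sub_eq_add_neg]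
  have hπ := Real.pi_pos
  rcases hε with rfl | rfl
  · rw [Set.uIcc_of_le (by positivity), one_mul] at hy
    rw [one_mul] at hεη ⊢
    exact neg_mul_cos_sub_sub_mul_sin_two_le ha hY hv hy hεη
  · rw [Set.uIcc_of_ge (by linarith)] at hy
    have := neg_mul_cos_sub_sub_mul_sin_two_le (y := -y) (η := -η) ha hY hv
      ⟨by linarith [hy.2], by linarith [hy.1]⟩ (by linarith)
    simpa using this

lemma mellin_cexp_quadratic_rotate (ha : 0 < a) (hY : 0 < Y) (hε : ε = 1 ∨ ε = -1)
    (hεη : ε * η ≤ 1) :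
    mellin (fun v : ℝ => cexp (-(1 + η * I) * a * v + I * ε * Y * (v : ℂ) ^ 2)) 2 =
      ε * I * mellin (fun v : ℝ => cexp (-((1 + η * I) * ray ε * a * v) - Y * (v : ℂ) ^ 2)) 2 := by
  rw [mellin_rotate (F := fun u => cexp (-(1 + η * I) * a * u + I * ε * Y * u ^ 2)) (by fun_prop)
    ha (fun v hv y hy => norm_cexp_quadratic_le ha hY hε hεη hv hy) two_pos, smul_eq_mul,
    ← ray_sq hε]
  congr 1
  · rw [ray, ← Complex.exp_nat_mul, mul_comm]
    rfl
  · congr 1 with v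
    rw [← ray, mul_pow, ray_sq hε]
    congr 1
    linear_combination (Y * v ^ 2 : ℂ) * ((ε : ℂ) ^ 2 * I_sq - ofReal_sq_eq_one_of_eq_or hε)

lemma mellin_cexp_quadratic_self (ha : 0 < a) (hY : 0 < Y) (hε : ε = 1 ∨ ε = -1) :
    mellin (fun v : ℝ => cexp (-(1 + ε * I) * a * v + I * ε * Y * (v : ℂ) ^ 2)) 2 =
      ε * I * mellin (fun v : ℝ => cexp (-(ε * I * (√2 * a : ℝ) * v) - Y * (v : ℂ) ^ 2)) 2 := by
  rw [mellin_cexp_quadratic_rotate ha hY hε (by rcases hε with rfl | rfl <;> norm_num)]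
  congr 3 with v
  rw [← sqrt_two_mul_ray hε, ← ray_sq hε]
  congr 1
  push_cast
  ring

lemma mellin_cexp_quadratic_neg (ha : 0 < a) (hY : 0 < Y) (hε : ε = 1 ∨ ε = -1) :
    mellin (fun v : ℝ => cexp (-(1 + (-ε : ℝ) * I) * a * v + I * ε * Y * (v : ℂ) ^ 2)) 2 =
      ε * I * mellin (fun v : ℝ => cexp (-((√2 * a : ℝ) * v) - Y * (v : ℂ) ^ 2)) 2 := by
  rw [mellin_cexp_quadratic_rotate ha hY hε (by rcases hε with rfl | rfl <;> norm_num)]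
  congr 3 with v
  rw [← sqrt_two_mul_ray (by rcases hε with rfl | rfl <;> simp)]
  congr 1
  push_cast
  linear_combination (-√2 * a * v : ℂ) * ray_mul_ray_neg ε

/-- The function `exp (-a √x) cos (a √x)`, to which Poisson summation is applied. It is, up to a
constant, the `a`-derivative of a term of Wigert's series. -/
noncomputable def dampedCos (a x : ℝ) : ℂ := (Real.exp (-(a * √x)) * Real.cos (a * √x) : ℝ)

lemma continuous_dampedCos (a : ℝ) : Continuous (dampedCos a) := by
  unfold dampedCos
  fun_prop

lemma norm_dampedCos_le (a x : ℝ) : ‖dampedCos a x‖ ≤ Real.exp (-(a * √x)) := by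
  rw [dampedCos, Complex.norm_real, norm_mul, Real.norm_of_nonneg (Real.exp_pos _).le]
  exact mul_le_of_le_one_right (Real.exp_pos _).le (Real.abs_cos_le_one _)

lemma exp_neg_mul_sqrt_le (ha : 0 < a) {x : ℝ} (hx : 0 < x) :
    Real.exp (-(a * √x)) ≤ 24 / a ^ 4 * x ^ (-2 : ℝ) := by
  have hpow := Real.pow_div_factorial_le_exp (a * √x) (by positivity) 4
  rw [show (a * √x) ^ 4 = a ^ 4 * (√x ^ 2) ^ 2 by ring, Real.sq_sqrt hx.le] at hpow
  calc Real.exp (-(a * √x)) = (Real.exp (a * √x))⁻¹ := Real.exp_neg _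
    _ ≤ (a ^ 4 * x ^ 2 / (Nat.factorial 4 : ℝ))⁻¹ := inv_anti₀ (by positivity) hpow
    _ = 24 / a ^ 4 * x ^ (-2 : ℝ) := by
      rw [Real.rpow_neg hx.le, Real.rpow_two]
      simp [Nat.factorial]
      field_simp

lemma two_mul_dampedCos_sq {u : ℝ} (hu : 0 < u) :
    2 * dampedCos a (u ^ 2) = cexp (-(1 + (1 : ℝ) * I) * a * u) +
      cexp (-(1 + (-1 : ℝ) * I) * a * u) := by
  rw [dampedCos, Real.sqrt_sq hu.le]
  push_cast
  rw [Complex.cos, show -(1 + 1 * I) * a * u = -(a * u) + -(a * u) * I by ring,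
    show -(1 + -1 * I) * a * u = -(a * u) + (a * u) * I by ring, Complex.exp_add, Complex.exp_add]
  ring

lemma integrableOn_dampedCos (ha : 0 < a) : IntegrableOn (dampedCos a) (Ioi 0) := by
  rw [← integrableOn_Ioi_comp_rpow_iff' (dampedCos a) two_ne_zero]
  have hmellin : MellinConvergent (fun v : ℝ => dampedCos a (v ^ 2)) 2 :=
    mellinConvergent_of_norm_le_exp (f := fun v : ℝ => dampedCos a (v ^ 2)) (C := 1)
      ((continuous_dampedCos a).comp (continuous_pow 2)).continuousOn ha
      (fun v hv => by
        have hbound := norm_dampedCos_le a (v ^ 2)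
        rwa [Real.sqrt_sq hv.le, ← neg_mul, ← one_mul (Real.exp _)] at hbound)
      (by norm_num)
  refine IntegrableOn.congr_fun hmellin (fun v _ => ?_) measurableSet_Ioi
  simp only [smul_eq_mul, real_smul]
  rw [show (2 : ℝ) - 1 = 1 by norm_num, Real.rpow_one, show (2 : ℂ) - 1 = 1 by norm_num, cpow_one,
    Real.rpow_two]

lemma mellinConvergent_cexp_quadratic (ha : 0 < a) (ε η Y : ℝ) :
    MellinConvergent (fun v : ℝ => cexp (-(1 + η * I) * a * v + I * ε * Y * (v : ℂ) ^ 2)) 2 := by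
  refine mellinConvergent_of_norm_le_exp (C := 1) (by fun_prop) ha (fun v _ => le_of_eq ?_)
    (by norm_num)
  rw [Complex.norm_exp, one_mul]
  congr 1
  simp [pow_two]

lemma integral_dampedCos_mul_cexp (ha : 0 < a) (ε Y : ℝ) :
    ∫ x in Ioi (0 : ℝ), dampedCos a x * cexp (I * ε * Y * x) =
      mellin (fun v : ℝ => cexp (-(1 + (1 : ℝ) * I) * a * v + I * ε * Y * (v : ℂ) ^ 2)) 2 +
      mellin (fun v : ℝ => cexp (-(1 + (-1 : ℝ) * I) * a * v + I * ε * Y * (v : ℂ) ^ 2)) 2 := by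
  rw [mellin, mellin, ← integral_add (mellinConvergent_cexp_quadratic ha ε 1 Y)
    (mellinConvergent_cexp_quadratic ha ε (-1) Y),
    ← integral_comp_rpow_Ioi_of_pos (p := 2) (by norm_num)]
  refine setIntegral_congr_fun measurableSet_Ioi (fun v (hv : 0 < v) => ?_)
  simp only [Real.rpow_two, smul_eq_mul, real_smul]
  rw [show (2 : ℝ) - 1 = 1 by norm_num, Real.rpow_one, show (2 : ℂ) - 1 = 1 by norm_num, cpow_one,
    Complex.exp_add, Complex.exp_add, ← mul_add, ← add_mul, ← two_mul_dampedCos_sq hv]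
  push_cast
  ring

lemma integral_dampedCos (ha : 0 < a) : ∫ x in Ioi (0 : ℝ), dampedCos a x = 0 := by
  have hmellin : ∀ η : ℝ, η = 1 ∨ η = -1 → mellin (fun v : ℝ =>
      cexp (-(1 + η * I) * a * v + I * (0 : ℝ) * (0 : ℝ) * (v : ℂ) ^ 2)) 2 =
        -(η * I) * (√2 * a : ℝ) ^ (-2 : ℂ) * Complex.Gamma 2 := fun η hη => by
    have hray : cexp (-((η * (π / 4) : ℝ) * I * 2)) = -(η * I) := by
      calc cexp (-((η * (π / 4) : ℝ) * I * 2)) = ray (-η) ^ 2 := by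
            rw [ray, ← Complex.exp_nat_mul]
            push_cast
            ring_nf
        _ = -(η * I) := by
            rw [ray_sq (by rcases hη with rfl | rfl <;> simp)]
            push_cast
            ring
    have hangle : |η * (π / 4)| < π / 2 := by
      have hη' : |η| = 1 := by rcases hη with rfl | rfl <;> simp
      rw [abs_mul, hη', abs_of_pos (by positivity)]
      linarith [Real.pi_pos]
    rw [← hray, ← mellin_exp_neg_ray (by positivity) hangle two_pos]
    congr 1 with v
    rw [← ray, ← sqrt_two_mul_ray hη]
    congr 1
    push_cast
    ring
  have hintegrable := integral_dampedCos_mul_cexp ha 0 0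
  rw [hmellin 1 (Or.inl rfl), hmellin (-1) (Or.inr rfl)] at hintegrable
  simpa using hintegrable

lemma fourier_dampedCos_abs_zero (ha : 0 < a) : 𝓕 (fun x : ℝ => dampedCos a |x|) 0 = 0 := by
  rw [fourier_comp_abs (integrableOn_dampedCos ha)]
  simp [integral_dampedCos ha]

lemma integral_dampedCos_mul_cexp_add (ha : 0 < a) (hY : 0 < Y) :
    (∫ x in Ioi (0 : ℝ), dampedCos a x * cexp (I * (1 : ℝ) * Y * x)) +
      ∫ x in Ioi (0 : ℝ), dampedCos a x * cexp (I * (-1 : ℝ) * Y * x) =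
      (√2 * a / (2 * Y) * √(π / Y) * Real.exp (-(√2 * a) ^ 2 / (4 * Y)) : ℝ) := by
  have hself := mellin_cexp_quadratic_self (ε := 1) ha hY (Or.inl rfl)
  have hself' := mellin_cexp_quadratic_self (ε := -1) ha hY (Or.inr rfl)
  have hneg := mellin_cexp_quadratic_neg (ε := 1) ha hY (Or.inl rfl)
  have hneg' := mellin_cexp_quadratic_neg (ε := -1) ha hY (Or.inr rfl)
  rw [neg_neg] at hneg'
  rw [integral_dampedCos_mul_cexp ha, integral_dampedCos_mul_cexp ha, hself, hself', hneg, hneg']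
  have hgauss := mellin_two_cexp_sub_mellin_two_cexp hY (√2 * a)
  generalize √2 * a = b at hgauss ⊢
  simp only [ofReal_one, one_mul, ofReal_neg, neg_mul, neg_neg, mul_assoc] at hgauss ⊢
  push_cast at hgauss ⊢
  linear_combination I * hgauss - b / (2 * Y) * (√(π / Y) * cexp (-b ^ 2 / (4 * Y))) * I_sq

lemma fourier_dampedCos_abs (ha : 0 < a) (n : ℕ) :
    𝓕 (fun x : ℝ => dampedCos a |x|) (n + 1) = -(1 / 2) * deriv (gaussDefectTerm n) a := by
  rw [fourier_comp_abs (integrableOn_dampedCos ha),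
    integral_dampedCos_mul_cexp_add ha (by positivity), (hasDerivAt_gaussDefectTerm n a).deriv]
  have hexp : -(√2 * a) ^ 2 / (4 * (2 * π * ((n : ℝ) + 1))) = -(a ^ 2 / (4 * π * (n + 1))) := by
    rw [mul_pow, Real.sq_sqrt zero_le_two]
    field_simp
  have hcoeff : √2 * a / (2 * (2 * π * ((n : ℝ) + 1))) * √(π / (2 * π * (n + 1))) =
      (√((n : ℝ) + 1))⁻¹ * (2 * a / (4 * π * (n + 1))) / 2 := by
    rw [show π / (2 * π * ((n : ℝ) + 1)) = 2⁻¹ * ((n : ℝ) + 1)⁻¹ by field_simp,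
      Real.sqrt_mul (by norm_num), Real.sqrt_inv, Real.sqrt_inv]
    field_simp
    ring
  rw [hexp, hcoeff]
  push_cast
  ring

lemma norm_deriv_gaussDefectTerm_le (n : ℕ) (a : ℝ) :
    ‖deriv (gaussDefectTerm n) a‖ ≤ threeHalvesWeight n * (|a| / (2 * π)) := by
  have hderiv : deriv (gaussDefectTerm n) a = ((√((n : ℝ) + 1))⁻¹ *
      (Real.exp (-(a ^ 2 / (4 * π * (n + 1)))) * (2 * a / (4 * π * (n + 1)))) : ℝ) * (-1) := by
    rw [(hasDerivAt_gaussDefectTerm n a).deriv]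
    push_cast
    ring
  have hexp : Real.exp (-(a ^ 2 / (4 * π * (n + 1)))) ≤ 1 :=
    Real.exp_le_one_iff.mpr (neg_nonpos.mpr (by positivity))
  rw [hderiv, norm_mul, norm_neg, norm_one, mul_one, Complex.norm_real, Real.norm_eq_abs,
    abs_mul, abs_mul, Real.abs_exp, abs_of_pos (by positivity)]
  calc (√((n : ℝ) + 1))⁻¹ *
        (Real.exp (-(a ^ 2 / (4 * π * (n + 1)))) * |2 * a / (4 * π * (n + 1))|)
      ≤ (√((n : ℝ) + 1))⁻¹ * (1 * |2 * a / (4 * π * (n + 1))|) := by gcongr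
    _ = threeHalvesWeight n * (|a| / (2 * π)) := by
      rw [threeHalvesWeight, one_mul, abs_div, abs_mul, abs_two,
        abs_of_pos (by positivity : 0 < 4 * π * (n + 1 : ℝ))]
      field_simp
      ring

lemma summable_deriv_gaussDefectTerm (a : ℝ) : Summable fun n => deriv (gaussDefectTerm n) a :=
  .of_norm_bounded (summable_threeHalvesWeight.mul_right _) (norm_deriv_gaussDefectTerm_le · a)

theorem one_add_two_mul_tsum_dampedCos (ha : 0 < a) :
    1 + 2 * ∑' n : ℕ, dampedCos a (n + 1) = -deriv gaussDefect a := by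
  have hpoisson := tsum_comp_abs_eq_tsum_fourier ((continuous_dampedCos a).comp continuous_abs)
    one_lt_two (fun x hx => (norm_dampedCos_le a x).trans
      (exp_neg_mul_sqrt_le ha (one_pos.trans_le hx)))
    (by simpa only [fourier_dampedCos_abs ha] using (summable_deriv_gaussDefectTerm a).mul_left _)
  rw [fourier_dampedCos_abs_zero ha] at hpoisson
  simp_rw [fourier_dampedCos_abs ha, tsum_mul_left] at hpoisson
  rw [(hasDerivAt_gaussDefect a).deriv]
  rw [show dampedCos a 0 = 1 by simp [dampedCos]] at hpoisson
  rw [hpoisson]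
  ring

end DampedCosine

/-! ### Wigert's series -/

section WigertSeries

variable {a r : ℝ} {s : ℂ}

/-- The `m`-th term (with `m + 1` in place of `m`) of Wigert's series
`∑ m ≥ 1, m ^ (-1/2) * exp (-a √m) * sin (π/4 - a √m)`. -/
noncomputable def wigertTerm (m : ℕ) (a : ℝ) : ℂ :=
  ((√((m : ℝ) + 1))⁻¹ *
    (Real.exp (-(a * √((m : ℝ) + 1))) * Real.sin (π / 4 - a * √((m : ℝ) + 1))) : ℝ)

/-- Wigert's series `∑ m ≥ 1, m ^ (-1/2) * exp (-a √m) * sin (π/4 - a √m)`, for `a > 0`. -/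
noncomputable def wigertSum (a : ℝ) : ℂ := ∑' m, wigertTerm m a

lemma one_le_sqrt_nat_add_one (m : ℕ) : 1 ≤ √((m : ℝ) + 1) :=
  Real.one_le_sqrt.mpr (by linarith [Nat.cast_nonneg (α := ℝ) m])

lemma continuous_wigertTerm (m : ℕ) : Continuous (wigertTerm m) := by
  unfold wigertTerm
  fun_prop

lemma exp_neg_mul_le_div_sq (ha : 0 < a) (hr : 1 ≤ r) :
    Real.exp (-(a * r)) ≤ 8 / (a * r) ^ 2 * Real.exp (-(1 / 2) * a) := by
  have hpow := Real.pow_div_factorial_le_exp (a * r / 2) (by positivity) 2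
  calc Real.exp (-(a * r)) ≤ Real.exp (-(a * r / 2)) * Real.exp (-(1 / 2) * a) := by
        rw [← Real.exp_add, Real.exp_le_exp]
        nlinarith
    _ ≤ ((a * r / 2) ^ 2 / (Nat.factorial 2 : ℝ))⁻¹ * Real.exp (-(1 / 2) * a) := by
        rw [Real.exp_neg (a * r / 2)]
        gcongr
    _ = 8 / (a * r) ^ 2 * Real.exp (-(1 / 2) * a) := by
        simp only [Nat.factorial]
        field_simp
        norm_num

lemma norm_wigertTerm_le (m : ℕ) (ha : 0 < a) :
    ‖wigertTerm m a‖ ≤ threeHalvesWeight m * (8 / a ^ 2 * Real.exp (-(1 / 2) * a)) := by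
  rw [wigertTerm, Complex.norm_real, norm_mul, norm_mul, Real.norm_of_nonneg (by positivity),
    Real.norm_of_nonneg (Real.exp_pos _).le]
  calc (√((m : ℝ) + 1))⁻¹ *
        (Real.exp (-(a * √((m : ℝ) + 1))) * ‖Real.sin (π / 4 - a * √((m : ℝ) + 1))‖)
      ≤ (√((m : ℝ) + 1))⁻¹ * (8 / (a * √((m : ℝ) + 1)) ^ 2 * Real.exp (-(1 / 2) * a) * 1) := by
        gcongr
        · exact exp_neg_mul_le_div_sq ha (one_le_sqrt_nat_add_one m)
        · exact Real.abs_sin_le_one _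
    _ = threeHalvesWeight m * (8 / a ^ 2 * Real.exp (-(1 / 2) * a)) := by
        rw [threeHalvesWeight, mul_pow, Real.sq_sqrt (by positivity)]
        field_simp

lemma summable_wigertTerm (ha : 0 < a) : Summable fun m => wigertTerm m a :=
  .of_norm_bounded (summable_threeHalvesWeight.mul_right _) (norm_wigertTerm_le · ha)

lemma norm_wigertSum_le (ha : 0 < a) :
    ‖wigertSum a‖ ≤ (∑' m, threeHalvesWeight m) * (8 / a ^ 2 * Real.exp (-(1 / 2) * a)) := by
  rw [← tsum_mul_right]
  exact tsum_of_norm_bounded (summable_threeHalvesWeight.mul_right _).hasSum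
    (norm_wigertTerm_le · ha)

lemma hasDerivAt_wigertTerm (m : ℕ) (a : ℝ) :
    HasDerivAt (wigertTerm m) (-(√2 : ℝ) * dampedCos a (m + 1)) a := by
  unfold wigertTerm dampedCos
  have hr : √((m : ℝ) + 1) ≠ 0 := by positivity
  generalize √((m : ℝ) + 1) = r at hr ⊢
  have harg : HasDerivAt (fun a : ℝ => a * r) r a := by
    simpa using (hasDerivAt_id a).mul_const r
  have hreal := ((harg.fun_neg.exp.fun_mul (harg.const_sub (π / 4)).sin).const_mul r⁻¹)
  refine hreal.ofReal_comp.congr_deriv ?_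
  rw [← ofReal_neg, ← ofReal_mul, Real.sin_sub, Real.cos_sub, Real.sin_pi_div_four,
    Real.cos_pi_div_four]
  congr 1
  field_simp
  ring

lemma hasDerivAt_wigertSum (ha : 0 < a) :
    HasDerivAt wigertSum (∑' m : ℕ, -(√2 : ℝ) * dampedCos a (m + 1)) a := by
  have hmem : a ∈ Ioi (a / 2) := half_lt_self ha
  refine hasDerivAt_tsum_of_isPreconnected
    (u := fun m : ℕ => √2 * (24 / (a / 2) ^ 4 * (1 / |(m : ℝ) + 1| ^ (2 : ℝ))))
    (((Real.summable_one_div_nat_add_rpow 1 2).mpr one_lt_two).mul_left _ |>.mul_left _)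
    isOpen_Ioi isPreconnected_Ioi (fun m y _ => hasDerivAt_wigertTerm m y)
    (fun m y (hy : a / 2 < y) => ?_) hmem (summable_wigertTerm ha) hmem
  have hm : (0 : ℝ) < m + 1 := by positivity
  rw [norm_mul, norm_neg, Complex.norm_real, Real.norm_of_nonneg (by positivity), abs_of_pos hm,
    one_div, ← Real.rpow_neg hm.le]
  gcongr
  calc ‖dampedCos y (m + 1)‖ ≤ Real.exp (-(y * √((m : ℝ) + 1))) := norm_dampedCos_le _ _
    _ ≤ Real.exp (-(a / 2 * √((m : ℝ) + 1))) := by gcongr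
    _ ≤ 24 / (a / 2) ^ 4 * ((m : ℝ) + 1) ^ (-2 : ℝ) := exp_neg_mul_sqrt_le (by positivity) hm

lemma exists_sqrt_two_mul_wigertSum_eq :
    ∃ K : ℂ, ∀ a : ℝ, 0 < a → (√2 : ℝ) * wigertSum a = K + a + gaussDefect a := by
  have hderiv : ∀ a ∈ Ioi (0 : ℝ),
      HasDerivAt (fun a : ℝ => (√2 : ℝ) * wigertSum a - a - gaussDefect a) 0 a := fun a ha => by
    refine ((((hasDerivAt_wigertSum ha).const_mul ((√2 : ℝ) : ℂ)).sub
      ofRealCLM.hasDerivAt).sub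
        (differentiable_gaussDefect a).hasDerivAt.comp_ofReal).congr_deriv ?_
    rw [tsum_mul_left]
    simp only [ofRealCLM_apply, ofReal_one]
    linear_combination -(∑' n : ℕ, dampedCos a (n + 1)) * ofReal_sqrt_two_sq -
      one_add_two_mul_tsum_dampedCos ha
  obtain ⟨K, hK⟩ := isOpen_Ioi.exists_is_const_of_deriv_eq_zero isPreconnected_Ioi
    (fun a ha => (hderiv a ha).differentiableAt.differentiableWithinAt)
    (fun a ha => (hderiv a ha).deriv)
  exact ⟨K, fun a ha => by linear_combination hK a ha⟩

lemma exists_norm_wigertSum_le :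
    ∃ C : ℝ, ∀ a > 0, ‖wigertSum a‖ ≤ C * Real.exp (-(1 / 2) * a) := by
  obtain ⟨K, hK⟩ := exists_sqrt_two_mul_wigertSum_eq
  set W := ∑' m, threeHalvesWeight m
  have hW : 0 ≤ W := tsum_nonneg threeHalvesWeight_nonneg
  refine ⟨8 * W + (‖K‖ + 1 + W * (4 * π)⁻¹) * Real.exp (1 / 2), fun a ha => ?_⟩
  rcases le_total a 1 with hle | hge
  · have hsmall : ‖wigertSum a‖ ≤ ‖K‖ + 1 + W * (4 * π)⁻¹ := calc
      ‖wigertSum a‖ ≤ √2 * ‖wigertSum a‖ :=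
        le_mul_of_one_le_left (norm_nonneg _) (Real.one_le_sqrt.mpr one_le_two)
      _ = ‖K + a + gaussDefect a‖ := by
        rw [← hK a ha, norm_mul, Complex.norm_real, Real.norm_of_nonneg (Real.sqrt_nonneg 2)]
      _ ≤ ‖K‖ + ‖(a : ℂ)‖ + W * ((4 * π)⁻¹ * ‖(a : ℂ)‖ ^ 2) :=
        norm_add₃_le.trans (add_le_add_right
          (norm_gaussDefect_le (by rw [← ofReal_pow, ofReal_re]; positivity)) _)
      _ ≤ ‖K‖ + 1 + W * ((4 * π)⁻¹ * 1 ^ 2) := by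
        rw [Complex.norm_real, Real.norm_of_nonneg ha.le]
        gcongr
      _ = ‖K‖ + 1 + W * (4 * π)⁻¹ := by rw [one_pow, mul_one]
    have hexp : 1 ≤ Real.exp (1 / 2) * Real.exp (-(1 / 2) * a) := by
      rw [← Real.exp_add]
      exact Real.one_le_exp (by linarith)
    calc ‖wigertSum a‖ ≤ (‖K‖ + 1 + W * (4 * π)⁻¹) * 1 := by rwa [mul_one]
      _ ≤ (‖K‖ + 1 + W * (4 * π)⁻¹) * (Real.exp (1 / 2) * Real.exp (-(1 / 2) * a)) := by gcongr
      _ ≤ _ := by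
        rw [← mul_assoc]
        gcongr
        exact le_add_of_nonneg_left (by positivity)
  · calc ‖wigertSum a‖ ≤ W * (8 / a ^ 2 * Real.exp (-(1 / 2) * a)) := norm_wigertSum_le ha
      _ ≤ W * (8 / 1 ^ 2 * Real.exp (-(1 / 2) * a)) := by gcongr
      _ = 8 * W * Real.exp (-(1 / 2) * a) := by ring
      _ ≤ _ := by
        gcongr
        exact le_add_of_nonneg_right (by positivity)

end WigertSeries

section RightHalfPlane

lemma isOpen_setOf_lt_re (a : ℝ) : IsOpen {s : ℂ | a < s.re} :=
  isOpen_lt continuous_const continuous_re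

lemma eq_of_differentiableAt_of_eq_of_lt_re {f g : ℂ → ℂ} {a b : ℝ}
    (hf : ∀ s, a < s.re → DifferentiableAt ℂ f s) (hg : ∀ s, a < s.re → DifferentiableAt ℂ g s)
    (hfg : ∀ s, b < s.re → f s = g s) {s : ℂ} (hs : a < s.re) : f s = g s := by
  have hanalytic : ∀ {h : ℂ → ℂ}, (∀ s, a < s.re → DifferentiableAt ℂ h s) →
      AnalyticOnNhd ℂ h {s | a < s.re} := fun hh =>
    DifferentiableOn.analyticOnNhd (fun s hs => (hh s hs).differentiableWithinAt)
      (isOpen_setOf_lt_re a)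
  set z : ℂ := ((max a b + 1 : ℝ) : ℂ)
  have hza : a < z.re := (le_max_left a b).trans_lt (lt_add_one _)
  have hzb : b < z.re := (le_max_right a b).trans_lt (lt_add_one _)
  refine (hanalytic hf).eqOn_of_preconnected_of_eventuallyEq (hanalytic hg)
    (convex_halfSpace_re_gt a).isPreconnected hza ?_ hs
  filter_upwards [(isOpen_setOf_lt_re b).mem_nhds hzb] with s hs
  exact hfg s hs

lemma differentiableAt_Gamma_of_re_pos {s : ℂ} (hs : 0 < s.re) :
    DifferentiableAt ℂ Complex.Gamma s :=
  differentiableAt_Gamma s fun m hm => by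
    rw [hm, neg_re, natCast_re] at hs
    linarith [Nat.cast_nonneg (α := ℝ) m]

lemma ofReal_sqrt_cpow {x : ℝ} (hx : 0 < x) (s : ℂ) : ((√x : ℝ) : ℂ) ^ s = (x : ℂ) ^ (s / 2) := by
  rw [Real.sqrt_eq_rpow, ofReal_cpow hx.le, ← cpow_mul _ (by norm_num [← ofReal_log hx.le,
    Real.pi_pos]) (by norm_num [← ofReal_log hx.le, Real.pi_pos.le])]
  push_cast
  ring_nf

end RightHalfPlane

section WigertMellin

variable {s : ℂ}

lemma sin_eq_exp_sub_exp_div_two_mul_I (z : ℂ) :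
    Complex.sin z = (cexp (z * I) - cexp (-z * I)) / (2 * I) := by
  rw [Complex.sin, div_eq_div_iff two_ne_zero (by simp)]
  linear_combination 2 * (cexp (-z * I) - cexp (z * I)) * I_sq

lemma ofReal_exp_neg_mul_sin_eq (v : ℝ) :
    ((Real.exp (-v) * Real.sin (π / 4 - v) : ℝ) : ℂ) =
      (ray 1 / (2 * I)) • cexp (-((√2 : ℝ) * ray 1) * v) -
        (ray (-1) / (2 * I)) • cexp (-((√2 : ℝ) * ray (-1)) * v) := by
  have hexp : ∀ ε : ℝ, ε = 1 ∨ ε = -1 → ray ε * cexp (-((√2 : ℝ) * ray ε) * v) =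
      cexp (-v) * cexp (ε * (π / 4 - v) * I) := fun ε hε => by
    rw [sqrt_two_mul_ray hε, ray, ← Complex.exp_add, ← Complex.exp_add]
    push_cast
    ring_nf
  have hpos := hexp 1 (.inl rfl)
  have hneg := hexp (-1) (.inr rfl)
  push_cast at hpos hneg
  rw [one_mul] at hpos
  rw [neg_one_mul] at hneg
  push_cast
  rw [smul_eq_mul, smul_eq_mul, div_mul_eq_mul_div, div_mul_eq_mul_div, hpos, hneg,
    sin_eq_exp_sub_exp_div_two_mul_I]
  ring

lemma mellinConvergent_cexp_neg_sqrt_two_mul_ray {ε : ℝ} (hε : ε = 1 ∨ ε = -1) (hs : 0 < s.re) :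
    MellinConvergent (fun v : ℝ => cexp (-((√2 : ℝ) * ray ε) * v)) s := by
  refine mellinConvergent_of_norm_le_exp (C := 1) (c := 1)
    (Continuous.continuousOn (by fun_prop)) one_pos (fun v _ => ?_) hs
  rw [sqrt_two_mul_ray hε, Complex.norm_exp]
  simp

lemma mellin_exp_neg_mul_sin (hs : 0 < s.re) :
    mellin (fun v : ℝ => ((Real.exp (-v) * Real.sin (π / 4 - v) : ℝ) : ℂ)) s =
      (√2 : ℝ) ^ (-s) * Complex.Gamma s * Complex.sin (π / 4 - π * s / 4) := by
  have hray : ∀ ε : ℝ, ε = 1 ∨ ε = -1 →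
      ray ε * mellin (fun v : ℝ => cexp (-((√2 : ℝ) * ray ε) * v)) s =
        cexp (ε * (π / 4 - π * s / 4) * I) * ((√2 : ℝ) ^ (-s) * Complex.Gamma s) := by
    intro ε hε
    have hangle : |ε * (π / 4)| < π / 2 := by
      rcases hε with rfl | rfl <;> simp only [one_mul, neg_one_mul, abs_neg] <;>
        rw [abs_of_pos (by positivity)] <;> linarith [Real.pi_pos]
    rw [ray, mellin_exp_neg_ray (by positivity) hangle hs, ← mul_assoc, ← mul_assoc,
      ← Complex.exp_add, mul_assoc]
    push_cast
    ring_nf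
  have hpos := hray 1 (.inl rfl)
  have hneg := hray (-1) (.inr rfl)
  push_cast at hpos hneg
  rw [one_mul] at hpos
  rw [neg_one_mul] at hneg
  simp_rw [ofReal_exp_neg_mul_sin_eq]
  rw [(hasMellin_sub ((mellinConvergent_cexp_neg_sqrt_two_mul_ray (.inl rfl) hs).const_smul _)
      ((mellinConvergent_cexp_neg_sqrt_two_mul_ray (.inr rfl) hs).const_smul _)).2,
    mellin_const_smul, mellin_const_smul, smul_eq_mul, smul_eq_mul, div_mul_eq_mul_div,
    div_mul_eq_mul_div, hpos, hneg, sin_eq_exp_sub_exp_div_two_mul_I]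
  ring

lemma mellin_wigertTerm (m : ℕ) (hs : 0 < s.re) :
    mellin (wigertTerm m) s = 1 / ((m : ℂ) + 1) ^ ((1 + s) / 2) *
      ((√2 : ℝ) ^ (-s) * Complex.Gamma s * Complex.sin (π / 4 - π * s / 4)) := by
  have hm : (0 : ℝ) < m + 1 := by positivity
  have hscale := mellin_comp_mul_right
    (fun v : ℝ => ((Real.exp (-v) * Real.sin (π / 4 - v) : ℝ) : ℂ)) s (Real.sqrt_pos.mpr hm)
  have hcoeff : (((√((m : ℝ) + 1))⁻¹ : ℝ) : ℂ) * ((√((m : ℝ) + 1) : ℝ) : ℂ) ^ (-s) =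
      1 / ((m : ℂ) + 1) ^ ((1 + s) / 2) := by
    rw [ofReal_inv, ← cpow_neg_one, ← cpow_add _ _ (ofReal_ne_zero.mpr (Real.sqrt_pos.mpr hm).ne'),
      ofReal_sqrt_cpow hm, one_div, ← cpow_neg]
    push_cast
    ring_nf
  have hterm : wigertTerm m = fun v => (((√((m : ℝ) + 1))⁻¹ : ℝ) : ℂ) •
      ((Real.exp (-(v * √((m : ℝ) + 1))) * Real.sin (π / 4 - v * √((m : ℝ) + 1)) : ℝ) : ℂ) := by
    ext v
    rw [wigertTerm, ofReal_mul, smul_eq_mul]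
  rw [hterm, mellin_const_smul, hscale, smul_smul, smul_eq_mul, hcoeff,
    mellin_exp_neg_mul_sin hs]

lemma mellin_wigertSum_of_two_lt_re (hs : 2 < s.re) :
    mellin wigertSum s = riemannZeta ((1 + s) / 2) *
      ((√2 : ℝ) ^ (-s) * Complex.Gamma s * Complex.sin (π / 4 - π * s / 4)) := by
  have hb : MellinConvergent
      (fun v : ℝ => (v : ℂ) ^ (-2 : ℂ) • ((8 * Real.exp (-(1 / 2) * v) : ℝ) : ℂ)) s := by
    rw [MellinConvergent.cpow_smul]
    refine mellinConvergent_of_norm_le_exp (C := 8) (c := 1 / 2)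
      (Continuous.continuousOn (by fun_prop)) (by norm_num) (fun v _ => ?_) (by simpa using hs)
    rw [Complex.norm_real, Real.norm_of_nonneg (by positivity)]
  have hsum := hasSum_mellin_of_dominated hb summable_threeHalvesWeight
    (fun m => (continuous_wigertTerm m).continuousOn) fun m v (hv : 0 < v) => by
      have hcpow : ‖(v : ℂ) ^ (-2 : ℂ)‖ = (v ^ 2)⁻¹ := by
        rw [norm_cpow_eq_rpow_re_of_pos hv]
        simp [Real.rpow_neg hv.le]
      rw [norm_smul, hcpow, Complex.norm_real, Real.norm_of_nonneg (by positivity)]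
      exact (norm_wigertTerm_le m hv).trans_eq (by ring)
  change mellin (fun v => ∑' m, wigertTerm m v) s = _
  simp_rw [← hsum.tsum_eq, mellin_wigertTerm _ (by linarith : 0 < s.re)]
  rw [tsum_mul_right, zeta_eq_tsum_one_div_nat_add_one_cpow (by simp; linarith)]

lemma continuousOn_wigertSum : ContinuousOn wigertSum (Ioi 0) :=
  fun _ ha => (hasDerivAt_wigertSum ha).continuousAt.continuousWithinAt

lemma differentiableAt_mellin_wigertSum (hs : 0 < s.re) :
    DifferentiableAt ℂ (mellin wigertSum) s := by
  obtain ⟨C, hC⟩ := exists_norm_wigertSum_le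
  exact differentiableAt_mellin_of_norm_le_exp continuousOn_wigertSum (by norm_num)
    (fun v hv => hC v hv) hs

lemma sub_one_mul_riemannZeta_one_add_div_two (hs : s ≠ 1) :
    (s - 1) * riemannZeta ((1 + s) / 2) = 2 * riemannZeta₁ ((1 + s) / 2) := by
  rw [riemannZeta_eq_inv_sub_mul (fun h => hs (by linear_combination 2 * h)),
    show (1 + s) / 2 - 1 = (s - 1) / 2 by ring]
  field_simp [sub_ne_zero.mpr hs]

lemma mellin_wigertSum (hs : 0 < s.re) (hs' : s ≠ 1) :
    mellin wigertSum s = riemannZeta ((1 + s) / 2) *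
      ((√2 : ℝ) ^ (-s) * Complex.Gamma s * Complex.sin (π / 4 - π * s / 4)) := by
  have hentire : (s - 1) * mellin wigertSum s = 2 * riemannZeta₁ ((1 + s) / 2) *
      ((√2 : ℝ) ^ (-s) * Complex.Gamma s * Complex.sin (π / 4 - π * s / 4)) := by
    refine eq_of_differentiableAt_of_eq_of_lt_re (a := 0) (b := 2)
      (f := fun s => (s - 1) * mellin wigertSum s)
      (g := fun s => 2 * riemannZeta₁ ((1 + s) / 2) *
        ((√2 : ℝ) ^ (-s) * Complex.Gamma s * Complex.sin (π / 4 - π * s / 4)))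
      (fun s hs => ?_) (fun s hs => ?_) (fun s hs => ?_) hs
    · exact (differentiableAt_id.sub_const 1).mul (differentiableAt_mellin_wigertSum hs)
    · have hΓ := differentiableAt_Gamma_of_re_pos hs
      have hpow : DifferentiableAt ℂ (fun s : ℂ => ((√2 : ℝ) : ℂ) ^ (-s)) s :=
        differentiableAt_id.fun_neg.const_cpow (.inl (by simp))
      fun_prop
    · have hne : s ≠ 1 := by
        rintro rfl
        norm_num at hs
      rw [mellin_wigertSum_of_two_lt_re hs, ← sub_one_mul_riemannZeta_one_add_div_two hne]
      ring
  rw [← sub_one_mul_riemannZeta_one_add_div_two hs', mul_assoc] at hentire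
  exact mul_left_cancel₀ (sub_ne_zero.mpr hs') hentire

end WigertMellin

section MellinResidue

variable {E : Type*} [NormedAddCommGroup E] {f : ℝ → E} {C c : ℝ} {L : E}

lemma sub_one_le_rpow {w p : ℝ} (hw : 0 < w) (hp : 1 ≤ p) : w - 1 ≤ w ^ p := by
  rcases le_total w 1 with h | h
  · linarith [Real.rpow_nonneg hw.le p]
  · linarith [Real.self_le_rpow_of_one_le h hp]

lemma norm_comp_rpow_le (hc : 0 < c) (hb : ∀ v > 0, ‖f v‖ ≤ C * Real.exp (-c * v)) {w p : ℝ}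
    (hw : 0 < w) (hp : 1 ≤ p) : ‖f (w ^ p)‖ ≤ C * Real.exp c * Real.exp (-c * w) := by
  refine (hb _ (Real.rpow_pos_of_pos hw p)).trans ?_
  rw [mul_assoc, ← Real.exp_add]
  refine mul_le_mul_of_nonneg_left (Real.exp_le_exp.mpr ?_) (nonneg_of_norm_le_mul_exp hb)
  nlinarith [sub_one_le_rpow hw hp]

lemma tendsto_atTop_zero_of_norm_le_exp (hc : 0 < c)
    (hb : ∀ v > 0, ‖f v‖ ≤ C * Real.exp (-c * v)) : Tendsto f atTop (𝓝 0) :=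
  (isBigO_exp_atTop_of_norm_le hb).trans_tendsto <|
    Real.tendsto_exp_atBot.comp (tendsto_id.const_mul_atTop_of_neg (neg_neg_of_pos hc))

lemma tendsto_comp_rpow_inv_nhdsGT_zero (hL : Tendsto f (𝓝[>] 0) (𝓝 L))
    (hf : Tendsto f atTop (𝓝 0)) {w : ℝ} (hw : 0 < w) (hw' : w ≠ 1) :
    Tendsto (fun s : ℝ => f (w ^ s⁻¹)) (𝓝[>] 0) (𝓝 ((Set.Iio 1).indicator (fun _ => L) w)) := by
  rcases hw'.lt_or_gt with h | h
  · rw [indicator_of_mem (Set.mem_Iio.mpr h)]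
    refine hL.comp (tendsto_nhdsWithin_iff.mpr ⟨?_, .of_forall fun s => Real.rpow_pos_of_pos hw _⟩)
    exact (tendsto_rpow_atTop_of_base_lt_one w (by linarith) h).comp tendsto_inv_nhdsGT_zero
  · rw [indicator_of_notMem (Set.notMem_Iio.mpr h.le)]
    exact hf.comp ((tendsto_rpow_atTop_of_base_gt_one w h).comp tendsto_inv_nhdsGT_zero)

variable [NormedSpace ℂ E]

lemma ofReal_smul_mellin_ofReal {s : ℝ} (hs : 0 < s) (f : ℝ → E) :
    (s : ℂ) • mellin f s = ∫ w in Ioi (0 : ℝ), f (w ^ s⁻¹) := by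
  rw [← integral_comp_rpow_Ioi_of_pos (g := fun w => f (w ^ s⁻¹)) hs, mellin, ← integral_smul]
  refine setIntegral_congr_fun measurableSet_Ioi fun x (hx : 0 < x) => ?_
  rw [← Real.rpow_mul hx.le, mul_inv_cancel₀ hs.ne', Real.rpow_one, smul_smul, ← Complex.coe_smul,
    ofReal_mul, ofReal_cpow hx.le]
  push_cast
  rfl

lemma tendsto_smul_mellin_nhdsGT_zero [CompleteSpace E] (hf : ContinuousOn f (Ioi 0)) (hc : 0 < c)
    (hb : ∀ v > 0, ‖f v‖ ≤ C * Real.exp (-c * v)) (hL : Tendsto f (𝓝[>] 0) (𝓝 L)) :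
    Tendsto (fun s : ℝ => (s : ℂ) • mellin f s) (𝓝[>] 0) (𝓝 L) := by
  have hlim : ∫ w in Ioi (0 : ℝ), (Set.Iio 1).indicator (fun _ => L) w = L := by
    rw [setIntegral_indicator measurableSet_Iio, Ioi_inter_Iio]
    simp
  rw [← hlim]
  refine (tendsto_integral_filter_of_dominated_convergence
    (fun w => C * Real.exp c * Real.exp (-c * w)) ?_ ?_ ?_ ?_).congr' <|
    eventually_mem_nhdsWithin.mono fun s hs => (ofReal_smul_mellin_ofReal hs f).symm
  · filter_upwards with s
    refine ContinuousOn.aestronglyMeasurable (fun w (hw : 0 < w) => ?_) measurableSet_Ioi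
    exact (hf.continuousAt (Ioi_mem_nhds (Real.rpow_pos_of_pos hw _))).comp_continuousWithinAt
      (f := fun w : ℝ => w ^ s⁻¹)
      (Real.continuousAt_rpow_const _ _ (.inl hw.ne')).continuousWithinAt
  · filter_upwards [Ioo_mem_nhdsGT one_pos] with s hs
    filter_upwards [ae_restrict_mem measurableSet_Ioi] with w hw
    exact norm_comp_rpow_le hc hb hw ((one_le_inv₀ hs.1).mpr hs.2.le)
  · simpa [IntegrableOn] using (integrableOn_exp_mul_Ioi (neg_neg_of_pos hc) 0).const_mul _
  · filter_upwards [ae_restrict_mem measurableSet_Ioi,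
      ae_restrict_of_ae (Measure.ae_ne volume (1 : ℝ))] with w hw hw'
    exact tendsto_comp_rpow_inv_nhdsGT_zero hL (tendsto_atTop_zero_of_norm_le_exp hc hb) hw hw'

end MellinResidue

section WigertEntire

lemma gaussDefect_zero : gaussDefect 0 = 0 := by
  simpa using norm_gaussDefect_le (a := 0) (by simp)

lemma tendsto_gaussDefect_nhdsGT_zero :
    Tendsto (fun a : ℝ => gaussDefect a) (𝓝[>] 0) (𝓝 0) := by
  have hcont : Continuous fun a : ℝ => gaussDefect a :=
    differentiable_gaussDefect.continuous.comp continuous_ofReal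
  simpa [gaussDefect_zero] using (hcont.tendsto 0).mono_left nhdsWithin_le_nhds

lemma tendsto_ofReal_nhdsGT_zero : Tendsto (fun s : ℝ => (s : ℂ)) (𝓝[>] 0) (𝓝 0) :=
  (continuous_ofReal.tendsto' 0 0 ofReal_zero).mono_left nhdsWithin_le_nhds

lemma complex_sin_pi_div_four : Complex.sin (π / 4) = (√2 / 2 : ℝ) := by
  rw [← Real.sin_pi_div_four]
  push_cast
  rfl

lemma tendsto_mul_mellin_wigertSum_nhdsGT_zero :
    Tendsto (fun s : ℝ => (s : ℂ) * mellin wigertSum s) (𝓝[>] 0)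
      (𝓝 (riemannZeta (1 / 2) * (√2 / 2 : ℝ))) := by
  have hcont : ContinuousAt (fun s : ℂ => riemannZeta ((1 + s) / 2) *
      ((√2 : ℝ) ^ (-s) * Complex.Gamma (s + 1) * Complex.sin (π / 4 - π * s / 4))) 0 := by
    have hζ : DifferentiableAt ℂ (fun s : ℂ => riemannZeta ((1 + s) / 2)) 0 :=
      (differentiableAt_riemannZeta (by norm_num)).comp (0 : ℂ)
        (f := fun s : ℂ => (1 + s) / 2) (by fun_prop)
    have hΓ : DifferentiableAt ℂ (fun s : ℂ => Complex.Gamma (s + 1)) 0 :=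
      (differentiableAt_Gamma_of_re_pos (by simp)).comp (0 : ℂ)
        (f := fun s : ℂ => s + 1) (by fun_prop)
    have hpow : DifferentiableAt ℂ (fun s : ℂ => ((√2 : ℝ) : ℂ) ^ (-s)) 0 :=
      differentiableAt_id.fun_neg.const_cpow (.inl (by simp))
    exact DifferentiableAt.continuousAt (by fun_prop)
  have hlim := hcont.tendsto.comp tendsto_ofReal_nhdsGT_zero
  simp only [neg_zero, cpow_zero, zero_add, Complex.Gamma_one, mul_zero, zero_div, sub_zero,
    add_zero, one_mul, complex_sin_pi_div_four] at hlim
  refine hlim.congr' ?_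
  filter_upwards [Ioo_mem_nhdsGT one_pos] with s hs
  rw [Function.comp_apply, mellin_wigertSum (by simpa using hs.1) (by exact_mod_cast hs.2.ne),
    Complex.Gamma_add_one _ (by exact_mod_cast hs.1.ne')]
  ring

/-- The entire function that extends `√2 * wigertSum`. -/
noncomputable def wigertEntire (a : ℂ) : ℂ := riemannZeta (1 / 2) + a + gaussDefect a

/-- As `s → 0⁺`, both `K` and `√2 ζ(1/2) sin (π/4) = ζ(1/2)` are the limit of `√2 s` times the
Mellin transform of `wigertSum`, with `K` the constant of `exists_sqrt_two_mul_wigertSum_eq`. -/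
lemma sqrt_two_mul_wigertSum {a : ℝ} (ha : 0 < a) : (√2 : ℝ) * wigertSum a = wigertEntire a := by
  obtain ⟨K, hK⟩ := exists_sqrt_two_mul_wigertSum_eq
  obtain ⟨C, hC⟩ := exists_norm_wigertSum_le
  have hsqrt : ((√2 : ℝ) : ℂ) ≠ 0 := by simp
  have hlim : Tendsto wigertSum (𝓝[>] 0) (𝓝 (((√2 : ℝ) : ℂ)⁻¹ * (K + 0 + 0))) := by
    refine (((tendsto_const_nhds.add tendsto_ofReal_nhdsGT_zero).add
      tendsto_gaussDefect_nhdsGT_zero).const_mul _).congr' ?_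
    filter_upwards [self_mem_nhdsWithin] with b hb
    rw [← hK b hb, inv_mul_cancel_left₀ hsqrt]
  have hmellin := tendsto_smul_mellin_nhdsGT_zero continuousOn_wigertSum (c := 1 / 2)
    (by norm_num) (fun v hv => by simpa using hC v hv) hlim
  have hKeq := tendsto_nhds_unique hmellin tendsto_mul_mellin_wigertSum_nhdsGT_zero
  rw [inv_mul_eq_iff_eq_mul₀ hsqrt, add_zero, add_zero] at hKeq
  rw [hK a ha, wigertEntire, hKeq]
  push_cast
  linear_combination riemannZeta (1 / 2) / 2 * ofReal_sqrt_two_sq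

lemma differentiable_wigertEntire : Differentiable ℂ wigertEntire :=
  (differentiable_id.const_add _).add differentiable_gaussDefect

lemma exists_norm_wigertEntire_le :
    ∃ C : ℝ, ∀ a : ℂ, 0 ≤ (a ^ 2).re → ‖wigertEntire a‖ ≤ C * (1 + ‖a‖ ^ 2) := by
  set K := ‖riemannZeta (1 / 2)‖
  set W := (∑' k, threeHalvesWeight k) * (4 * π)⁻¹ with hW
  have hW0 : 0 ≤ W := mul_nonneg (tsum_nonneg threeHalvesWeight_nonneg) (by positivity)
  refine ⟨K + 1 + W, fun a ha => ?_⟩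
  calc ‖wigertEntire a‖ ≤ K + ‖a‖ + ‖gaussDefect a‖ := norm_add₃_le
    _ ≤ K * (1 + ‖a‖ ^ 2) + (1 + ‖a‖ ^ 2) + W * (1 + ‖a‖ ^ 2) := by
        have hdefect := norm_gaussDefect_le ha
        rw [← mul_assoc, ← hW] at hdefect
        gcongr
        · exact le_mul_of_one_le_right (norm_nonneg _) (by linarith [sq_nonneg ‖a‖])
        · nlinarith [sq_nonneg (‖a‖ - 1)]
        · exact hdefect.trans (mul_le_mul_of_nonneg_left (by linarith) hW0)
    _ = (K + 1 + W) * (1 + ‖a‖ ^ 2) := by ring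

end WigertEntire

/-! ### Fourier coefficients along rotated rays -/

section RotatedMellin

/-- The Mellin-type integral of `z ^ (s - 1) * g z * exp (iεxz)` along the ray in direction
`ray ε`, where `z ^ (s - 1)` is the principal power. -/
noncomputable def rotatedMellin (g : ℂ → ℂ) (ε x : ℝ) (s : ℂ) : ℂ :=
  cexp ((ε * (π / 4) : ℝ) * I * s) *
    mellin (fun v : ℝ => g (v * ray ε) * cexp (I * ε * x * (v * ray ε))) s

variable {g h : ℂ → ℂ} {ε x : ℝ} {s : ℂ}

lemma rotatedMellin_const_mul (c : ℂ) (g : ℂ → ℂ) (ε x : ℝ) (s : ℂ) :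
    rotatedMellin (fun z => c * g z) ε x s = c * rotatedMellin g ε x s := by
  have hsmul : ∀ v : ℝ, c * g (v * ray ε) * cexp (I * ε * x * (v * ray ε)) =
      c • (g (v * ray ε) * cexp (I * ε * x * (v * ray ε))) := fun v => mul_assoc _ _ _
  rw [rotatedMellin, funext hsmul, mellin_const_smul, smul_eq_mul, mul_left_comm, rotatedMellin]

lemma rotatedMellin_id_mul (g : ℂ → ℂ) (ε x : ℝ) (s : ℂ) :
    rotatedMellin (fun z => z * g z) ε x s = rotatedMellin g ε x (s + 1) := by
  have hcpow : ∀ v : ℝ, v * ray ε * g (v * ray ε) * cexp (I * ε * x * (v * ray ε)) =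
      ray ε • ((v : ℂ) ^ (1 : ℂ) • (g (v * ray ε) * cexp (I * ε * x * (v * ray ε)))) := fun v => by
    simp only [cpow_one, smul_eq_mul]
    ring
  rw [rotatedMellin, funext hcpow, mellin_const_smul, mellin_cpow_smul, rotatedMellin, mul_add_one,
    Complex.exp_add, ← ray, smul_eq_mul, ← mul_assoc]

lemma norm_mul_ray {v : ℝ} (hv : 0 < v) : ‖v * ray ε‖ = v := by
  rw [norm_mul, norm_ray, mul_one, norm_real, Real.norm_of_nonneg hv.le]

lemma re_ofReal_mul_cexp_sq_nonneg (hε : ε = 1 ∨ ε = -1) (v : ℝ) {y : ℝ}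
    (hy : y ∈ Icc 0 (π / 4)) : 0 ≤ ((v * cexp ((ε * y : ℝ) * I)) ^ 2).re := by
  have hsq : (v * cexp ((ε * y : ℝ) * I)) ^ 2 = (v ^ 2 : ℝ) * cexp ((2 * (ε * y) : ℝ) * I) := by
    rw [mul_pow, ← Complex.exp_nat_mul]
    push_cast
    ring_nf
  rw [hsq, re_ofReal_mul, exp_ofReal_mul_I_re]
  refine mul_nonneg (sq_nonneg v) (Real.cos_nonneg_of_neg_pi_div_two_le_of_le ?_ ?_) <;>
  · rcases hε with rfl | rfl <;> linarith [hy.1, hy.2]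

lemma re_mul_ray_sq_nonneg (hε : ε = 1 ∨ ε = -1) (v : ℝ) : 0 ≤ ((v * ray ε) ^ 2).re :=
  re_ofReal_mul_cexp_sq_nonneg hε v ⟨by positivity, le_rfl⟩

lemma norm_cexp_mul_ray (hε : ε = 1 ∨ ε = -1) (x v : ℝ) :
    ‖cexp (I * ε * x * (v * ray ε))‖ = Real.exp (-(√2 / 2 * x) * v) := by
  have hnorm := norm_cexp_sub_mul_ray hε 0 x v (π / 4)
  rw [Real.sin_pi_div_four, ofReal_zero, sub_zero] at hnorm
  rw [ray, hnorm]
  ring_nf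

lemma I_mul_mul_ray (hε : ε = 1 ∨ ε = -1) : I * ε * ray ε = -ray (-ε) := by
  linear_combination (I * ε * ray (-ε)) * ray_sq hε - (I * ε * ray ε) * ray_mul_ray_neg ε +
    (ray (-ε) * ε ^ 2) * I_sq - ray (-ε) * ofReal_sq_eq_one_of_eq_or hε

section Bound

variable {A : ℝ} {n : ℕ} (hε : ε = 1 ∨ ε = -1) (hx : 0 < x)

include hε in
lemma norm_mul_cexp_ray_le (hb : ∀ z, 0 ≤ (z ^ 2).re → ‖g z‖ ≤ A * ‖z‖ ^ n) {v : ℝ} (hv : 0 < v) :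
    ‖g (v * ray ε) * cexp (I * ε * x * (v * ray ε))‖ ≤
      A * (v ^ n * Real.exp (-(√2 / 2 * x) * v)) := by
  rw [norm_mul, norm_cexp_mul_ray hε, ← mul_assoc]
  gcongr
  simpa only [norm_mul_ray hv] using hb _ (re_mul_ray_sq_nonneg hε v)

lemma norm_cexp_ofReal_mul_I_mul_le (hε : ε = 1 ∨ ε = -1) (s : ℂ) :
    ‖cexp ((ε * (π / 4) : ℝ) * I * s)‖ ≤ Real.exp (π / 4 * |s.im|) := by
  have hre : ((ε * (π / 4) : ℝ) * I * s).re = -(ε * (π / 4)) * s.im := by simp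
  rw [Complex.norm_exp, hre]
  refine Real.exp_le_exp.mpr ?_
  rcases hε with rfl | rfl <;> nlinarith [neg_abs_le s.im, le_abs_self s.im, Real.pi_pos]

lemma integrableOn_rpow_mul_exp_neg_mul {p r : ℝ} (hp : 0 < p) (hr : 0 < r) :
    IntegrableOn (fun v : ℝ => v ^ (p - 1) * Real.exp (-(r * v))) (Ioi 0) := by
  simpa using integrableOn_rpow_mul_exp_neg_mul_rpow (p := 1) (s := p - 1) (b := r)
    (by linarith) one_pos hr

lemma mellinConvergent_pow_mul_exp {r : ℝ} (hr : 0 < r) (n : ℕ) (hs : 0 < s.re) :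
    MellinConvergent (fun v : ℝ => ((v ^ n * Real.exp (-r * v) : ℝ) : ℂ)) s := by
  refine mellinConvergent_of_norm_le_exp (C := 1 + n.factorial / (r / 2) ^ n) (c := r / 2)
    (by fun_prop) (by positivity) (fun v hv => ?_) hs
  have hv : 0 < v := hv
  have hpow := one_add_pow_le_mul_exp (half_pos hr) hv.le n
  rw [norm_real, Real.norm_of_nonneg (by positivity)]
  calc v ^ n * Real.exp (-r * v)
      ≤ (1 + n.factorial / (r / 2) ^ n) * Real.exp (r / 2 * v) * Real.exp (-r * v) := by
        gcongr
        linarith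
    _ = (1 + n.factorial / (r / 2) ^ n) * Real.exp (-(r / 2) * v) := by
        rw [mul_assoc, ← Real.exp_add]
        ring_nf

lemma norm_mellin_le_of_norm_le_pow_mul_exp {f : ℝ → ℂ} {r : ℝ} (hr : 0 < r)
    (hf : ∀ v > 0, ‖f v‖ ≤ A * (v ^ n * Real.exp (-r * v))) (hs : 0 < s.re) :
    ‖mellin f s‖ ≤ A * ((1 / r) ^ (s.re + n) * Real.Gamma (s.re + n)) := by
  have hsn : 0 < s.re + n := by positivity
  rw [← Real.integral_rpow_mul_exp_neg_mul_Ioi hsn hr, ← integral_const_mul, mellin]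
  refine norm_integral_le_of_norm_le ((integrableOn_rpow_mul_exp_neg_mul hsn hr).const_mul A)
    ((ae_restrict_iff' measurableSet_Ioi).mpr (ae_of_all _ fun v (hv : 0 < v) => ?_))
  rw [norm_smul, norm_cpow_eq_rpow_re_of_pos hv]
  calc v ^ (s - 1).re * ‖f v‖ ≤ v ^ (s - 1).re * (A * (v ^ n * Real.exp (-r * v))) := by
        gcongr
        exact hf v hv
    _ = A * (v ^ (s.re + n - 1) * Real.exp (-(r * v))) := by
        rw [show s.re + n - 1 = (s - 1).re + n by simp; ring, Real.rpow_add hv,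
          Real.rpow_natCast, neg_mul]
        ring

include hε hx

lemma norm_rotatedMellin_le (hb : ∀ z, 0 ≤ (z ^ 2).re → ‖g z‖ ≤ A * ‖z‖ ^ n) (hs : 0 < s.re) :
    ‖rotatedMellin g ε x s‖ ≤ Real.exp (π / 4 * |s.im|) *
      (A * ((1 / (√2 / 2 * x)) ^ (s.re + n) * Real.Gamma (s.re + n))) := by
  rw [rotatedMellin, norm_mul]
  exact mul_le_mul (norm_cexp_ofReal_mul_I_mul_le hε s)
    (norm_mellin_le_of_norm_le_pow_mul_exp (by positivity)
      (fun v hv => norm_mul_cexp_ray_le hε hb hv) hs) (norm_nonneg _) (Real.exp_pos _).le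

lemma hasSum_rotatedMellin {ι : Type*} [Countable ι] {g : ι → ℂ → ℂ} {u : ι → ℝ}
    (hg : ∀ i, Continuous (g i)) (hu : Summable u)
    (hb : ∀ i z, 0 ≤ (z ^ 2).re → ‖g i z‖ ≤ u i * ‖z‖ ^ n) (hs : 0 < s.re) :
    HasSum (fun i => rotatedMellin (g i) ε x s) (rotatedMellin (fun z => ∑' i, g i z) ε x s) := by
  have hsum := hasSum_mellin_of_dominated
    (f := fun i (v : ℝ) => g i (v * ray ε) * cexp (I * ε * x * (v * ray ε)))
    (mellinConvergent_pow_mul_exp (by positivity : 0 < √2 / 2 * x) n hs) hu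
    (fun i => Continuous.continuousOn (by have := hg i; fun_prop)) fun i v hv => by
      have hv : 0 < v := hv
      rw [norm_real, Real.norm_of_nonneg (by positivity)]
      exact norm_mul_cexp_ray_le hε (hb i) hv
  simp only [tsum_mul_right] at hsum
  exact hsum.mul_left _

end Bound

section Growth

variable {C : ℝ} {n : ℕ} (hε : ε = 1 ∨ ε = -1) (hx : 0 < x)

include hε in
lemma norm_mul_cexp_ray_le_exp (hx : 0 < x)
    (hb : ∀ z, 0 ≤ (z ^ 2).re → ‖g z‖ ≤ C * (1 + ‖z‖ ^ n)) {v : ℝ} (hv : 0 < v) :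
    ‖g (v * ray ε) * cexp (I * ε * x * (v * ray ε))‖ ≤
      C * (1 + n.factorial / (√2 / 4 * x) ^ n) * Real.exp (-(√2 / 4 * x) * v) := by
  have hC : 0 ≤ C := nonneg_of_mul_nonneg_left
    ((norm_nonneg _).trans (hb _ (re_mul_ray_sq_nonneg hε v))) (by positivity)
  rw [norm_mul, norm_cexp_mul_ray hε]
  calc ‖g (v * ray ε)‖ * Real.exp (-(√2 / 2 * x) * v)
      ≤ C * ((1 + n.factorial / (√2 / 4 * x) ^ n) * Real.exp (√2 / 4 * x * v)) *
          Real.exp (-(√2 / 2 * x) * v) := by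
        gcongr
        refine (hb _ (re_mul_ray_sq_nonneg hε v)).trans ?_
        rw [norm_mul_ray hv]
        gcongr
        exact one_add_pow_le_mul_exp (by positivity) hv.le n
    _ = C * (1 + n.factorial / (√2 / 4 * x) ^ n) * Real.exp (-(√2 / 4 * x) * v) := by
        rw [mul_assoc, mul_assoc, ← Real.exp_add, ← mul_assoc]
        ring_nf

include hε hx

lemma mellinConvergent_mul_cexp_ray (hg : Continuous g)
    (hb : ∀ z, 0 ≤ (z ^ 2).re → ‖g z‖ ≤ C * (1 + ‖z‖ ^ n)) (hs : 0 < s.re) :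
    MellinConvergent (fun v : ℝ => g (v * ray ε) * cexp (I * ε * x * (v * ray ε))) s :=
  mellinConvergent_of_norm_le_exp (Continuous.continuousOn (by fun_prop)) (by positivity)
    (fun _ hv => norm_mul_cexp_ray_le_exp hε hx hb hv) hs

lemma differentiableAt_rotatedMellin (hg : Continuous g)
    (hb : ∀ z, 0 ≤ (z ^ 2).re → ‖g z‖ ≤ C * (1 + ‖z‖ ^ n)) (hs : 0 < s.re) :
    DifferentiableAt ℂ (rotatedMellin g ε x) s :=
  (by fun_prop : DifferentiableAt ℂ (fun s => cexp ((ε * (π / 4) : ℝ) * I * s)) s).mul <|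
    differentiableAt_mellin_of_norm_le_exp (Continuous.continuousOn (by fun_prop)) (by positivity)
      (fun _ hv => norm_mul_cexp_ray_le_exp hε hx hb hv) hs

lemma rotatedMellin_add {C' : ℝ} {m : ℕ} (hg : Continuous g)
    (hb : ∀ z, 0 ≤ (z ^ 2).re → ‖g z‖ ≤ C * (1 + ‖z‖ ^ n)) (hh : Continuous h)
    (hb' : ∀ z, 0 ≤ (z ^ 2).re → ‖h z‖ ≤ C' * (1 + ‖z‖ ^ m)) (hs : 0 < s.re) :
    rotatedMellin (fun z => g z + h z) ε x s = rotatedMellin g ε x s + rotatedMellin h ε x s := by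
  rw [rotatedMellin, rotatedMellin, rotatedMellin, ← mul_add,
    ← (hasMellin_add (mellinConvergent_mul_cexp_ray hε hx hg hb hs)
      (mellinConvergent_mul_cexp_ray hε hx hh hb' hs)).2]
  simp only [add_mul]

lemma rotatedMellin_one (hs : 0 < s.re) : rotatedMellin (fun _ => 1) ε x s =
    cexp ((ε * (π / 2) : ℝ) * I * s) * (x : ℂ) ^ (-s) * Complex.Gamma s := by
  have harg : |-ε * (π / 4)| < π / 2 := by
    rw [abs_lt]
    rcases hε with rfl | rfl <;> constructor <;> linarith [Real.pi_pos]
  have hexp : ∀ v : ℝ, 1 * cexp (I * ε * x * (v * ray ε)) =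
      cexp (-(x * cexp ((-ε * (π / 4) : ℝ) * I)) * v) := fun v => by
    rw [one_mul, ← ray]
    congr 1
    linear_combination (x * v : ℂ) * I_mul_mul_ray hε
  rw [rotatedMellin, funext hexp, mellin_exp_neg_ray hx harg hs, ← mul_assoc, ← mul_assoc,
    ← Complex.exp_add]
  congr 3
  push_cast
  ring

lemma mellin_mul_cexp_eq_rotatedMellin (hg : Differentiable ℂ g)
    (hb : ∀ z, 0 ≤ (z ^ 2).re → ‖g z‖ ≤ C * (1 + ‖z‖ ^ n)) (hs : 0 < s.re)
    (hgs : MellinConvergent (fun v : ℝ => g v) s) :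
    mellin (fun v : ℝ => g v * cexp (I * ε * x * v)) s = rotatedMellin g ε x s := by
  refine mellin_mul_cexp_rotate hg hε (θ := π / 4) (C := C) (n := n) (by positivity)
    (fun v hv y hy => ?_) (by linarith [Real.pi_pos]) hx hs hgs
  refine (hb _ (re_ofReal_mul_cexp_sq_nonneg hε v hy)).trans_eq ?_
  rw [norm_mul, norm_exp_ofReal_mul_I, mul_one, norm_real, Real.norm_of_nonneg hv.le]

end Growth

end RotatedMellin

section DefectMellin

variable {q ε x : ℝ} {s z : ℂ}

lemma re_ofReal_mul_sq_nonneg (q : ℝ) (hz : 0 ≤ (z ^ 2).re) : 0 ≤ ((q * z) ^ 2).re := by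
  rw [mul_pow, ← ofReal_pow, re_ofReal_mul]
  exact mul_nonneg (sq_nonneg q) hz

lemma norm_ofReal_mul_sq (q : ℝ) (z : ℂ) : ‖q * z‖ ^ 2 = q ^ 2 * ‖z‖ ^ 2 := by
  rw [norm_mul, mul_pow, norm_real, Real.norm_eq_abs, sq_abs]

lemma norm_gaussDefectTerm_ofReal_mul_le (q : ℝ) (k : ℕ) (hz : 0 ≤ (z ^ 2).re) :
    ‖gaussDefectTerm k (q * z)‖ ≤ threeHalvesWeight k * ((4 * π)⁻¹ * q ^ 2) * ‖z‖ ^ 2 := by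
  have hbound := norm_gaussDefectTerm_le k (re_ofReal_mul_sq_nonneg q hz)
  rwa [norm_ofReal_mul_sq, ← mul_assoc (4 * π)⁻¹, ← mul_assoc] at hbound

lemma norm_gaussDefect_ofReal_mul_le (q : ℝ) (hz : 0 ≤ (z ^ 2).re) :
    ‖gaussDefect (q * z)‖ ≤ (∑' k, threeHalvesWeight k) * ((4 * π)⁻¹ * q ^ 2) * ‖z‖ ^ 2 := by
  have hbound := norm_gaussDefect_le (re_ofReal_mul_sq_nonneg q hz)
  rwa [norm_ofReal_mul_sq, ← mul_assoc (4 * π)⁻¹, ← mul_assoc] at hbound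

lemma exists_norm_gaussDefect_ofReal_mul_le (q : ℝ) :
    ∃ C : ℝ, ∀ z : ℂ, 0 ≤ (z ^ 2).re → ‖gaussDefect (q * z)‖ ≤ C * (1 + ‖z‖ ^ 2) := by
  refine ⟨(∑' k, threeHalvesWeight k) * ((4 * π)⁻¹ * q ^ 2),
    fun z hz => (norm_gaussDefect_ofReal_mul_le q hz).trans ?_⟩
  have hW : 0 ≤ ∑' k, threeHalvesWeight k := tsum_nonneg threeHalvesWeight_nonneg
  exact mul_le_mul_of_nonneg_left (le_add_of_nonneg_left zero_le_one) (by positivity)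

lemma exists_norm_wigertEntire_ofReal_mul_le (q : ℝ) :
    ∃ C : ℝ, ∀ z : ℂ, 0 ≤ (z ^ 2).re → ‖wigertEntire (q * z)‖ ≤ C * (1 + ‖z‖ ^ 2) := by
  obtain ⟨C, hC⟩ := exists_norm_wigertEntire_le
  have hC0 : 0 ≤ C := by simpa using (norm_nonneg _).trans (hC 0 (by simp))
  refine ⟨C * (1 + q ^ 2), fun z hz => (hC _ (re_ofReal_mul_sq_nonneg q hz)).trans ?_⟩
  rw [norm_ofReal_mul_sq, mul_assoc]
  gcongr
  nlinarith [sq_nonneg q, sq_nonneg ‖z‖]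

lemma exists_norm_wigertEntire_ofReal_le_exp :
    ∃ C : ℝ, 0 ≤ C ∧ ∀ a : ℝ, 0 < a → ‖wigertEntire a‖ ≤ C * Real.exp (-(1 / 2) * a) := by
  obtain ⟨C, hC⟩ := exists_norm_wigertSum_le
  have hC0 : 0 ≤ C := nonneg_of_mul_nonneg_left
    ((norm_nonneg _).trans (hC 1 one_pos)) (Real.exp_pos _)
  refine ⟨√2 * C, by positivity, fun a ha => ?_⟩
  rw [← sqrt_two_mul_wigertSum ha, norm_mul, norm_real, Real.norm_of_nonneg (Real.sqrt_nonneg 2),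
    mul_assoc]
  exact mul_le_mul_of_nonneg_left (hC a ha) (Real.sqrt_nonneg 2)

lemma mellinConvergent_wigertEntire_comp_mul (hq : 0 < q) (hs : 0 < s.re) :
    MellinConvergent (fun v : ℝ => wigertEntire (q * v)) s := by
  obtain ⟨C, -, hC⟩ := exists_norm_wigertEntire_ofReal_le_exp
  have hcont := differentiable_wigertEntire.continuous
  refine mellinConvergent_of_norm_le_exp (C := C) (c := 1 / 2 * q)
    (Continuous.continuousOn (by fun_prop)) (by positivity) (fun v hv => ?_) hs
  simpa [mul_assoc] using hC (q * v) (mul_pos hq hv)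

/-- The contribution of `gaussDefect (q * z)` to the `ε`-half of the Fourier coefficient of
`z ^ (s - 1) * wigertEntire (q * z)` at frequency `x`. -/
noncomputable def defectMellin (q ε x : ℝ) (s : ℂ) : ℂ :=
  rotatedMellin (fun z => gaussDefect (q * z)) ε x s

variable (hε : ε = 1 ∨ ε = -1) (hx : 0 < x)
include hε hx

lemma differentiableAt_defectMellin (q : ℝ) (hs : 0 < s.re) :
    DifferentiableAt ℂ (defectMellin q ε x) s := by
  obtain ⟨C, hC⟩ := exists_norm_gaussDefect_ofReal_mul_le q
  have hcont : Continuous fun z : ℂ => gaussDefect (q * z) :=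
    differentiable_gaussDefect.continuous.comp (continuous_const_mul _)
  exact (differentiableAt_rotatedMellin hε hx hcont hC hs :)

lemma norm_defectMellin_le (q : ℝ) (hs : 0 < s.re) :
    ‖defectMellin q ε x s‖ ≤ Real.exp (π / 4 * |s.im|) *
      ((∑' k, threeHalvesWeight k) * ((4 * π)⁻¹ * q ^ 2) *
        ((1 / (√2 / 2 * x)) ^ (s.re + 2) * Real.Gamma (s.re + 2))) := by
  exact_mod_cast norm_rotatedMellin_le hε hx (fun z hz => norm_gaussDefect_ofReal_mul_le q hz) hs

lemma hasSum_defectMellin (q : ℝ) (hs : 0 < s.re) :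
    HasSum (fun k => rotatedMellin (fun z => gaussDefectTerm k (q * z)) ε x s)
      (defectMellin q ε x s) :=
  hasSum_rotatedMellin hε hx
    (fun k => by
      have hcont : Continuous (gaussDefectTerm k) := by unfold gaussDefectTerm; fun_prop
      fun_prop)
    (summable_threeHalvesWeight.mul_right ((4 * π)⁻¹ * q ^ 2))
    (fun k z hz => norm_gaussDefectTerm_ofReal_mul_le q k hz) hs

lemma rotatedMellin_affine (c d : ℂ) (hs : 0 < s.re) :
    rotatedMellin (fun z => c + d * z) ε x s =
      c * (cexp ((ε * (π / 2) : ℝ) * I * s) * (x : ℂ) ^ (-s) * Complex.Gamma s) +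
      d * (cexp ((ε * (π / 2) : ℝ) * I * (s + 1)) * (x : ℂ) ^ (-(s + 1)) *
        Complex.Gamma (s + 1)) := by
  rw [rotatedMellin_add hε hx (g := fun _ => c) (h := fun z => d * z) (C := ‖c‖) (n := 1)
    (C' := ‖d‖) (m := 1) (by fun_prop) (fun z _ => ?_) (by fun_prop) (fun z _ => ?_) hs]
  · have hid := rotatedMellin_id_mul (fun _ => 1) ε x s
    have hconst := rotatedMellin_const_mul c (fun _ => 1) ε x s
    simp only [mul_one] at hid hconst
    rw [hconst, rotatedMellin_const_mul, hid, rotatedMellin_one hε hx hs,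
      rotatedMellin_one hε hx (by simp; linarith)]
  · exact le_mul_of_one_le_right (norm_nonneg c) (by simp)
  · rw [norm_mul, pow_one]
    exact mul_le_mul_of_nonneg_left (le_add_of_nonneg_left zero_le_one) (norm_nonneg d)

lemma mellin_wigertEntire_mul_cexp (hq : 0 < q) (hs : 0 < s.re) :
    mellin (fun v : ℝ => wigertEntire (q * v) * cexp (I * ε * x * v)) s =
      riemannZeta (1 / 2) * (cexp ((ε * (π / 2) : ℝ) * I * s) * (x : ℂ) ^ (-s) *
        Complex.Gamma s) +
      q * (cexp ((ε * (π / 2) : ℝ) * I * (s + 1)) * (x : ℂ) ^ (-(s + 1)) *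
        Complex.Gamma (s + 1)) + defectMellin q ε x s := by
  obtain ⟨C, hC⟩ := exists_norm_gaussDefect_ofReal_mul_le q
  obtain ⟨C', hC'⟩ := exists_norm_wigertEntire_ofReal_mul_le q
  have hcont := differentiable_gaussDefect.continuous
  have hdiff := differentiable_wigertEntire
  set c := riemannZeta (1 / 2)
  rw [mellin_mul_cexp_eq_rotatedMellin hε hx (g := fun z => wigertEntire (q * z)) (by fun_prop)
    hC' hs (mellinConvergent_wigertEntire_comp_mul hq hs), ← rotatedMellin_affine hε hx _ _ hs,
    defectMellin, ← rotatedMellin_add hε hx (C := ‖c‖ + ‖(q : ℂ)‖) (n := 1) (by fun_prop)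
      (fun z _ => ?_) (by fun_prop) hC hs]
  · rfl
  · calc ‖c + q * z‖ ≤ ‖c‖ + ‖(q : ℂ)‖ * ‖z‖ := (norm_add_le _ _).trans_eq (by rw [norm_mul])
      _ ≤ (‖c‖ + ‖(q : ℂ)‖) * (1 + ‖z‖ ^ 1) := by
        nlinarith [norm_nonneg c, norm_nonneg (q : ℂ), norm_nonneg z,
          mul_nonneg (norm_nonneg c) (norm_nonneg z)]

end DefectMellin

section DefectTerm

variable {ε x : ℝ} {s : ℂ}

lemma mellinConvergent_cexp_neg_mul_sq {t : ℝ} (ht : 0 < t) (hs : 0 < s.re) :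
    MellinConvergent (fun v : ℝ => cexp (-(t * v ^ 2))) s := by
  refine mellinConvergent_of_norm_le_exp (C := Real.exp (1 / (4 * t))) (c := 1)
    (by fun_prop) one_pos (fun v _ => ?_) hs
  have hre : (-(t * (v : ℂ) ^ 2)).re = -(t * v ^ 2) := by norm_cast
  have hsq : t * (v - 1 / (2 * t)) ^ 2 = t * v ^ 2 - v + 1 / (4 * t) := by
    field_simp
    ring
  rw [Complex.norm_exp, hre, ← Real.exp_add, Real.exp_le_exp]
  linarith [mul_nonneg ht.le (sq_nonneg (v - 1 / (2 * t)))]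

lemma norm_cexp_neg_mul_sq_le_one {t : ℝ} (ht : 0 < t) {z : ℂ} (hz : 0 ≤ (z ^ 2).re) :
    ‖cexp (-(t * z ^ 2))‖ ≤ 1 := by
  rw [Complex.norm_exp, neg_re, re_ofReal_mul, Real.exp_le_one_iff, neg_nonpos]
  exact mul_nonneg ht.le hz

/-- Only the Gaussian of the defect is rotated back to the real axis: the constant `-1` is
integrated in closed form along the ray. -/
lemma rotatedMellin_gaussDefectTerm {q : ℝ} (hq : 0 < q) (hε : ε = 1 ∨ ε = -1) (hx : 0 < x)
    (k : ℕ) (hs : 0 < s.re) :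
    rotatedMellin (fun z => gaussDefectTerm k (q * z)) ε x s =
      ((√((k : ℝ) + 1))⁻¹ : ℝ) *
        (mellin (fun v : ℝ => cexp (-((q ^ 2 / (4 * π * (k + 1)) : ℝ) * v ^ 2)) *
            cexp (I * ε * x * v)) s -
          cexp ((ε * (π / 2) : ℝ) * I * s) * (x : ℂ) ^ (-s) * Complex.Gamma s) := by
  set t : ℝ := q ^ 2 / (4 * π * (k + 1)) with ht
  have ht0 : 0 < t := by positivity
  have hbound : ∀ z : ℂ, 0 ≤ (z ^ 2).re → ‖cexp (-(t * z ^ 2))‖ ≤ 1 * (1 + ‖z‖ ^ 0) :=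
    fun z hz => (norm_cexp_neg_mul_sq_le_one ht0 hz).trans (by norm_num)
  have hterm : ∀ z : ℂ, gaussDefectTerm k (q * z) =
      ((√((k : ℝ) + 1))⁻¹ : ℝ) * (cexp (-(t * z ^ 2)) + (-1) * 1) := fun z => by
    have harg : -((q * z) ^ 2 / (4 * π * (k + 1) : ℝ)) = -(t * z ^ 2) := by
      rw [ht]
      push_cast
      ring
    rw [gaussDefectTerm, harg]
    ring
  rw [funext hterm, rotatedMellin_const_mul, rotatedMellin_add hε hx (C := 1) (n := 0) (C' := 1)
      (m := 0) (by fun_prop) hbound (by fun_prop) (fun z _ => by norm_num) hs,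
    rotatedMellin_const_mul, rotatedMellin_one hε hx hs,
    mellin_mul_cexp_eq_rotatedMellin hε hx (by fun_prop) hbound hs
      (mellinConvergent_cexp_neg_mul_sq ht0 hs)]
  ring

end DefectTerm

/-! ### Poisson summation over the divisors -/

section LocallyUniformSums

lemma differentiableAt_tsum_of_norm_le_mul {ι : Type*} {F : ι → ℂ → ℂ} {B : ℂ → ℝ} {u : ι → ℝ}
    {s : ℂ} (hu : Summable u) (hu0 : ∀ i, 0 ≤ u i) (hB : ContinuousAt B s)
    (hF : ∀ᶠ w in 𝓝 s, ∀ i, DifferentiableAt ℂ (F i) w)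
    (hle : ∀ᶠ w in 𝓝 s, ∀ i, ‖F i w‖ ≤ B w * u i) :
    DifferentiableAt ℂ (fun w => ∑' i, F i w) s := by
  have hBs : ∀ᶠ w in 𝓝 s, B w < B s + 1 := hB.eventually_lt_const (lt_add_one _)
  obtain ⟨U, hU, hUo, hsU⟩ := eventually_nhds_iff.mp ((hF.and hle).and hBs)
  refine (differentiableOn_tsum_of_summable_norm (hu.mul_left (B s + 1))
    (fun i w hw => ((hU w hw).1.1 i).differentiableWithinAt) hUo fun i w hw => ?_).differentiableAt
    (hUo.mem_nhds hsU)
  exact ((hU w hw).1.2 i).trans (mul_le_mul_of_nonneg_right (hU w hw).2.le (hu0 i))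

lemma summable_nat_add_one_sq_inv : Summable fun n : ℕ => (((n : ℝ) + 1) ^ 2)⁻¹ := by
  simpa using (summable_nat_add_iff 1).mpr (Real.summable_nat_pow_inv.mpr one_lt_two)

end LocallyUniformSums

section DefectFourierSum

variable {s : ℂ}

lemma one_div_two_pi_mul_rpow_le (n : ℕ) {a : ℝ} (ha : 0 < a) :
    (1 / (√2 / 2 * (2 * π * (n + 1)))) ^ (a + 2) ≤ (((n : ℝ) + 1) ^ 2)⁻¹ := by
  have hn : (1 : ℝ) ≤ n + 1 := by simp
  have hsqrt : 1 ≤ √2 := Real.one_le_sqrt.mpr one_le_two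
  have hle : (n : ℝ) + 1 ≤ √2 / 2 * (2 * π * (n + 1)) := by
    nlinarith [mul_le_mul hsqrt (Real.pi_gt_three.le) (by norm_num) (by positivity)]
  rw [one_div, ← inv_pow, ← Real.rpow_two]
  calc (√2 / 2 * (2 * π * (n + 1)))⁻¹ ^ (a + 2) ≤ ((n : ℝ) + 1)⁻¹ ^ (a + 2) := by gcongr
    _ ≤ ((n : ℝ) + 1)⁻¹ ^ (2 : ℝ) :=
        Real.rpow_le_rpow_of_exponent_ge (by positivity) (inv_le_one_of_one_le₀ hn) (by linarith)

/-- The majorant of `s ↦ defectMellin q ε (2π(n + 1)) s` relative to `(n + 1)⁻²`. -/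
noncomputable def defectBound (q : ℝ) (s : ℂ) : ℝ :=
  Real.exp (π / 4 * |s.im|) *
    ((∑' k, threeHalvesWeight k) * ((4 * π)⁻¹ * q ^ 2) * Real.Gamma (s.re + 2))

lemma continuousAt_defectBound (q : ℝ) (hs : 0 < s.re) : ContinuousAt (defectBound q) s := by
  have hΓ : ContinuousAt (fun s : ℂ => Real.Gamma (s.re + 2)) s :=
    (Real.differentiableOn_Gamma_Ioi.continuousOn.continuousAt
      (Ioi_mem_nhds (by positivity : 0 < s.re + 2))).comp (f := fun s : ℂ => s.re + 2)
      (by fun_prop)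
  unfold defectBound
  fun_prop

lemma norm_defectMellin_two_pi_mul_le (q : ℝ) {ε : ℝ} (hε : ε = 1 ∨ ε = -1) (hs : 0 < s.re)
    (n : ℕ) : ‖defectMellin q ε (2 * π * (n + 1)) s‖ ≤ defectBound q s * (((n : ℝ) + 1) ^ 2)⁻¹ := by
  have hW : 0 ≤ ∑' k, threeHalvesWeight k := tsum_nonneg threeHalvesWeight_nonneg
  calc ‖defectMellin q ε (2 * π * (n + 1)) s‖
      ≤ Real.exp (π / 4 * |s.im|) * ((∑' k, threeHalvesWeight k) * ((4 * π)⁻¹ * q ^ 2) *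
          ((((n : ℝ) + 1) ^ 2)⁻¹ * Real.Gamma (s.re + 2))) := by
        refine (norm_defectMellin_le hε (by positivity) q hs).trans ?_
        gcongr
        exact one_div_two_pi_mul_rpow_le n hs
    _ = defectBound q s * (((n : ℝ) + 1) ^ 2)⁻¹ := by
        rw [defectBound]
        ring

/-- The total contribution of the defect to the Fourier side of Poisson summation. -/
noncomputable def defectFourierSum (q : ℝ) (s : ℂ) : ℂ :=
  ∑' n : ℕ, (defectMellin q 1 (2 * π * (n + 1)) s + defectMellin q (-1) (2 * π * (n + 1)) s)

lemma norm_defectMellin_add_le (q : ℝ) (hs : 0 < s.re) (n : ℕ) :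
    ‖defectMellin q 1 (2 * π * (n + 1)) s + defectMellin q (-1) (2 * π * (n + 1)) s‖ ≤
      2 * defectBound q s * (((n : ℝ) + 1) ^ 2)⁻¹ := by
  refine (norm_add_le _ _).trans ?_
  linarith [norm_defectMellin_two_pi_mul_le q (.inl rfl) hs n,
    norm_defectMellin_two_pi_mul_le q (.inr rfl) hs n]

lemma hasSum_defectFourierSum (q : ℝ) (hs : 0 < s.re) :
    HasSum (fun n : ℕ =>
      defectMellin q 1 (2 * π * (n + 1)) s + defectMellin q (-1) (2 * π * (n + 1)) s)
      (defectFourierSum q s) :=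
  (Summable.of_norm_bounded (summable_nat_add_one_sq_inv.mul_left _)
    (norm_defectMellin_add_le q hs)).hasSum

lemma differentiableAt_defectFourierSum (q : ℝ) (hs : 0 < s.re) :
    DifferentiableAt ℂ (defectFourierSum q) s := by
  refine differentiableAt_tsum_of_norm_le_mul summable_nat_add_one_sq_inv
    (fun n => by positivity) ((continuousAt_defectBound q hs).const_mul 2) ?_ ?_ <;>
  filter_upwards [(isOpen_setOf_lt_re 0).mem_nhds hs] with w hw n
  · exact (differentiableAt_defectMellin (.inl rfl) (by positivity) q hw).add
      (differentiableAt_defectMellin (.inr rfl) (by positivity) q hw)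
  · exact norm_defectMellin_add_le q hw n

end DefectFourierSum

section WigertPower

variable {q : ℝ} {s : ℂ}

/-- The function to which Poisson summation is applied, for `1 < s.re`, after even extension. -/
noncomputable def wigertPower (q : ℝ) (s : ℂ) (x : ℝ) : ℂ :=
  (x : ℂ) ^ (s - 1) * wigertEntire (q * x)

/-- The left-hand side of Ramanujan's identity, times `√2` and with `q = √β`, once the divisor
sum is opened. -/
noncomputable def wigertDirichlet (q : ℝ) (s : ℂ) : ℂ := ∑' n : ℕ, wigertPower q s (n + 1)

lemma exists_rpow_mul_exp_neg_le (a : ℝ) {c : ℝ} (hc : 0 < c) :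
    ∃ C : ℝ, 0 ≤ C ∧ ∀ x : ℝ, 1 ≤ x → x ^ a * Real.exp (-c * x) ≤ C := by
  obtain ⟨m, hm⟩ := exists_nat_ge a
  refine ⟨1 + m.factorial / c ^ m, by positivity, fun x hx => ?_⟩
  have hpow : x ^ a ≤ x ^ m :=
    (Real.rpow_le_rpow_of_exponent_le hx hm).trans_eq (Real.rpow_natCast x m)
  have hexp := one_add_pow_le_mul_exp hc (zero_le_one.trans hx) m
  rw [neg_mul, Real.exp_neg, mul_inv_le_iff₀ (Real.exp_pos _)]
  linarith

lemma exists_norm_wigertPower_le (hq : 0 < q) (M : ℝ) :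
    ∃ C : ℝ, ∀ s : ℂ, s.re ≤ M → ∀ x : ℝ, 1 ≤ x → ‖wigertPower q s x‖ ≤ C * x ^ (-2 : ℝ) := by
  obtain ⟨C, hC0, hC⟩ := exists_norm_wigertEntire_ofReal_le_exp
  obtain ⟨C', -, hC'⟩ := exists_rpow_mul_exp_neg_le (M + 1) (c := 1 / 2 * q) (by positivity)
  refine ⟨C * C', fun s hs x hx => ?_⟩
  have hx0 : 0 < x := one_pos.trans_le hx
  have hpow : x ^ (s - 1).re ≤ x ^ (M + 1) * x ^ (-2 : ℝ) := by
    rw [← Real.rpow_add hx0]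
    refine Real.rpow_le_rpow_of_exponent_le hx ?_
    rw [sub_re, one_re]
    linarith
  have hentire := hC (q * x) (by positivity)
  rw [ofReal_mul] at hentire
  rw [wigertPower, norm_mul, norm_cpow_eq_rpow_re_of_pos hx0]
  calc x ^ (s - 1).re * ‖wigertEntire (q * x)‖
      ≤ x ^ (M + 1) * x ^ (-2 : ℝ) * (C * Real.exp (-(1 / 2) * (q * x))) := by gcongr
    _ = C * (x ^ (M + 1) * Real.exp (-(1 / 2 * q) * x)) * x ^ (-2 : ℝ) := by
        rw [neg_mul, neg_mul, mul_assoc (1 / 2)]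
        ring
    _ ≤ C * C' * x ^ (-2 : ℝ) := by
        gcongr
        exact hC' x hx

lemma differentiableAt_wigertDirichlet (hq : 0 < q) (s : ℂ) :
    DifferentiableAt ℂ (wigertDirichlet q) s := by
  obtain ⟨C, hC⟩ := exists_norm_wigertPower_le hq (s.re + 1)
  refine differentiableAt_tsum_of_norm_le_mul summable_nat_add_one_sq_inv
    (fun n => by positivity) (B := fun _ => C) continuousAt_const ?_ ?_
  · refine .of_forall fun w n => DifferentiableAt.mul_const (.const_cpow (by fun_prop) ?_) _
    exact .inl (ofReal_ne_zero.mpr (by positivity))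
  · filter_upwards [(isOpen_lt continuous_re continuous_const).mem_nhds (lt_add_one s.re)]
      with w hw n
    simpa [Real.rpow_neg (by positivity : (0 : ℝ) ≤ n + 1)] using hC w hw.le (n + 1) (by simp)

end WigertPower

section ZetaSum

variable {s : ℂ}

lemma cexp_half_pi_add_cexp_neg_half_pi (s : ℂ) :
    cexp ((1 * (π / 2) : ℝ) * I * s) + cexp ((-1 * (π / 2) : ℝ) * I * s) =
      2 * Complex.cos (π * s / 2) := by
  rw [Complex.two_cos]
  push_cast
  ring_nf

lemma hasSum_two_pi_mul_cpow_neg (hs : 1 < s.re) :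
    HasSum (fun n : ℕ => ((2 * π * (n + 1) : ℝ) : ℂ) ^ (-s))
      ((2 * π : ℂ) ^ (-s) * riemannZeta s) := by
  have hsum : Summable fun n : ℕ => 1 / ((n : ℂ) + 1) ^ s := by
    simpa using (summable_nat_add_iff 1).mpr (summable_one_div_nat_cpow.mpr hs)
  have hζ := hsum.hasSum
  rw [← zeta_eq_tsum_one_div_nat_add_one_cpow hs] at hζ
  refine (hζ.mul_left ((2 * π : ℂ) ^ (-s))).congr_fun fun n => ?_
  have hmul := mul_cpow_ofReal_nonneg (by positivity : 0 ≤ 2 * π)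
    (by positivity : (0 : ℝ) ≤ n + 1) (-s)
  push_cast at hmul ⊢
  rw [hmul, cpow_neg ((n : ℂ) + 1), one_div]

lemma hasSum_two_cos_mul_cpow_mul_Gamma (hs : 1 < s.re) :
    HasSum (fun n : ℕ => 2 * Complex.cos (π * s / 2) *
      (((2 * π * (n + 1) : ℝ) : ℂ) ^ (-s) * Complex.Gamma s)) (riemannZeta (1 - s)) := by
  have hΓ : ∀ n : ℕ, s ≠ -n := fun n hn => by
    rw [hn, neg_re, natCast_re] at hs
    linarith [n.cast_nonneg (α := ℝ)]
  have hs1 : s ≠ 1 := by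
    rintro rfl
    simp at hs
  have hfunctional : riemannZeta (1 - s) =
      2 * Complex.cos (π * s / 2) * ((2 * π) ^ (-s) * riemannZeta s * Complex.Gamma s) := by
    rw [riemannZeta_one_sub hΓ hs1]
    ring
  rw [hfunctional]
  exact ((hasSum_two_pi_mul_cpow_neg hs).mul_right (Complex.Gamma s)).mul_left _

end ZetaSum

section Poisson

open scoped FourierTransform

variable {q : ℝ} {s : ℂ} (hq : 0 < q)

lemma wigertPower_zero (q : ℝ) (hs : 1 < s.re) : wigertPower q s 0 = 0 := by
  have hs1 : s - 1 ≠ 0 := by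
    rintro h
    rw [sub_eq_zero.mp h, one_re] at hs
    exact lt_irrefl 1 hs
  rw [wigertPower, ofReal_zero, zero_cpow hs1, zero_mul]

lemma continuous_wigertPower_abs (q : ℝ) (hs : 1 < s.re) :
    Continuous fun x : ℝ => wigertPower q s |x| := by
  have hcpow : Continuous fun x : ℝ => ((|x| : ℝ) : ℂ) ^ (s - 1) :=
    (continuous_ofReal_cpow_const (by simpa using hs)).comp continuous_abs
  have hentire := differentiable_wigertEntire.continuous
  unfold wigertPower
  fun_prop

lemma integral_wigertPower_mul_cexp (q : ℝ) (s : ℂ) (ε x : ℝ) :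
    ∫ v in Ioi (0 : ℝ), wigertPower q s v * cexp (I * ε * x * v) =
      mellin (fun v : ℝ => wigertEntire (q * v) * cexp (I * ε * x * v)) s := by
  simp only [mellin, smul_eq_mul, wigertPower, mul_assoc]

include hq

lemma mellin_wigertEntire_comp_mul (s : ℂ) : mellin (fun v : ℝ => wigertEntire (q * v)) s =
    (q : ℂ) ^ (-s) * ((√2 : ℝ) * mellin wigertSum s) := by
  have hsmul := mellin_comp_mul_left (fun v : ℝ => wigertEntire v) s hq
  simp only [ofReal_mul, smul_eq_mul] at hsmul
  rw [hsmul, ← smul_eq_mul (a := ((√2 : ℝ) : ℂ)), ← mellin_const_smul]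
  congr 1
  refine setIntegral_congr_fun measurableSet_Ioi fun v hv => ?_
  simp only [smul_eq_mul, sqrt_two_mul_wigertSum hv]

lemma integrableOn_wigertPower (hs : 0 < s.re) : IntegrableOn (wigertPower q s) (Ioi 0) :=
  mellinConvergent_wigertEntire_comp_mul hq hs

lemma fourier_wigertPower_abs_zero (hs : 0 < s.re) :
    𝓕 (fun x : ℝ => wigertPower q s |x|) 0 =
      2 * ((q : ℂ) ^ (-s) * ((√2 : ℝ) * mellin wigertSum s)) := by
  rw [fourier_comp_abs (integrableOn_wigertPower hq hs), integral_wigertPower_mul_cexp,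
    integral_wigertPower_mul_cexp, ← mellin_wigertEntire_comp_mul hq]
  simp [two_mul]

lemma fourier_wigertPower_abs {ξ : ℝ} (hξ : 0 < ξ) (hs : 0 < s.re) :
    𝓕 (fun x : ℝ => wigertPower q s |x|) ξ =
      riemannZeta (1 / 2) * (2 * Complex.cos (π * s / 2) *
        (((2 * π * ξ : ℝ) : ℂ) ^ (-s) * Complex.Gamma s)) +
      q * (2 * Complex.cos (π * (s + 1) / 2) *
        (((2 * π * ξ : ℝ) : ℂ) ^ (-(s + 1)) * Complex.Gamma (s + 1))) +
      (defectMellin q 1 (2 * π * ξ) s + defectMellin q (-1) (2 * π * ξ) s) := by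
  rw [fourier_comp_abs (integrableOn_wigertPower hq hs), integral_wigertPower_mul_cexp,
    integral_wigertPower_mul_cexp, mellin_wigertEntire_mul_cexp (.inl rfl) (by positivity) hq hs,
    mellin_wigertEntire_mul_cexp (.inr rfl) (by positivity) hq hs,
    ← cexp_half_pi_add_cexp_neg_half_pi, ← cexp_half_pi_add_cexp_neg_half_pi]
  ring

lemma hasSum_fourier_wigertPower_abs (hs : 1 < s.re) :
    HasSum (fun n : ℕ => 𝓕 (fun x : ℝ => wigertPower q s |x|) (n + 1))
      (riemannZeta (1 / 2) * riemannZeta (1 - s) + q * riemannZeta (-s) +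
        defectFourierSum q s) := by
  have hs0 : 0 < s.re := one_pos.trans hs
  have hconst := (hasSum_two_cos_mul_cpow_mul_Gamma hs).mul_left (riemannZeta (1 / 2))
  have hlinear := (hasSum_two_cos_mul_cpow_mul_Gamma (s := s + 1)
    (by simpa using hs0)).mul_left (q : ℂ)
  rw [show 1 - (s + 1) = -s by ring] at hlinear
  exact ((hconst.add hlinear).add (hasSum_defectFourierSum q hs0)).congr_fun fun n =>
    fourier_wigertPower_abs hq (by positivity) hs0

lemma wigertDirichlet_eq_of_one_lt_re (hs : 1 < s.re) :
    wigertDirichlet q s = riemannZeta (1 / 2) * riemannZeta (1 - s) + q * riemannZeta (-s) +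
      (q : ℂ) ^ (-s) * ((√2 : ℝ) * mellin wigertSum s) + defectFourierSum q s := by
  have hs0 : 0 < s.re := one_pos.trans hs
  obtain ⟨C, hC⟩ := exists_norm_wigertPower_le hq s.re
  have hsum := hasSum_fourier_wigertPower_abs hq hs
  have hpoisson := tsum_comp_abs_eq_tsum_fourier (continuous_wigertPower_abs q hs) one_lt_two
    (hC s le_rfl) hsum.summable
  rw [wigertPower_zero q hs, fourier_wigertPower_abs_zero hq hs0, hsum.tsum_eq,
    ← wigertDirichlet] at hpoisson
  linear_combination hpoisson / 2

theorem wigertDirichlet_eq (hs : 0 < s.re) :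
    wigertDirichlet q s = riemannZeta (1 / 2) * riemannZeta (1 - s) + q * riemannZeta (-s) +
      (q : ℂ) ^ (-s) * ((√2 : ℝ) * mellin wigertSum s) + defectFourierSum q s := by
  refine eq_of_differentiableAt_of_eq_of_lt_re
    (fun s _ => differentiableAt_wigertDirichlet hq s) (fun s hs => ?_)
    (fun s hs => wigertDirichlet_eq_of_one_lt_re hq hs) hs
  have hζ : DifferentiableAt ℂ (fun s : ℂ => riemannZeta (1 - s)) s :=
    (differentiableAt_riemannZeta fun h => by simp [sub_eq_self.mp h] at hs).comp s
      (f := fun s : ℂ => 1 - s) (by fun_prop)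
  have hζneg : DifferentiableAt ℂ (fun s : ℂ => riemannZeta (-s)) s :=
    (differentiableAt_riemannZeta fun h => by
      rw [neg_eq_iff_eq_neg.mp h] at hs
      norm_num at hs).comp s (f := fun s : ℂ => -s) (by fun_prop)
  have hpow : DifferentiableAt ℂ (fun s : ℂ => (q : ℂ) ^ (-s)) s :=
    .const_cpow (by fun_prop) (.inl (ofReal_ne_zero.mpr hq.ne'))
  have hmellin := differentiableAt_mellin_wigertSum hs
  have hdefect := differentiableAt_defectFourierSum q hs
  fun_prop

end Poisson

/-! ### Kummer's function -/

section RisingFactorial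

lemma poch_succ (a : ℂ) (k : ℕ) : poch a (k + 1) = poch a k * (a + k) :=
  Finset.prod_range_succ _ k

lemma Gamma_add_natCast {a : ℂ} (ha : 0 < a.re) (k : ℕ) :
    Complex.Gamma (a + k) = poch a k * Complex.Gamma a := by
  induction k with
  | zero => simp [poch]
  | succ k ih =>
    have hne : a + k ≠ 0 := fun h => by
      have hre := congrArg Complex.re h
      simp only [add_re, natCast_re, zero_re] at hre
      linarith [(k.cast_nonneg : (0 : ℝ) ≤ k)]
    rw [Nat.cast_succ, ← add_assoc, Complex.Gamma_add_one _ hne, ih, poch_succ]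
    ring

lemma factorial_two_mul_eq_poch_half (k : ℕ) :
    ((2 * k).factorial : ℂ) = 4 ^ k * (poch (1 / 2) k * k.factorial) := by
  induction k with
  | zero => simp [poch]
  | succ k ih =>
    rw [mul_add_one 2 k, Nat.factorial_succ, Nat.factorial_succ, Nat.factorial_succ k, poch_succ]
    push_cast
    rw [ih]
    ring

lemma poch_half_ne_zero (k : ℕ) : poch (1 / 2) k ≠ 0 := fun h =>
  (Nat.cast_ne_zero (R := ℂ)).mpr (2 * k).factorial_ne_zero <| by
    rw [factorial_two_mul_eq_poch_half, h, zero_mul, mul_zero]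

end RisingFactorial

section GaussianMellin

variable {t : ℝ} (ht : 0 < t) {s : ℂ}
include ht

lemma mellin_cexp_neg_mul_sq (hs : 0 < s.re) :
    mellin (fun v : ℝ => cexp (-(t * v ^ 2))) s =
      2⁻¹ * ((t : ℂ) ^ (-(s / 2)) * Complex.Gamma (s / 2)) := by
  have hrpow : ∀ v : ℝ, cexp (-(t * v ^ 2)) = cexp (-t * ((v ^ (2 : ℝ) : ℝ) : ℂ)) := fun v => by
    rw [Real.rpow_two, ofReal_pow, neg_mul]
  rw [funext hrpow, mellin_comp_rpow (fun u : ℝ => cexp (-t * u)), ofReal_ofNat,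
    mellin_cexp_neg_mul ht (by simpa using hs), abs_two, real_smul]
  simp

/-- The `k`-th term of the power series of `cos (x * v) * exp (-t * v ^ 2)` in `x`. -/
noncomputable def gaussianCosTerm (t x : ℝ) (k : ℕ) (v : ℝ) : ℂ :=
  (-1) ^ k * (x * v : ℂ) ^ (2 * k) / (2 * k).factorial * cexp (-(t * v ^ 2))

lemma norm_gaussianCosTerm_le (x : ℝ) (k : ℕ) (v : ℝ) :
    ‖gaussianCosTerm t x k v‖ ≤
      (2 * x ^ 2 / t) ^ k / k.factorial * ‖cexp (-((t / 2 : ℝ) * v ^ 2))‖ := by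
  have hnorm : ∀ c : ℝ, ‖cexp (-(c * (v : ℂ) ^ 2))‖ = Real.exp (-(c * v ^ 2)) := fun c => by
    rw [Complex.norm_exp]
    norm_cast
  have hsplit : Real.exp (-(t * v ^ 2)) =
      (Real.exp (t / 2 * v ^ 2))⁻¹ * Real.exp (-(t / 2 * v ^ 2)) := by
    rw [← Real.exp_neg, ← Real.exp_add]
    ring_nf
  have hcoeff : ‖((-1) ^ k * (x * v : ℂ) ^ (2 * k) / (2 * k).factorial)‖ =
      (x ^ 2) ^ k * (v ^ 2) ^ k / (2 * k).factorial := by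
    simp [pow_mul, mul_pow]
  have hfact : (k.factorial * k.factorial : ℝ) ≤ (2 * k).factorial := by
    rw [two_mul]
    exact_mod_cast Nat.le_of_dvd (Nat.factorial_pos _)
      (Nat.factorial_mul_factorial_dvd_factorial_add k k)
  rw [gaussianCosTerm, norm_mul, hnorm, hnorm, hsplit, hcoeff, ← mul_assoc]
  refine mul_le_mul_of_nonneg_right ?_ (Real.exp_pos _).le
  rw [← div_eq_mul_inv, div_le_iff₀ (Real.exp_pos _)]
  calc (x ^ 2) ^ k * (v ^ 2) ^ k / (2 * k).factorial
      ≤ (x ^ 2) ^ k * (v ^ 2) ^ k / (k.factorial * k.factorial) := by gcongr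
    _ = (2 * x ^ 2 / t) ^ k / k.factorial * ((t / 2 * v ^ 2) ^ k / k.factorial) := by
        rw [div_pow, mul_pow, mul_pow, div_pow]
        field_simp
    _ ≤ (2 * x ^ 2 / t) ^ k / k.factorial * Real.exp (t / 2 * v ^ 2) := by
        gcongr
        exact Real.pow_div_factorial_le_exp _ (by positivity) k

lemma mellin_gaussianCosTerm (x : ℝ) (k : ℕ) (hs : 0 < s.re) :
    mellin (gaussianCosTerm t x k) s = 2⁻¹ * ((t : ℂ) ^ (-(s / 2)) * Complex.Gamma (s / 2)) *
      (poch (s / 2) k / (poch (1 / 2) k * k.factorial) * (-(x ^ 2 / (4 * t) : ℝ)) ^ k) := by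
  have hterm : gaussianCosTerm t x k = fun v : ℝ =>
      ((-1) ^ k * (x : ℂ) ^ (2 * k) / (2 * k).factorial) •
        ((v : ℂ) ^ ((2 * k : ℕ) : ℂ) • cexp (-(t * v ^ 2))) := by
    funext v
    rw [gaussianCosTerm, smul_eq_mul, smul_eq_mul, cpow_natCast, mul_pow]
    ring
  have hre : 0 < (s + (2 * k : ℕ)).re := by
    simp only [add_re, natCast_re]
    positivity
  have hhalf : (s + (2 * k : ℕ)) / 2 = s / 2 + k := by
    push_cast
    ring
  have hpoch := poch_half_ne_zero k
  have hfact : (k.factorial : ℂ) ≠ 0 := Nat.cast_ne_zero.mpr k.factorial_ne_zero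
  have htC : (t : ℂ) ≠ 0 := ofReal_ne_zero.mpr ht.ne'
  rw [hterm, mellin_const_smul, mellin_cpow_smul, mellin_cexp_neg_mul_sq ht hre, hhalf,
    Gamma_add_natCast (by simpa using hs), neg_add, cpow_add _ _ htC,
    factorial_two_mul_eq_poch_half, cpow_neg _ (k : ℂ), cpow_natCast, smul_eq_mul]
  generalize (t : ℂ) ^ (-(s / 2)) = T
  push_cast
  rw [neg_pow ((x : ℂ) ^ 2 / (4 * t)), div_pow, mul_pow, ← pow_mul]
  field_simp

lemma mellin_cos_mul_cexp_neg_mul_sq (x : ℝ) (hs : 0 < s.re) :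
    mellin (fun v : ℝ => Complex.cos (x * v) * cexp (-(t * v ^ 2))) s =
      2⁻¹ * ((t : ℂ) ^ (-(s / 2)) * Complex.Gamma (s / 2) *
        F11 (s / 2) (1 / 2) (-(x ^ 2 / (4 * t) : ℝ))) := by
  have hsum := hasSum_mellin_of_dominated (f := gaussianCosTerm t x)
    (mellinConvergent_cexp_neg_mul_sq (half_pos ht) hs) (Real.summable_pow_div_factorial _)
    (fun k => by unfold gaussianCosTerm; fun_prop) fun k v _ => norm_gaussianCosTerm_le ht x k v
  have hcos : (fun v : ℝ => ∑' k, gaussianCosTerm t x k v) =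
      fun v : ℝ => Complex.cos (x * v) * cexp (-(t * v ^ 2)) := by
    funext v
    simp only [gaussianCosTerm]
    rw [tsum_mul_right, (Complex.hasSum_cos (x * v)).tsum_eq]
  rw [← hcos, ← hsum.tsum_eq]
  simp only [mellin_gaussianCosTerm ht x _ hs]
  rw [tsum_mul_left, F11, mul_assoc]

lemma mellin_cexp_neg_mul_sq_mul_cexp_add (x : ℝ) (hs : 0 < s.re) :
    mellin (fun v : ℝ => cexp (-(t * v ^ 2)) * cexp (I * (1 : ℝ) * x * v)) s +
        mellin (fun v : ℝ => cexp (-(t * v ^ 2)) * cexp (I * (-1 : ℝ) * x * v)) s =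
      (t : ℂ) ^ (-(s / 2)) * Complex.Gamma (s / 2) *
        F11 (s / 2) (1 / 2) (-(x ^ 2 / (4 * t) : ℝ)) := by
  have hconv : ∀ ε : ℝ, MellinConvergent
      (fun v : ℝ => cexp (-(t * v ^ 2)) * cexp (I * ε * x * v)) s := fun ε => by
    refine mellinConvergent_of_norm_le (mellinConvergent_cexp_neg_mul_sq ht hs) (by fun_prop)
      fun v _ => ?_
    have harg : I * ε * x * v = (ε * x * v : ℝ) * I := by
      push_cast
      ring
    rw [norm_mul, harg, Complex.norm_exp_ofReal_mul_I, mul_one]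
  have htwo_cos : (fun v : ℝ => cexp (-(t * v ^ 2)) * cexp (I * (1 : ℝ) * x * v) +
      cexp (-(t * v ^ 2)) * cexp (I * (-1 : ℝ) * x * v)) =
      fun v : ℝ => (2 : ℂ) • (Complex.cos (x * v) * cexp (-(t * v ^ 2))) := by
    funext v
    rw [smul_eq_mul, ← mul_assoc, Complex.two_cos]
    push_cast
    ring_nf
  rw [← (hasMellin_add (hconv 1) (hconv (-1))).2, htwo_cos, mellin_const_smul,
    mellin_cos_mul_cexp_neg_mul_sq ht x hs, smul_eq_mul]
  ring

end GaussianMellin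

/-! ### Regrouping by square divisors -/

section Regrouping

/-- The index of the integer `(j + 1) ^ 2 * (k + 1)` when the positive integers are enumerated
from `0`; it regroups sums over pairs `(j, k)` according to the value of `j ^ 2 * k`. -/
def sqMulIndex (p : ℕ × ℕ) : ℕ := (p.1 + 1) ^ 2 * (p.2 + 1) - 1

lemma sqMulIndex_eq_iff {p : ℕ × ℕ} {n : ℕ} :
    sqMulIndex p = n ↔ (p.1 + 1) ^ 2 * (p.2 + 1) = n + 1 := by
  have hpos : 0 < (p.1 + 1) ^ 2 * (p.2 + 1) := by positivity
  rw [sqMulIndex]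
  omega

lemma add_one_mem_of_sqMulIndex_eq {p : ℕ × ℕ} {n : ℕ} (hp : sqMulIndex p = n) :
    p.1 + 1 ∈ {j ∈ Finset.Icc 1 (n + 1) | j ^ 2 ∣ n + 1} := by
  have hdvd : (p.1 + 1) ^ 2 ∣ n + 1 := ⟨p.2 + 1, (sqMulIndex_eq_iff.mp hp).symm⟩
  have hle : p.1 + 1 ≤ n + 1 :=
    (Nat.le_self_pow two_ne_zero _).trans (Nat.le_of_dvd n.succ_pos hdvd)
  exact Finset.mem_filter.mpr ⟨Finset.mem_Icc.mpr ⟨Nat.le_add_left 1 _, hle⟩, hdvd⟩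

lemma bijective_sqMulIndex_preimage (n : ℕ) : Function.Bijective
    fun p : sqMulIndex ⁻¹' {n} => (⟨p.1.1 + 1, add_one_mem_of_sqMulIndex_eq p.2⟩ :
      {j // j ∈ {j ∈ Finset.Icc 1 (n + 1) | j ^ 2 ∣ n + 1}}) := by
  constructor
  · rintro ⟨⟨j, k⟩, hp⟩ ⟨⟨j', k'⟩, hp'⟩ heq
    obtain rfl : j = j' := by simpa using heq
    have hmul : (j + 1) ^ 2 * (k + 1) = (j + 1) ^ 2 * (k' + 1) :=
      (sqMulIndex_eq_iff.mp hp).trans (sqMulIndex_eq_iff.mp hp').symm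
    obtain rfl : k = k' := by simpa using hmul
    rfl
  · rintro ⟨j, hj⟩
    obtain ⟨hIcc, k, hk⟩ := Finset.mem_filter.mp hj
    obtain ⟨j, rfl⟩ := Nat.exists_eq_add_of_le' (Finset.mem_Icc.mp hIcc).1
    obtain ⟨k, rfl⟩ : ∃ k', k = k' + 1 :=
      Nat.exists_eq_succ_of_ne_zero (by rintro rfl; simp at hk)
    exact ⟨⟨(j, k), sqMulIndex_eq_iff.mpr hk.symm⟩, rfl⟩

lemma cpsi_add_one_eq_tsum (w : ℂ) (n : ℕ) :
    cpsi w (n + 1) = ∑' p : sqMulIndex ⁻¹' {n}, ((p.1.1 + 1 : ℕ) : ℂ) ^ w := by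
  rw [cpsi, ← Finset.tsum_subtype,
    ← (Equiv.ofBijective _ (bijective_sqMulIndex_preimage n)).tsum_eq]
  rfl

lemma tsum_cpsi_mul {w : ℂ} {H : ℕ → ℂ}
    (hH : Summable fun p : ℕ × ℕ => ((p.1 + 1 : ℕ) : ℂ) ^ w * H ((p.1 + 1) ^ 2 * (p.2 + 1))) :
    ∑' n, cpsi w (n + 1) * H (n + 1) =
      ∑' j, ∑' k, ((j + 1 : ℕ) : ℂ) ^ w * H ((j + 1) ^ 2 * (k + 1)) := by
  rw [← hH.tsum_prod, ← (hH.hasSum.tsum_fiberwise sqMulIndex).tsum_eq]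
  refine tsum_congr fun n => ?_
  rw [cpsi_add_one_eq_tsum, ← tsum_mul_right]
  exact tsum_congr fun p => by rw [sqMulIndex_eq_iff.mp p.2]

end Regrouping

section DirectSide

variable {β : ℝ} (hβ : 0 < β)

/-- The factor of `ψ_s(N)` on the left-hand side of Ramanujan's identity. -/
noncomputable def wigertKernel (β : ℝ) (N : ℕ) : ℂ :=
  ((√(N : ℝ))⁻¹ * (Real.exp (-√(N * β)) * Real.sin (π / 4 - √(N * β))) : ℝ)

lemma natCast_cpow_mul_wigertKernel (β : ℝ) (s : ℂ) (j k : ℕ) :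
    ((j + 1 : ℕ) : ℂ) ^ s * wigertKernel β ((j + 1) ^ 2 * (k + 1)) =
      ((j + 1 : ℝ) : ℂ) ^ (s - 1) * wigertTerm k (√β * (j + 1)) := by
  have hj : (0 : ℝ) < j + 1 := by positivity
  have hsqrt : √((((j + 1) ^ 2 * (k + 1) : ℕ) : ℝ)) = (j + 1) * √((k : ℝ) + 1) := by
    push_cast
    rw [Real.sqrt_mul (by positivity), Real.sqrt_sq hj.le]
  have hsqrt_mul : √((((j + 1) ^ 2 * (k + 1) : ℕ) : ℝ) * β) = √β * (j + 1) * √((k : ℝ) + 1) := by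
    rw [Real.sqrt_mul (by positivity), hsqrt]
    ring
  have hcast : ((j + 1 : ℕ) : ℂ) = ((j + 1 : ℝ) : ℂ) := by push_cast; rfl
  rw [wigertKernel, hsqrt, hsqrt_mul, wigertTerm, hcast,
    cpow_sub _ _ (ofReal_ne_zero.mpr hj.ne'), cpow_one]
  simp only [ofReal_mul, ofReal_inv, mul_inv]
  ring

include hβ

lemma summable_natCast_cpow_mul_wigertKernel (s : ℂ) : Summable fun p : ℕ × ℕ =>
    ((p.1 + 1 : ℕ) : ℂ) ^ s * wigertKernel β ((p.1 + 1) ^ 2 * (p.2 + 1)) := by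
  obtain ⟨C, hC0, hC⟩ := exists_rpow_mul_exp_neg_le (s - 1).re (c := 1 / 2 * √β) (by positivity)
  refine .of_norm_bounded (summable_nat_add_one_sq_inv.mul_of_nonneg
    (summable_threeHalvesWeight.mul_left (8 / √β ^ 2 * C)) (fun j => by positivity)
    fun k => mul_nonneg (by positivity) (threeHalvesWeight_nonneg k)) fun ⟨j, k⟩ => ?_
  have hw := threeHalvesWeight_nonneg k
  have hj : (0 : ℝ) < j + 1 := by positivity
  rw [natCast_cpow_mul_wigertKernel, norm_mul, norm_cpow_eq_rpow_re_of_pos hj]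
  calc ((j : ℝ) + 1) ^ (s - 1).re * ‖wigertTerm k (√β * (j + 1))‖
      ≤ ((j : ℝ) + 1) ^ (s - 1).re * (threeHalvesWeight k *
          (8 / (√β * (j + 1)) ^ 2 * Real.exp (-(1 / 2) * (√β * (j + 1))))) := by
        gcongr
        exact norm_wigertTerm_le k (by positivity)
    _ = (((j : ℝ) + 1) ^ 2)⁻¹ * (8 / √β ^ 2 * (((j : ℝ) + 1) ^ (s - 1).re *
          Real.exp (-(1 / 2 * √β) * (j + 1))) * threeHalvesWeight k) := by
        rw [mul_pow, neg_mul, neg_mul, mul_assoc (1 / 2)]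
        field_simp
    _ ≤ (((j : ℝ) + 1) ^ 2)⁻¹ * (8 / √β ^ 2 * C * threeHalvesWeight k) := by
        gcongr
        exact hC _ (by simp)

lemma sqrt_two_mul_tsum_cpsi_mul_wigertKernel (s : ℂ) :
    (√2 : ℝ) * ∑' n, cpsi s (n + 1) * wigertKernel β (n + 1) = wigertDirichlet (√β) s := by
  rw [tsum_cpsi_mul (summable_natCast_cpow_mul_wigertKernel hβ s), ← tsum_mul_left,
    wigertDirichlet]
  refine tsum_congr fun j => ?_
  have hpos : 0 < √β * (j + 1) := mul_pos (Real.sqrt_pos.mpr hβ) (by positivity)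
  rw [tsum_congr (natCast_cpow_mul_wigertKernel β s j), tsum_mul_left, wigertPower, ← ofReal_mul,
    ← sqrt_two_mul_wigertSum hpos, wigertSum]
  ring

end DirectSide

section DualSide

variable {s : ℂ} {q : ℝ}

lemma rotatedMellin_gaussDefectTerm_add (hq : 0 < q) {x : ℝ} (hx : 0 < x) (k : ℕ)
    (hs : 0 < s.re) :
    rotatedMellin (fun z => gaussDefectTerm k (q * z)) 1 x s +
        rotatedMellin (fun z => gaussDefectTerm k (q * z)) (-1) x s =
      ((√((k : ℝ) + 1))⁻¹ : ℝ) *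
        (((q ^ 2 / (4 * π * (k + 1)) : ℝ) : ℂ) ^ (-(s / 2)) * Complex.Gamma (s / 2) *
            F11 (s / 2) (1 / 2) (-(x ^ 2 / (4 * (q ^ 2 / (4 * π * (k + 1)))) : ℝ)) -
          2 * Complex.cos (π * s / 2) * Complex.Gamma s * (x : ℂ) ^ (-s)) := by
  rw [rotatedMellin_gaussDefectTerm hq (.inl rfl) hx k hs,
    rotatedMellin_gaussDefectTerm hq (.inr rfl) hx k hs,
    ← mellin_cexp_neg_mul_sq_mul_cexp_add (by positivity) x hs,
    ← cexp_half_pi_add_cexp_neg_half_pi]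
  ring

lemma summable_rotatedMellin_gaussDefectTerm (q : ℝ) {ε : ℝ} (hε : ε = 1 ∨ ε = -1)
    (hs : 0 < s.re) : Summable fun p : ℕ × ℕ =>
      rotatedMellin (fun z => gaussDefectTerm p.2 (q * z)) ε (2 * π * (p.1 + 1)) s := by
  refine .of_norm_bounded ((summable_nat_add_one_sq_inv.mul_of_nonneg summable_threeHalvesWeight
    (fun j => by positivity) threeHalvesWeight_nonneg).mul_left (Real.exp (π / 4 * |s.im|) *
      ((4 * π)⁻¹ * q ^ 2 * Real.Gamma (s.re + 2)))) fun ⟨j, k⟩ => ?_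
  have hw := threeHalvesWeight_nonneg k
  calc ‖rotatedMellin (fun z => gaussDefectTerm k (q * z)) ε (2 * π * (j + 1)) s‖
      ≤ Real.exp (π / 4 * |s.im|) * (threeHalvesWeight k * ((4 * π)⁻¹ * q ^ 2) *
          ((1 / (√2 / 2 * (2 * π * (j + 1)))) ^ (s.re + 2) * Real.Gamma (s.re + 2))) := by
        exact_mod_cast norm_rotatedMellin_le hε (by positivity)
          (fun z hz => norm_gaussDefectTerm_ofReal_mul_le q k hz) hs
    _ ≤ Real.exp (π / 4 * |s.im|) * (threeHalvesWeight k * ((4 * π)⁻¹ * q ^ 2) *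
          ((((j : ℝ) + 1) ^ 2)⁻¹ * Real.Gamma (s.re + 2))) := by
        gcongr
        exact one_div_two_pi_mul_rpow_le j hs
    _ = _ := by ring

lemma pi_mul_inv_Gamma_one_sub_mul_sin (hΓ : Complex.Gamma s ≠ 0)
    (hsin : Complex.sin (π * s / 2) ≠ 0) :
    π * (Complex.Gamma (1 - s) * Complex.sin (π * s / 2))⁻¹ =
      2 * Complex.cos (π * s / 2) * Complex.Gamma s := by
  have hdouble : Complex.sin (π * s) = 2 * Complex.sin (π * s / 2) * Complex.cos (π * s / 2) := by
    rw [← Complex.sin_two_mul, mul_div_cancel₀ _ two_ne_zero]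
  have hreflect := eq_div_of_mul_eq hΓ ((mul_comm _ _).trans (Complex.Gamma_mul_Gamma_one_sub s))
  rw [hreflect, hdouble, mul_inv, inv_div, div_div_eq_mul_div]
  field_simp

lemma sin_pi_mul_div_two_ne_zero (hs : 0 < s.re) (hs_even : ∀ k : ℕ, s ≠ 2 * ((k : ℂ) + 1)) :
    Complex.sin (π * s / 2) ≠ 0 := by
  refine Complex.sin_ne_zero_iff.mpr fun k hk => ?_
  have hsk : s = 2 * k := by
    have hmul : (π : ℂ) * s = π * (2 * k) := by linear_combination 2 * hk
    exact mul_left_cancel₀ (ofReal_ne_zero.mpr Real.pi_ne_zero) hmul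
  have hpos : 0 < k := by
    have hre : s.re = 2 * k := by rw [hsk]; norm_cast
    exact_mod_cast (by linarith : (0 : ℝ) < k)
  obtain ⟨n, rfl⟩ := Int.eq_succ_of_zero_lt hpos
  exact hs_even n (by rw [hsk]; push_cast; rfl)

lemma ofReal_cpow_eq_cexp {x : ℝ} (hx : 0 < x) (w : ℂ) : (x : ℂ) ^ w = cexp (Real.log x * w) := by
  rw [cpow_def_of_ne_zero (ofReal_ne_zero.mpr hx.ne'), ofReal_log hx.le]

lemma two_pi_mul_cpow_neg_mul {m k : ℝ} (hm : 0 < m) (hk : 0 < k) (hq : 0 < q) (s : ℂ) :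
    ((2 * π * m : ℝ) : ℂ) ^ (-s) *
        ((2 : ℂ) ^ (2 * s) * (π : ℂ) ^ (3 * s / 2) * ((m ^ 2 * k / q ^ 2 : ℝ) : ℂ) ^ (s / 2)) =
      ((q ^ 2 / (4 * π * k) : ℝ) : ℂ) ^ (-(s / 2)) := by
  have hπ := Real.pi_pos
  have hlog_m : Real.log (2 * π * m) = Real.log 2 + Real.log π + Real.log m := by
    rw [Real.log_mul (by positivity) hm.ne', Real.log_mul two_ne_zero hπ.ne']
  have hlog_mk : Real.log (m ^ 2 * k / q ^ 2) = 2 * Real.log m + Real.log k - 2 * Real.log q := by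
    rw [Real.log_div (by positivity) (by positivity), Real.log_mul (by positivity) hk.ne',
      Real.log_pow, Real.log_pow, Nat.cast_ofNat]
  have hlog_k : Real.log (q ^ 2 / (4 * π * k)) =
      2 * Real.log q - (2 * Real.log 2 + Real.log π + Real.log k) := by
    rw [Real.log_div (by positivity) (by positivity), Real.log_mul (by positivity) hk.ne',
      Real.log_mul (by positivity) hπ.ne', Real.log_pow, Nat.cast_ofNat,
      show (4 : ℝ) = 2 ^ 2 by norm_num, Real.log_pow, Nat.cast_ofNat]
  rw [← ofReal_ofNat 2, ofReal_cpow_eq_cexp (by positivity), ofReal_cpow_eq_cexp two_pos,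
    ofReal_cpow_eq_cexp hπ, ofReal_cpow_eq_cexp (by positivity),
    ofReal_cpow_eq_cexp (by positivity), hlog_m, hlog_mk, hlog_k]
  simp only [← Complex.exp_add]
  push_cast
  ring_nf

lemma cpow_one_sub_mul_two_cpow_mul_pi_cpow {m : ℝ} (hm : 0 < m) (s : ℂ) :
    (m : ℂ) ^ (1 - s) * ((2 : ℂ) ^ (-s - 1 / 2) * (π : ℂ) ^ (-s - 2)) =
      ((√2 : ℝ) : ℂ)⁻¹ * (m * ((2 * π * m : ℝ) : ℂ) ^ (-s) / π ^ 2) := by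
  have hπ := Real.pi_pos
  have hmC : (m : ℂ) ≠ 0 := ofReal_ne_zero.mpr hm.ne'
  have hπC : (π : ℂ) ≠ 0 := ofReal_ne_zero.mpr hπ.ne'
  have hsqrt : (2 : ℂ) ^ (1 / 2 : ℂ) = (√2 : ℝ) := by
    simpa using (ofReal_sqrt_cpow two_pos 1).symm
  rw [cpow_sub _ _ hmC, cpow_sub _ _ two_ne_zero, cpow_sub _ _ hπC, ofReal_mul, ofReal_mul,
    ← ofReal_mul, mul_cpow_ofReal_nonneg (by positivity) hm.le, ofReal_mul,
    mul_cpow_ofReal_nonneg two_pos.le hπ.le, hsqrt, ofReal_ofNat, cpow_neg (m : ℂ), cpow_one,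
    cpow_ofNat]
  ring

/-- The factor of `ψ_{1-s}(N)` on the right-hand side of Ramanujan's identity. -/
noncomputable def dualKernel (α β : ℝ) (s : ℂ) (N : ℕ) : ℂ :=
  (N : ℂ)⁻¹ * (-(π : ℂ) ^ 3 * (√(N : ℝ) : ℝ) /
      ((√β : ℝ) * Complex.Gamma (1 - s) * Complex.sin (π * s / 2)) +
    (2 : ℂ) ^ (2 * s) * (π : ℂ) ^ (3 * s / 2 + 2) * ((N / β : ℝ) : ℂ) ^ ((s + 1) / 2) *
      Complex.Gamma (s / 2) * F11 (s / 2) (1 / 2) (-(N * α : ℝ)))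

lemma ofReal_cpow_add_one_div_two {x : ℝ} (hx : 0 < x) (s : ℂ) :
    (x : ℂ) ^ ((s + 1) / 2) = (x : ℂ) ^ (s / 2) * (√x : ℝ) := by
  have hsqrt : (x : ℂ) ^ (1 / 2 : ℂ) = (√x : ℝ) := by
    rw [← ofReal_sqrt_cpow hx 1, cpow_one]
  rw [add_div, cpow_add _ _ (ofReal_ne_zero.mpr hx.ne'), hsqrt]

lemma cpow_mul_dualKernel_of_eq_sq_mul {α m κ : ℝ} (hq : 0 < q) (hm : 0 < m) (hκ : 0 < κ) {N : ℕ}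
    (hN : (N : ℝ) = m ^ 2 * κ) (s : ℂ) :
    (m : ℂ) ^ (1 - s) * ((2 : ℂ) ^ (-s - 1 / 2) * (π : ℂ) ^ (-s - 2) * q *
        dualKernel α (q ^ 2) s N) =
      ((√2 : ℝ) : ℂ)⁻¹ * (((√κ)⁻¹ : ℝ) *
        (((q ^ 2 / (4 * π * κ) : ℝ) : ℂ) ^ (-(s / 2)) * Complex.Gamma (s / 2) *
            F11 (s / 2) (1 / 2) (-(N * α : ℝ)) -
          π * (Complex.Gamma (1 - s) * Complex.sin (π * s / 2))⁻¹ *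
            ((2 * π * m : ℝ) : ℂ) ^ (-s))) := by
  have hπC : (π : ℂ) ≠ 0 := ofReal_ne_zero.mpr Real.pi_ne_zero
  have hqC : (q : ℂ) ≠ 0 := ofReal_ne_zero.mpr hq.ne'
  have hmC : (m : ℂ) ≠ 0 := ofReal_ne_zero.mpr hm.ne'
  have hrC : ((√κ : ℝ) : ℂ) ≠ 0 := ofReal_ne_zero.mpr (Real.sqrt_pos.mpr hκ).ne'
  have hsqrtN : √(N : ℝ) = m * √κ := by
    rw [hN, Real.sqrt_mul (by positivity), Real.sqrt_sq hm.le]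
  have hNC : (N : ℂ) = m ^ 2 * ((√κ : ℝ) : ℂ) ^ 2 := by
    rw [← ofReal_pow √κ, Real.sq_sqrt hκ.le, ← ofReal_natCast, hN, ofReal_mul, ofReal_pow]
  have hpow : ((N / q ^ 2 : ℝ) : ℂ) ^ ((s + 1) / 2) =
      ((m ^ 2 * κ / q ^ 2 : ℝ) : ℂ) ^ (s / 2) * (m * √κ / q : ℝ) := by
    rw [ofReal_cpow_add_one_div_two (by rw [hN]; positivity), Real.sqrt_div' _ (by positivity),
      hsqrtN, Real.sqrt_sq hq.le, hN]
  have hπpow : (π : ℂ) ^ (3 * s / 2 + 2) = (π : ℂ) ^ (3 * s / 2) * π ^ 2 := by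
    rw [cpow_add _ _ hπC, cpow_ofNat]
  rw [dualKernel, mul_right_comm _ (q : ℂ), ← mul_assoc, ← mul_assoc ((m : ℂ) ^ (1 - s)),
    cpow_one_sub_mul_two_cpow_mul_pi_cpow hm, hpow, hπpow, hsqrtN, Real.sqrt_sq hq.le, hNC,
    ← two_pi_mul_cpow_neg_mul hm hκ hq, mul_assoc (q : ℂ), div_eq_mul_inv _ ((q : ℂ) * _),
    mul_inv (q : ℂ)]
  generalize (Complex.Gamma (1 - s) * Complex.sin (π * s / 2))⁻¹ = R
  push_cast
  field_simp
  ring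

lemma cpow_mul_dualKernel {α β : ℝ} (hβ : 0 < β) (hαβ : α * β = 4 * π ^ 3) (j k : ℕ)
    (hs : 0 < s.re) (hs_even : ∀ k : ℕ, s ≠ 2 * ((k : ℂ) + 1)) :
    ((j + 1 : ℕ) : ℂ) ^ (1 - s) * ((2 : ℂ) ^ (-s - 1 / 2) * (π : ℂ) ^ (-s - 2) * (√β : ℝ) *
        dualKernel α β s ((j + 1) ^ 2 * (k + 1))) =
      ((√2 : ℝ) : ℂ)⁻¹ *
        (rotatedMellin (fun z => gaussDefectTerm k (√β * z)) 1 (2 * π * (j + 1)) s +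
          rotatedMellin (fun z => gaussDefectTerm k (√β * z)) (-1) (2 * π * (j + 1)) s) := by
  obtain ⟨q, hq, rfl⟩ : ∃ q : ℝ, 0 < q ∧ q ^ 2 = β :=
    ⟨√β, Real.sqrt_pos.mpr hβ, Real.sq_sqrt hβ.le⟩
  have hN : (((j + 1) ^ 2 * (k + 1) : ℕ) : ℝ) = (j + 1 : ℝ) ^ 2 * (k + 1 : ℝ) := by push_cast; rfl
  have harg : (2 * π * (j + 1)) ^ 2 / (4 * (q ^ 2 / (4 * π * (k + 1)))) =
      (((j + 1) ^ 2 * (k + 1) : ℕ) : ℝ) * α := by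
    rw [hN, div_eq_iff (by positivity)]
    field_simp
    linear_combination -hαβ
  have hcast : ((j + 1 : ℕ) : ℂ) = ((j + 1 : ℝ) : ℂ) := by push_cast; rfl
  rw [Real.sqrt_sq hq.le, rotatedMellin_gaussDefectTerm_add hq (by positivity) k hs, harg,
    ← pi_mul_inv_Gamma_one_sub_mul_sin (Complex.Gamma_ne_zero_of_re_pos hs)
      (sin_pi_mul_div_two_ne_zero hs hs_even), hcast,
    cpow_mul_dualKernel_of_eq_sq_mul hq (by positivity) (by positivity) hN]

lemma tsum_cpsi_mul_dualKernel {α β : ℝ} (hβ : 0 < β) (hαβ : α * β = 4 * π ^ 3)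
    (hs : 0 < s.re) (hs_even : ∀ k : ℕ, s ≠ 2 * ((k : ℂ) + 1)) :
    (2 : ℂ) ^ (-s - 1 / 2) * (π : ℂ) ^ (-s - 2) * (√β : ℝ) *
        ∑' n, cpsi (1 - s) (n + 1) * dualKernel α β s (n + 1) =
      ((√2 : ℝ) : ℂ)⁻¹ * defectFourierSum (√β) s := by
  have hterm := fun j k => cpow_mul_dualKernel hβ hαβ j k hs hs_even
  have hsummable := ((summable_rotatedMellin_gaussDefectTerm √β (.inl rfl) hs).add
    (summable_rotatedMellin_gaussDefectTerm √β (.inr rfl) hs)).mul_left ((√2 : ℝ) : ℂ)⁻¹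
  simp_rw [← tsum_mul_left, mul_left_comm _ (cpsi _ _)]
  rw [tsum_cpsi_mul (H := fun N => (2 : ℂ) ^ (-s - 1 / 2) * (π : ℂ) ^ (-s - 2) * (√β : ℝ) *
    dualKernel α β s N) (hsummable.congr fun p => (hterm p.1 p.2).symm), defectFourierSum,
    ← tsum_mul_left]
  refine tsum_congr fun j => ?_
  rw [tsum_congr (hterm j), tsum_mul_left,
    ((hasSum_defectMellin (.inl rfl) (by positivity) _ hs).add
      (hasSum_defectMellin (.inr rfl) (by positivity) _ hs)).tsum_eq]

end DualSide

section Assembly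

lemma wigertKernel_add_one (β : ℝ) (n : ℕ) :
    wigertKernel β (n + 1) = ((√((n : ℝ) + 1) : ℝ) : ℂ)⁻¹ *
      ((Real.exp (-√(((n : ℝ) + 1) * β)) : ℝ) : ℂ) *
      ((Real.sin (π / 4 - √(((n : ℝ) + 1) * β)) : ℝ) : ℂ) := by
  rw [wigertKernel, Nat.cast_add_one, ofReal_mul, ofReal_mul, ofReal_inv, mul_assoc]

lemma dualKernel_add_one (α β : ℝ) (s : ℂ) (n : ℕ) :
    dualKernel α β s (n + 1) = ((n : ℂ) + 1)⁻¹ *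
      (-(π : ℂ) ^ 3 * (√((n : ℝ) + 1) : ℝ) /
          ((√β : ℝ) * Complex.Gamma (1 - s) * Complex.sin (π * s / 2)) +
        (2 : ℂ) ^ (2 * s) * (π : ℂ) ^ (3 * s / 2 + 2) *
          ((((n : ℝ) + 1) / β : ℝ) : ℂ) ^ ((s + 1) / 2) * Complex.Gamma (s / 2) *
          F11 (s / 2) (1 / 2) (-(((n : ℝ) + 1) * α : ℝ))) := by
  rw [dualKernel, Nat.cast_add_one, Nat.cast_add_one]

lemma cpow_neg_mul_mellin_wigertSum {β : ℝ} (hβ : 0 < β) {s : ℂ} (hs : 0 < s.re) (hs1 : s ≠ 1) :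
    ((√β : ℝ) : ℂ) ^ (-s) * mellin wigertSum s =
      Complex.Gamma s * Complex.cos (π / 4 + π * s / 4) * riemannZeta ((1 + s) / 2) *
        ((2 * β : ℝ) : ℂ) ^ (-s / 2) := by
  have hcos : Complex.cos (π / 4 + π * s / 4) = Complex.sin (π / 4 - π * s / 4) := by
    rw [← Complex.cos_pi_div_two_sub]
    ring_nf
  rw [mellin_wigertSum hs hs1, ← ofReal_sqrt_cpow (by positivity), Real.sqrt_mul two_pos.le,
    ofReal_mul, mul_cpow_ofReal_nonneg (by positivity) (by positivity), hcos]
  ring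

end Assembly

end RamanujanWigert

theorem ramanujan_wigert_generalization
    (s : ℂ) (hs : 0 < s.re) (hs1 : s ≠ 1) (hsev : ∀ k : ℕ, s ≠ 2 * ((k : ℂ) + 1))
    (α β : ℝ) (hα : 0 < α) (hβ : 0 < β) (hαβ : α * β = 4 * π ^ 3) :
    (∑' n : ℕ, cpsi s (n + 1) * ((Real.sqrt ((n : ℝ) + 1) : ℝ) : ℂ)⁻¹ *
        ((Real.exp (-Real.sqrt (((n : ℝ) + 1) * β)) : ℝ) : ℂ) *
        ((Real.sin (π / 4 - Real.sqrt (((n : ℝ) + 1) * β)) : ℝ) : ℂ))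
    = ((Real.sqrt β / Real.sqrt 2 : ℝ) : ℂ) * riemannZeta (-s)
      + Complex.Gamma s * Complex.cos ((π : ℂ) / 4 + (π : ℂ) * s / 4) *
          riemannZeta ((1 + s) / 2) * ((2 * β : ℝ) : ℂ) ^ (-s / 2)
      + (1 / (Real.sqrt 2 : ℂ)) * riemannZeta (1 / 2) * riemannZeta (1 - s)
      + (2 : ℂ) ^ (-s - 1 / 2) * (π : ℂ) ^ (-s - 2) * (Real.sqrt β : ℂ) *
        ∑' n : ℕ, cpsi (1 - s) (n + 1) / ((n : ℂ) + 1) *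
          (-(π : ℂ) ^ 3 * (Real.sqrt ((n : ℝ) + 1) : ℂ) /
              ((Real.sqrt β : ℂ) * Complex.Gamma (1 - s) * Complex.sin ((π : ℂ) * s / 2))
            + (2 : ℂ) ^ (2 * s) * (π : ℂ) ^ (3 * s / 2 + 2) *
                ((((n : ℝ) + 1) / β : ℝ) : ℂ) ^ ((s + 1) / 2) *
                Complex.Gamma (s / 2) *
                F11 (s / 2) (1 / 2) (-(((n : ℝ) + 1) * α : ℝ))) := by
  have hsqrt : ((√2 : ℝ) : ℂ) ≠ 0 := ofReal_ne_zero.mpr (by positivity)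
  have hdirect := RamanujanWigert.sqrt_two_mul_tsum_cpsi_mul_wigertKernel hβ s
  have hmellin := RamanujanWigert.cpow_neg_mul_mellin_wigertSum hβ hs hs1
  have hdual := RamanujanWigert.tsum_cpsi_mul_dualKernel hβ hαβ hs hsev
  rw [RamanujanWigert.wigertDirichlet_eq (Real.sqrt_pos.mpr hβ) hs] at hdirect
  simp only [RamanujanWigert.wigertKernel_add_one, ← mul_assoc] at hdirect
  simp only [RamanujanWigert.dualKernel_add_one, ← mul_assoc (cpsi _ _), ← div_eq_mul_inv] at hdual
  rw [hdual, ← hmellin, ofReal_div]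
  apply mul_left_cancel₀ hsqrt
  rw [hdirect]
  field_simp
  ring
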